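/- Let J be a non-trivial subgroup of Γ_g and let Υ = J\~Σ_g be the corresponding covering space of Σ_g. Then: (1) every boundary cycle δ of Core(J) is an essential closed curve of Υ; (2) for every boundary cycle δ of Core(J), the cyclic word w(δ) it reads is cyclically shortest (i.e., of minimal length among cyclic words representing its conjugacy class in Γ_g); (3) Core(J) is strongly boundary reduced. -/

import Mathlib

/-!
Formalization preamble for "Core Surfaces" (Magee–Puder).

We work with a fixed combinatorial (CW) model.  The surface `Σ_g` has one vertex,
`2g` directed labeled edges (the label `2i` plays the role of `a_{i+1}` and `2i+1`
the role of `b_{i+1}`), and one `4g`-gon glued along `[a₁,b₁]⋯[a_g,b_g]`.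

* `Gamma g` is the surface group, presented by the single relator.
* A `Complex g` is a combinatorial 2-complex with directed, labeled edges and
  2-cells given by their boundary walks; coverings of `Σ_g` are the complexes in
  which every vertex has exactly one incoming/outgoing edge of each label, every
  walk reading the relator is closed, and every closed walk reading the relator
  bounds exactly one face (`IsCovering`).  A tiled surface is a complex that
  embeds into such a covering (`IsTiledSurface`).
* Blocks, chains, boundary cycles (via the ribbon structure coming from the fixed
  cyclic order of the `4g` half-edges around a vertex of `Σ_g`), boundary-reduced
  and strongly boundary-reduced surfaces are defined combinatorially.
* Homotopy of edge-walks is the edge-path-group homotopy: backtrack insertions and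
  insertions of boundaries of (present) faces.
* `cover g J` is the covering space `J\~Σ_g` of `Σ_g` associated to a subgroup
  `J ≤ Γ_g` (vertices = right cosets), and `coreSub g J` is the core surface of
  `J`, defined exactly as in the paper: the union of all shortest representative
  cycles of essential free-homotopy classes, together with all components of the
  complement containing finitely many `4g`-gons.
-/

noncomputable section

namespace CS

/-- Signed letters over the generators `a₁,b₁,…,a_g,b_g` of `Γ_g`
(`a_{i+1} ↦ 2i`, `b_{i+1} ↦ 2i+1`); `true` means a positive letter. -/
abbrev Letter (g : ℕ) := Fin (2 * g) × Bool

/-- The label of the `p`-th letter of the relator `[a₁,b₁][a₂,b₂]⋯[a_g,b_g]`. -/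
def relLabel (g : ℕ) (p : Fin (4 * g)) : Fin (2 * g) :=
  ⟨2 * ((p : ℕ) / 4) + ((p : ℕ) % 4) % 2, by have := p.2; omega⟩

/-- The sign of the `p`-th letter of the relator. -/
def relSign (g : ℕ) (p : Fin (4 * g)) : Bool := decide ((p : ℕ) % 4 < 2)

/-- The relator `[a₁,b₁][a₂,b₂]⋯[a_g,b_g]` as a word (list of signed letters). -/
def relatorWord (g : ℕ) : List (Letter g) :=
  (List.finRange (4 * g)).map fun p => (relLabel g p, relSign g p)

/-- The relator as an element of the free group on the `2g` generators. -/
def relatorF (g : ℕ) : FreeGroup (Fin (2 * g)) :=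
  ((relatorWord g).map fun l => if l.2 then FreeGroup.of l.1 else (FreeGroup.of l.1)⁻¹).prod

/-- The surface group `Γ_g = ⟨a₁,b₁,…,a_g,b_g ∣ [a₁,b₁]⋯[a_g,b_g]⟩`. -/
abbrev Gamma (g : ℕ) := PresentedGroup ({relatorF g} : Set (FreeGroup (Fin (2 * g))))

/-- The image of a signed letter in `Γ_g`. -/
def letterG {g : ℕ} (l : Letter g) : Gamma g :=
  if l.2 then PresentedGroup.of l.1 else (PresentedGroup.of l.1)⁻¹

/-- The image of a word in `Γ_g`. -/
def wordG {g : ℕ} (w : List (Letter g)) : Gamma g := (w.map letterG).prod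

/-- `ℓ(γ^{Γ_g})`: the minimal length of a word in the generators representing the
conjugacy class of `γ` in `Γ_g`. -/
def conjLen {g : ℕ} (γ : Gamma g) : ℕ :=
  sInf {n | ∃ w : List (Letter g), w.length = n ∧ ∃ x : Gamma g, x * wordG w * x⁻¹ = γ}

/-! ### Half-edge positions around a vertex of `Σ_g`

The `4g` half-edges around the vertex `o` of `Σ_g` come in the (clockwise) cyclic
order `a₁`-out, `b₁`-in, `a₁`-in, `b₁`-out, `a₂`-out, `b₂`-in, `a₂`-in, `b₂`-out, …
-/

/-- Position of the outgoing `ℓ`-labeled half-edge in the cyclic order. -/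
def posOut {g : ℕ} (ℓ : Fin (2 * g)) : ℕ :=
  if (ℓ : ℕ) % 2 = 0 then 2 * (ℓ : ℕ) else 2 * (ℓ : ℕ) + 1

/-- Position of the incoming `ℓ`-labeled half-edge in the cyclic order. -/
def posIn {g : ℕ} (ℓ : Fin (2 * g)) : ℕ :=
  if (ℓ : ℕ) % 2 = 0 then 2 * (ℓ : ℕ) + 2 else 2 * (ℓ : ℕ) - 1

/-- The position of the half-edge through which a traversal of a dart with signed
letter `s` *arrives* at its terminal vertex. -/
def posArr {g : ℕ} (s : Letter g) : ℕ := if s.2 then posIn s.1 else posOut s.1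

/-- The position of the half-edge through which a traversal of a dart with signed
letter `s` *leaves* its initial vertex. -/
def posLv {g : ℕ} (s : Letter g) : ℕ := if s.2 then posOut s.1 else posIn s.1

/-- The number of half-edges strictly between the arrival half-edge of `s` and the
departure half-edge of `t`, in the clockwise cyclic order of the `4g` half-edges
around a vertex. -/
def gapN {g : ℕ} (s t : Letter g) : ℕ := (posLv t + 4 * g - (posArr s + 1)) % (4 * g)

/-! ### Combinatorial complexes -/

/-- A combinatorial at-most-2-dimensional CW-complex with directed edges labeled by
the generators of `Γ_g`, and 2-cells recorded by their boundary walks (lists of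
darts, i.e. edges with a direction of traversal). -/
structure Complex (g : ℕ) where
  V : Type
  E : Type
  F : Type
  src : E → V
  dst : E → V
  lab : E → Fin (2 * g)
  bdry : F → List (E × Bool)

namespace Complex

variable {g : ℕ} (Y : Complex g)

/-- Darts: edges together with a direction of traversal (`true` = forward). -/
abbrev D := Y.E × Bool

/-- The initial vertex of a dart. -/
def dTail (d : Y.D) : Y.V := if d.2 then Y.src d.1 else Y.dst d.1

/-- The terminal vertex of a dart. -/
def dHead (d : Y.D) : Y.V := if d.2 then Y.dst d.1 else Y.src d.1

/-- The reversal of a dart. -/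
def dRev (d : Y.D) : Y.D := (d.1, !d.2)

/-- The signed letter read by a dart. -/
def dLet (d : Y.D) : Letter g := (Y.lab d.1, d.2)

/-- The word read along a list of darts. -/
def wordOf (l : List Y.D) : List (Letter g) := l.map Y.dLet

/-- The reversed walk. -/
def revW (l : List Y.D) : List Y.D := (l.map Y.dRev).reverse

/-- `WalkFrom u v l` : `l` is a walk (edge-path) from `u` to `v`. -/
inductive WalkFrom : Y.V → Y.V → List Y.D → Prop
  | nil (v : Y.V) : WalkFrom v v []
  | cons (d : Y.D) {v : Y.V} {l : List Y.D} :
      WalkFrom (Y.dHead d) v l → WalkFrom (Y.dTail d) v (d :: l)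

/-- All darts of `l` use edges from the set `sE`. -/
def InSet (sE : Set Y.E) (l : List Y.D) : Prop := ∀ d ∈ l, d.1 ∈ sE

/-- Two darts are adjacent (can be traversed consecutively). -/
def adj (d d' : Y.D) : Prop := Y.dHead d = Y.dTail d'

/-- A nonempty closed walk. -/
def IsCycle (c : List Y.D) : Prop := c ≠ [] ∧ ∃ v, Y.WalkFrom v v c

/-- **P1**: at most one incoming and at most one outgoing `ℓ`-labeled edge at every
vertex, for every label `ℓ`. -/
def P1 : Prop :=
  (∀ e e' : Y.E, Y.src e = Y.src e' → Y.lab e = Y.lab e' → e = e') ∧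
  (∀ e e' : Y.E, Y.dst e = Y.dst e' → Y.lab e = Y.lab e' → e = e')

/-- **P2**: every walk reading a word equal to `1` in `Γ_g` is closed. -/
def P2 : Prop :=
  ∀ (u v : Y.V) (l : List Y.D), Y.WalkFrom u v l → wordG (Y.wordOf l) = 1 → u = v

/-- **P3**: every 2-cell is glued along a closed walk reading the relator
`[a₁,b₁]⋯[a_g,b_g]`, and every such closed walk bounds at most one 2-cell. -/
def P3 : Prop :=
  (∀ f : Y.F, (∃ v, Y.WalkFrom v v (Y.bdry f)) ∧ Y.wordOf (Y.bdry f) = relatorWord g) ∧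
  Function.Injective Y.bdry

/-- A combinatorial covering space of `Σ_g`: every vertex has exactly one outgoing
and one incoming edge of each label, every walk reading the relator is closed, and
every closed walk reading the relator bounds exactly one `4g`-gon. -/
def IsCovering : Prop :=
  Y.P1 ∧ Y.P3 ∧
  (∀ (v : Y.V) (ℓ : Fin (2 * g)), ∃ e, Y.src e = v ∧ Y.lab e = ℓ) ∧
  (∀ (v : Y.V) (ℓ : Fin (2 * g)), ∃ e, Y.dst e = v ∧ Y.lab e = ℓ) ∧
  (∀ (u v : Y.V) (l : List Y.D), Y.WalkFrom u v l → Y.wordOf l = relatorWord g → u = v) ∧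
  (∀ (v : Y.V) (l : List Y.D), Y.WalkFrom v v l → Y.wordOf l = relatorWord g →
    ∃ f, Y.bdry f = l)

end Complex

/-- A morphism of labeled complexes: maps cells to cells of the same dimension and
respects sources, targets, labels and face boundaries (equivalently, commutes with
the immersions to `Σ_g`). -/
structure Hom {g : ℕ} (Y Z : Complex g) where
  mV : Y.V → Z.V
  mE : Y.E → Z.E
  mF : Y.F → Z.F
  hsrc : ∀ e, Z.src (mE e) = mV (Y.src e)
  hdst : ∀ e, Z.dst (mE e) = mV (Y.dst e)
  hlab : ∀ e, Z.lab (mE e) = Y.lab e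
  hbdry : ∀ f, Z.bdry (mF f) = (Y.bdry f).map fun d => (mE d.1, d.2)

namespace Hom

variable {g : ℕ} {Y Z : Complex g}

/-- The induced map on darts. -/
def mD (φ : Hom Y Z) (d : Y.D) : Z.D := (φ.mE d.1, d.2)

/-- Injectivity (an embedding of complexes). -/
def Inj (φ : Hom Y Z) : Prop :=
  Function.Injective φ.mV ∧ Function.Injective φ.mE ∧ Function.Injective φ.mF

end Hom

namespace Complex

variable {g : ℕ} (Y : Complex g)

/-- A tiled surface: a complex which embeds into a combinatorial covering space of
`Σ_g` (compatibly with directions and labels). -/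
def IsTiledSurface : Prop :=
  ∃ Z : Complex g, Z.IsCovering ∧ ∃ φ : Hom Y Z, φ.Inj

/-- Connectivity of a complex (any two vertices are joined by a walk). -/
def Connected : Prop := Nonempty Y.V ∧ ∀ v w : Y.V, ∃ l, Y.WalkFrom v w l

/-! ### Blocks and chains -/

/-- A block: a nonempty walk such that successive darts have no half-edges between
them (hence it reads a subword of the cyclic relator, of length at most `4g`). -/
def IsBlock (l : List Y.D) : Prop :=
  l ≠ [] ∧ l.length ≤ 4 * g ∧
  List.Chain' (fun d d' => Y.adj d d' ∧ gapN (Y.dLet d) (Y.dLet d') = 0) l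

/-- Two blocks are consecutive: concatenation is a walk and there is exactly one
half-edge between the last dart of the first and the first dart of the second. -/
def chainStep (b b' : List Y.D) : Prop :=
  ∃ d d', b.getLast? = some d ∧ b'.head? = some d' ∧ Y.adj d d' ∧
    gapN (Y.dLet d) (Y.dLet d') = 1

/-- A chain: a nonempty sequence of consecutive blocks. -/
def IsChain (bs : List (List Y.D)) : Prop :=
  bs ≠ [] ∧ (∀ b ∈ bs, Y.IsBlock b) ∧ List.Chain' Y.chainStep bs

/-- A cyclic chain: a chain whose blocks pave an entire cycle. -/
def IsCyclicChain (bs : List (List Y.D)) : Prop :=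
  Y.IsChain bs ∧ ∃ b b', bs.getLast? = some b ∧ bs.head? = some b' ∧ Y.chainStep b b'

/-- A long chain: a chain of consecutive blocks of lengths `2g, 2g−1, …, 2g−1, 2g`. -/
def IsLongChain (bs : List (List Y.D)) : Prop :=
  Y.IsChain bs ∧ ∃ k, bs.map List.length = 2 * g :: (List.replicate k (2 * g - 1) ++ [2 * g])

/-- A half-chain: a cyclic chain all of whose blocks have length `2g − 1`. -/
def IsHalfChain (bs : List (List Y.D)) : Prop :=
  Y.IsCyclicChain bs ∧ ∀ b ∈ bs, b.length = 2 * g - 1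

/-! ### Boundary cycles of the thick version (relative to sets of present edges and
faces), via the ribbon structure -/

/-- `nextD sE d d'`: among darts (with edge in `sE`) leaving the head of `d`, the
dart `d'` is the first one in clockwise order after the arrival half-edge of `d`.
This is the successor map whose orbits trace the boundary components of the thick
version of the ribbon graph. -/
def nextD (sE : Set Y.E) (d d' : Y.D) : Prop :=
  d'.1 ∈ sE ∧ Y.adj d d' ∧
  ∀ d'' : Y.D, d''.1 ∈ sE → Y.adj d d'' →
    gapN (Y.dLet d) (Y.dLet d') ≤ gapN (Y.dLet d) (Y.dLet d'')

/-- The corner between the consecutive darts `d, d'` is filled by a face from `sF`. -/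
def faceStep (sF : Set Y.F) (d d' : Y.D) : Prop :=
  ∃ f ∈ sF, [d, d'] <:+: (Y.bdry f ++ Y.bdry f)

/-- One step along the boundary of the thick version. -/
def bStep (sE : Set Y.E) (sF : Set Y.F) (d d' : Y.D) : Prop :=
  d.1 ∈ sE ∧ Y.nextD sE d d' ∧ ¬ Y.faceStep sF d d'

/-- A (finite segment of a) boundary cycle of the thick version. -/
def BPath (sE : Set Y.E) (sF : Set Y.F) (l : List Y.D) : Prop :=
  l ≠ [] ∧ Y.InSet sE l ∧ List.Chain' (Y.bStep sE sF) l

/-- A (finite) boundary cycle of the thick version. -/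
def BCycle (sE : Set Y.E) (sF : Set Y.F) (l : List Y.D) : Prop :=
  Y.BPath sE sF l ∧ ∃ d d', l.getLast? = some d ∧ l.head? = some d' ∧ Y.bStep sE sF d d'

/-- A dart lying on the boundary of the thick version. -/
def IsBDart (sE : Set Y.E) (sF : Set Y.F) (d : Y.D) : Prop :=
  d.1 ∈ sE ∧ ∃ d', Y.nextD sE d d' ∧ ¬ Y.faceStep sF d d'

/-- Boundary reduced: no boundary cycle contains a long block (length `≥ 2g+1`) or
a long chain. -/
def BoundaryReduced (sE : Set Y.E) (sF : Set Y.F) : Prop :=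
  (∀ l, Y.BPath sE sF l → ¬ (Y.IsBlock l ∧ 2 * g + 1 ≤ l.length)) ∧
  (∀ bs, Y.IsLongChain bs → ¬ Y.BPath sE sF bs.flatten)

/-- Strongly boundary reduced: no boundary cycle contains a half-block (length
exactly `2g`) or a half-chain. -/
def StronglyBoundaryReduced (sE : Set Y.E) (sF : Set Y.F) : Prop :=
  (∀ l, Y.BPath sE sF l → ¬ (Y.IsBlock l ∧ l.length = 2 * g)) ∧
  (∀ bs, Y.IsHalfChain bs → ¬ Y.BCycle sE sF bs.flatten)

/-! ### Combinatorial homotopy of walks -/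

/-- A closed walk traversing the boundary of a face from `sF` (in either direction,
starting anywhere). -/
def faceLoop (sF : Set Y.F) (b : List Y.D) : Prop :=
  ∃ f ∈ sF, ∃ n, b = (Y.bdry f).rotate n ∨ b = Y.revW ((Y.bdry f).rotate n)

/-- Elementary homotopy move: insertion of a backtrack or of a face boundary. -/
def elemMove (sE : Set Y.E) (sF : Set Y.F) (l l' : List Y.D) : Prop :=
  (∃ (l₁ l₂ : List Y.D) (d : Y.D), d.1 ∈ sE ∧ l = l₁ ++ l₂ ∧ l' = l₁ ++ d :: Y.dRev d :: l₂) ∨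
  (∃ l₁ l₂ b, Y.faceLoop sF b ∧ l = l₁ ++ l₂ ∧ l' = l₁ ++ b ++ l₂)

/-- Homotopy (rel endpoints) of walks from `u` to `v`, inside the subcomplex with
edge set `sE` and face set `sF`. -/
def Homotopic (sE : Set Y.E) (sF : Set Y.F) (u v : Y.V) (c c' : List Y.D) : Prop :=
  Relation.EqvGen
    (fun a b =>
      Y.WalkFrom u v a ∧ Y.WalkFrom u v b ∧ Y.InSet sE a ∧ Y.InSet sE b ∧
        (Y.elemMove sE sF a b ∨ Y.elemMove sE sF b a)) c c'

/-- A closed walk which is null-homotopic. -/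
def NullHomotopic (sE : Set Y.E) (sF : Set Y.F) (c : List Y.D) : Prop :=
  ∃ v, Y.WalkFrom v v c ∧ Y.Homotopic sE sF v v c []

/-- An essential cycle: a nonempty closed walk which is not null-homotopic. -/
def Essential (sE : Set Y.E) (sF : Set Y.F) (c : List Y.D) : Prop :=
  Y.IsCycle c ∧ Y.InSet sE c ∧ ¬ Y.NullHomotopic sE sF c

/-- Free homotopy of closed walks. -/
def FreelyHomotopic (sE : Set Y.E) (sF : Set Y.F) (c c' : List Y.D) : Prop :=
  ∃ u v q, Y.WalkFrom u u c ∧ Y.WalkFrom v v c' ∧ Y.WalkFrom u v q ∧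
    Y.InSet sE q ∧ Y.InSet sE c ∧ Y.InSet sE c' ∧
    Y.Homotopic sE sF u u c (q ++ c' ++ Y.revW q)

/-- `c` is a shortest representative of its free homotopy class. -/
def ShortestRep (sE : Set Y.E) (sF : Set Y.F) (c : List Y.D) : Prop :=
  ∀ c', Y.FreelyHomotopic sE sF c c' → c.length ≤ c'.length

end Complex

/-- `s` occurs as a contiguous subword of the cyclic word `c`. -/
def cycContains {α : Type*} (c s : List α) : Prop :=
  s ≠ [] ∧ s.length ≤ c.length ∧ s <:+: (c ++ c)

namespace Complex

variable {g : ℕ} (Y : Complex g)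

/-- The cycle `c` contains no long block and no long chain. -/
def NoLongBlockOrChainCyc (c : List Y.D) : Prop :=
  (∀ s, cycContains c s → ¬ (Y.IsBlock s ∧ 2 * g + 1 ≤ s.length)) ∧
  (∀ bs, Y.IsLongChain bs → ¬ cycContains c bs.flatten)

/-- A (cyclically) non-backtracking cycle. -/
def NonBacktrackingCyc (c : List Y.D) : Prop :=
  ¬ ∃ d : Y.D, cycContains c [d, Y.dRev d]

/-- A cycle which is essential and a shortest representative of its
free homotopy class. -/
def GoodCycle (c : List Y.D) : Prop :=
  Y.IsCycle c ∧ Y.Essential Set.univ Set.univ c ∧ Y.ShortestRep Set.univ Set.univ c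

/-! ### Cells and components of complements -/

/-- The cells of a complex. -/
def Cell := Y.V ⊕ Y.E ⊕ Y.F

def vCell (v : Y.V) : Y.Cell := Sum.inl v
def eCell (e : Y.E) : Y.Cell := Sum.inr (Sum.inl e)
def fCell (f : Y.F) : Y.Cell := Sum.inr (Sum.inr f)

/-- Basic incidence of (open) cells. -/
def inc0 : Y.Cell → Y.Cell → Prop := fun c c' =>
  match c, c' with
  | Sum.inl v, Sum.inr (Sum.inl e) => Y.src e = v ∨ Y.dst e = v
  | Sum.inl v, Sum.inr (Sum.inr f) => ∃ d ∈ Y.bdry f, Y.dTail d = v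
  | Sum.inr (Sum.inl e), Sum.inr (Sum.inr f) => ∃ b, (e, b) ∈ Y.bdry f
  | _, _ => False

/-- Symmetrized incidence of cells. -/
def incid (c c' : Y.Cell) : Prop := Y.inc0 c c' ∨ Y.inc0 c' c

end Complex

/-- A triple of subsets of the cells of a complex `Y` (a prospective subcomplex). -/
structure SubC {g : ℕ} (Y : Complex g) where
  sV : Set Y.V
  sE : Set Y.E
  sF : Set Y.F

namespace SubC

variable {g : ℕ} {Y : Complex g}

/-- `S` is an actual subcomplex: closed under taking boundaries of cells. -/
def IsSub (S : SubC Y) : Prop :=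
  (∀ e ∈ S.sE, Y.src e ∈ S.sV ∧ Y.dst e ∈ S.sV) ∧
  (∀ f ∈ S.sF, ∀ d ∈ Y.bdry f, d.1 ∈ S.sE)

/-- Containment of subcomplexes. -/
def le (S T : SubC Y) : Prop := S.sV ⊆ T.sV ∧ S.sE ⊆ T.sE ∧ S.sF ⊆ T.sF

/-- Compactness: finitely many cells. -/
def Compact (S : SubC Y) : Prop := S.sV.Finite ∧ S.sE.Finite ∧ S.sF.Finite

/-- Connectivity of the subcomplex. -/
def Connected (S : SubC Y) : Prop :=
  S.sV.Nonempty ∧ ∀ v ∈ S.sV, ∀ w ∈ S.sV, ∃ l, Y.WalkFrom v w l ∧ Y.InSet S.sE l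

/-- Image of a subcomplex under a morphism. -/
def image {Z : Complex g} (φ : Hom Y Z) (S : SubC Y) : SubC Z :=
  ⟨φ.mV '' S.sV, φ.mE '' S.sE, φ.mF '' S.sF⟩

end SubC

/-- The whole complex, as a subcomplex of itself. -/
def fullSub {g : ℕ} (Y : Complex g) : SubC Y := ⟨Set.univ, Set.univ, Set.univ⟩

namespace Complex

variable {g : ℕ} (Y : Complex g)

/-- Membership of a cell in a subcomplex. -/
def inSub (S : SubC Y) : Y.Cell → Prop := fun c =>
  match c with
  | Sum.inl v => v ∈ S.sV
  | Sum.inr (Sum.inl e) => e ∈ S.sE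
  | Sum.inr (Sum.inr f) => f ∈ S.sF

/-- Reachability of cells through the open complement of the subcomplex `S`
(= lying in the same connected component of the complement). -/
def reachS (S : SubC Y) (c c' : Y.Cell) : Prop :=
  Relation.ReflTransGen (fun a b => Y.incid a b ∧ ¬ Y.inSub S a ∧ ¬ Y.inSub S b) c c'

end Complex

/-- The closure (as a subcomplex) of the connected component of the cell `c₀` in the
complement of the subcomplex `S`. -/
def compCl {g : ℕ} (Y : Complex g) (S : SubC Y) (c₀ : Y.Cell) : SubC Y :=
  let cF : Set Y.F := {f | Y.reachS S c₀ (Y.fCell f)}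
  let cE : Set Y.E :=
    {e | Y.reachS S c₀ (Y.eCell e)} ∪ {e | ∃ f ∈ cF, ∃ b, (e, b) ∈ Y.bdry f}
  let cV : Set Y.V :=
    {v | Y.reachS S c₀ (Y.vCell v)} ∪ {v | ∃ e ∈ cE, Y.src e = v ∨ Y.dst e = v}
  ⟨cV, cE, cF⟩

/-- The subcomplex has exactly one boundary cycle (which covers all boundary darts). -/
def OneBdry {g : ℕ} (Y : Complex g) (S : SubC Y) : Prop :=
  ∃ δ, Y.BCycle S.sE S.sF δ ∧ ∀ d, Y.IsBDart S.sE S.sF d → d ∈ δ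

/-- The subcomplex has exactly two (disjoint) boundary cycles, covering all
boundary darts. -/
def TwoBdry {g : ℕ} (Y : Complex g) (S : SubC Y) : Prop :=
  ∃ δ₁ δ₂, Y.BCycle S.sE S.sF δ₁ ∧ Y.BCycle S.sE S.sF δ₂ ∧ δ₁.Disjoint δ₂ ∧
    ∀ d, Y.IsBDart S.sE S.sF d → d ∈ δ₁ ∨ d ∈ δ₂

/-- The boundary-reduced closure of `S` inside `Y`: the intersection of all
intermediate boundary reduced subcomplexes. -/
def BRcl {g : ℕ} (Y : Complex g) (S : SubC Y) : SubC Y where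
  sV := ⋂ T ∈ {T : SubC Y | T.IsSub ∧ S.le T ∧ Y.BoundaryReduced T.sE T.sF}, T.sV
  sE := ⋂ T ∈ {T : SubC Y | T.IsSub ∧ S.le T ∧ Y.BoundaryReduced T.sE T.sF}, T.sE
  sF := ⋂ T ∈ {T : SubC Y | T.IsSub ∧ S.le T ∧ Y.BoundaryReduced T.sE T.sF}, T.sF

/-- The strongly-boundary-reduced closure of `S` inside `Y`. -/
def SBRcl {g : ℕ} (Y : Complex g) (S : SubC Y) : SubC Y where
  sV := ⋂ T ∈ {T : SubC Y | T.IsSub ∧ S.le T ∧ Y.StronglyBoundaryReduced T.sE T.sF}, T.sV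
  sE := ⋂ T ∈ {T : SubC Y | T.IsSub ∧ S.le T ∧ Y.StronglyBoundaryReduced T.sE T.sF}, T.sE
  sF := ⋂ T ∈ {T : SubC Y | T.IsSub ∧ S.le T ∧ Y.StronglyBoundaryReduced T.sE T.sF}, T.sF

/-- An isomorphism between the subcomplex `S` of `Y` and the subcomplex `T` of `Z`. -/
structure SubEquiv {g : ℕ} (Y : Complex g) (S : SubC Y) (Z : Complex g) (T : SubC Z) where
  fV : Y.V → Z.V
  fE : Y.E → Z.E
  fF : Y.F → Z.F
  bijV : Set.BijOn fV S.sV T.sV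
  bijE : Set.BijOn fE S.sE T.sE
  bijF : Set.BijOn fF S.sF T.sF
  hsrc : ∀ e ∈ S.sE, Z.src (fE e) = fV (Y.src e)
  hdst : ∀ e ∈ S.sE, Z.dst (fE e) = fV (Y.dst e)
  hlab : ∀ e ∈ S.sE, Z.lab (fE e) = Y.lab e
  hbdry : ∀ f ∈ S.sF, Z.bdry (fF f) = (Y.bdry f).map fun d => (fE d.1, d.2)

/-- `FunnelComponent Y S c₀`: the connected component of the cell `c₀` in the
complement of the subcomplex `S` is a twice-punctured sphere with one funnel and
one fake-puncture.  Rendered combinatorially: the component contains infinitely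
many `4g`-gons (the funnel); there is a boundary cycle `δ` of `S` adjacent to the
component, it is unique (one fake-puncture), and every closed walk inside the
closure of the component is freely homotopic there to a power of `δ` or of its
inverse (so the closure is a half-open annulus bounded by `δ`). -/
def FunnelComponent {g : ℕ} (Y : Complex g) (S : SubC Y) (c₀ : Y.Cell) : Prop :=
  {f : Y.F | Y.reachS S c₀ (Y.fCell f)}.Infinite ∧
  ∃ δ : List Y.D, Y.BCycle S.sE S.sF δ ∧
    (∃ d ∈ δ, ∃ c', Y.incid (Y.eCell d.1) c' ∧ Y.reachS S c₀ c') ∧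
    (∀ δ', Y.BCycle S.sE S.sF δ' →
      (∃ d ∈ δ', ∃ c', Y.incid (Y.eCell d.1) c' ∧ Y.reachS S c₀ c') →
      ∃ n, δ' = δ.rotate n) ∧
    (∀ (v : Y.V) (l : List Y.D), Y.WalkFrom v v l →
      Y.InSet ({e | Y.reachS S c₀ (Y.eCell e)} ∪ {e | ∃ b, (e, b) ∈ δ}) l →
      ∃ n,
        Y.FreelyHomotopic ({e | Y.reachS S c₀ (Y.eCell e)} ∪ {e | ∃ b, (e, b) ∈ δ})
          {f | Y.reachS S c₀ (Y.fCell f)} l ((List.replicate n δ).flatten) ∨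
        Y.FreelyHomotopic ({e | Y.reachS S c₀ (Y.eCell e)} ∪ {e | ∃ b, (e, b) ∈ δ})
          {f | Y.reachS S c₀ (Y.fCell f)} l ((List.replicate n (Y.revW δ)).flatten))

/-- `Y` contains a funnel: an essential cycle `δ` of `Y` cutting off an infinite
region of `Y` which is attached to the rest of `Y` only along `δ`, contains no
boundary of `Y`, and is a half-open annulus (every loop inside is freely homotopic
to a power of `δ`); i.e. an end of `Y` which is a puncture of the ambient covering. -/
def HasFunnel {g : ℕ} (Y : Complex g) : Prop :=
  ∃ (δ : List Y.D) (sE : Set Y.E) (sF : Set Y.F),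
    Y.IsCycle δ ∧ Y.Essential Set.univ Set.univ δ ∧
    (∀ d ∈ δ, d.1 ∉ sE) ∧ sE.Nonempty ∧ sF.Infinite ∧
    (∀ f ∈ sF, ∀ d ∈ Y.bdry f, d.1 ∈ sE ∨ ∃ b, (d.1, b) ∈ δ) ∧
    (∀ f : Y.F, (∃ d ∈ Y.bdry f, d.1 ∈ sE) → f ∈ sF) ∧
    (∀ d : Y.D, d.1 ∈ sE → ¬ Y.IsBDart Set.univ Set.univ d) ∧
    (∀ v : Y.V, (∃ e ∈ sE, Y.src e = v ∨ Y.dst e = v) → (∀ d ∈ δ, Y.dTail d ≠ v) →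
      ∀ e' : Y.E, (Y.src e' = v ∨ Y.dst e' = v) → e' ∈ sE) ∧
    (∀ (v : Y.V) (l : List Y.D), Y.WalkFrom v v l →
      Y.InSet (sE ∪ {e | ∃ b, (e, b) ∈ δ}) l →
      ∃ n,
        Y.FreelyHomotopic (sE ∪ {e | ∃ b, (e, b) ∈ δ}) sF l
          ((List.replicate n δ).flatten) ∨
        Y.FreelyHomotopic (sE ∪ {e | ∃ b, (e, b) ∈ δ}) sF l
          ((List.replicate n (Y.revW δ)).flatten))

/-- The fundamental group of `Y` is cyclic: some closed walk `c` generates all free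
homotopy classes of loops.  (For a connected surface this is *equivalent to NOT
having genus ≥ 1 or at least 3 boundary components/punctures*.) -/
def CyclicPi1 {g : ℕ} (Y : Complex g) : Prop :=
  ∃ c : List Y.D, ∀ (v : Y.V) (l : List Y.D), Y.WalkFrom v v l →
    ∃ n,
      Y.FreelyHomotopic Set.univ Set.univ l ((List.replicate n c).flatten) ∨
      Y.FreelyHomotopic Set.univ Set.univ l ((List.replicate n (Y.revW c)).flatten)

/-! ### The covering space `J\~Σ_g` and the core surface of `J` -/

/-- Right cosets `Jx` of `J` in `Γ_g` — the vertices (and faces) of `J\~Σ_g`. -/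
abbrev Cos (g : ℕ) (J : Subgroup (Gamma g)) := Quotient (QuotientGroup.rightRel J)

/-- The coset `Jx`. -/
def mkCos (g : ℕ) (J : Subgroup (Gamma g)) (x : Gamma g) : Cos g J :=
  Quotient.mk _ x

/-- Right multiplication on right cosets. -/
def rmul (g : ℕ) (J : Subgroup (Gamma g)) (x : Gamma g) : Cos g J → Cos g J :=
  Quotient.map (· * x) (by
    intro a b hab
    have h1 : b * a⁻¹ ∈ J := QuotientGroup.rightRel_apply.mp hab
    refine QuotientGroup.rightRel_apply.mpr ?_
    have h2 : b * x * (a * x)⁻¹ = b * a⁻¹ := by group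
    rw [h2]; exact h1)

/-- The walk in `J\~Σ_g` starting at a vertex and reading a given word. -/
def relWalk (g : ℕ) (J : Subgroup (Gamma g)) :
    Cos g J → List (Letter g) → List ((Cos g J × Fin (2 * g)) × Bool)
  | _, [] => []
  | v, (ℓ, true) :: w =>
      ((v, ℓ), true) :: relWalk g J (rmul g J (PresentedGroup.of ℓ) v) w
  | v, (ℓ, false) :: w =>
      ((rmul g J (PresentedGroup.of ℓ)⁻¹ v, ℓ), false) ::
        relWalk g J (rmul g J (PresentedGroup.of ℓ)⁻¹ v) w

/-- The covering space `Υ = J\~Σ_g` of `Σ_g` corresponding to the subgroup `J`,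
with the CW-structure pulled back from `Σ_g`: vertices and `4g`-gons are the right
cosets of `J`, and each vertex carries one outgoing edge per label. -/
def cover (g : ℕ) (J : Subgroup (Gamma g)) : Complex g where
  V := Cos g J
  E := Cos g J × Fin (2 * g)
  F := Cos g J
  src e := e.1
  dst e := rmul g J (PresentedGroup.of e.2) e.1
  lab e := e.2
  bdry v := relWalk g J v (relatorWord g)

/-- The map `J₁\~Σ_g → J₂\~Σ_g` on vertices, for `J₁ ≤ J₂`. -/
def coverMapV {g : ℕ} {J₁ J₂ : Subgroup (Gamma g)} (h : J₁ ≤ J₂) :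
    Cos g J₁ → Cos g J₂ :=
  Quotient.map id (by
    intro a b hab
    have h1 : b * a⁻¹ ∈ J₁ := QuotientGroup.rightRel_apply.mp hab
    exact QuotientGroup.rightRel_apply.mpr (h h1))

/-- The natural covering morphism on edges. -/
def coverMapE {g : ℕ} {J₁ J₂ : Subgroup (Gamma g)} (h : J₁ ≤ J₂)
    (e : (cover g J₁).E) : (cover g J₂).E :=
  (coverMapV h e.1, e.2)

/-- The natural covering morphism on darts. -/
def coverMapD {g : ℕ} {J₁ J₂ : Subgroup (Gamma g)} (h : J₁ ≤ J₂)
    (d : (cover g J₁).D) : (cover g J₂).D :=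
  (coverMapE h d.1, d.2)

/-- The cycle `c` in `J\~Σ_g` represents the conjugacy class of `γ` in `J`
(conjugacy classes in `J` ↔ free homotopy classes of essential loops in `J\~Σ_g`). -/
def RepCls {g : ℕ} (J : Subgroup (Gamma g)) (c : List ((cover g J).D))
    (γ : Gamma g) : Prop :=
  ∃ x j : Gamma g, j ∈ J ∧
    (cover g J).WalkFrom (mkCos g J x) (mkCos g J x) c ∧
    x * wordG ((cover g J).wordOf c) * x⁻¹ = j * γ * j⁻¹

/-- Step (i) of the definition of the core surface: the edges lying on some
shortest representative cycle of an essential free homotopy class. -/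
def coreE1 (g : ℕ) (J : Subgroup (Gamma g)) : Set (cover g J).E :=
  {e | ∃ c, (cover g J).GoodCycle c ∧ ∃ b, (e, b) ∈ c}

/-- The vertices of step (i) of the definition of the core surface. -/
def coreV1 (g : ℕ) (J : Subgroup (Gamma g)) : Set (cover g J).V :=
  {v | ∃ e ∈ coreE1 g J, (cover g J).src e = v ∨ (cover g J).dst e = v}

/-- Step (i) of the definition of the core surface, as a subcomplex of `J\~Σ_g`. -/
def coreS1 (g : ℕ) (J : Subgroup (Gamma g)) : SubC (cover g J) :=
  ⟨coreV1 g J, coreE1 g J, ∅⟩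

/-- A cell of `J\~Σ_g` lying in a connected component of the complement of step (i)
which contains only finitely many `4g`-gons. -/
def coreFin (g : ℕ) (J : Subgroup (Gamma g)) (c : (cover g J).Cell) : Prop :=
  ¬ (cover g J).inSub (coreS1 g J) c ∧
  {f : (cover g J).F | (cover g J).reachS (coreS1 g J) c ((cover g J).fCell f)}.Finite

open Classical in
/-- The core surface `Core(J)` of a subgroup `J ≤ Γ_g`, as a subcomplex of
`Υ = J\~Σ_g`: (i) the union of all shortest representative cycles of essential
free homotopy classes in `Υ`, together with (ii) all connected components of the
complement containing finitely many `4g`-gons.  For the trivial subgroup it is a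
single vertex. -/
def coreSub (g : ℕ) (J : Subgroup (Gamma g)) : SubC (cover g J) :=
  if J = ⊥ then ⟨{mkCos g J 1}, ∅, ∅⟩
  else
    ⟨coreV1 g J ∪ {v | coreFin g J ((cover g J).vCell v)},
     coreE1 g J ∪ {e | coreFin g J ((cover g J).eCell e)},
     {f | coreFin g J ((cover g J).fCell f)}⟩


/-! ### letters -/

def inv {g : ℕ} (l : Letter g) : Letter g := (l.1, !l.2)

@[simp] lemma inv_inv' {g : ℕ} (l : Letter g) : inv (inv l) = l := by
  rcases l with ⟨a, b⟩; simp [inv]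

lemma letterG_inv {g : ℕ} (l : Letter g) : letterG (inv l) = (letterG l)⁻¹ := by
  rcases l with ⟨a, b⟩; cases b <;> simp [inv, letterG]

@[simp] lemma wordG_nil {g : ℕ} : wordG ([] : List (Letter g)) = 1 := rfl

@[simp] lemma wordG_cons {g : ℕ} (l : Letter g) (w : List (Letter g)) :
    wordG (l :: w) = letterG l * wordG w := by simp [wordG]

@[simp] lemma wordG_append {g : ℕ} (w w' : List (Letter g)) :
    wordG (w ++ w') = wordG w * wordG w' := by simp [wordG]

def winv {g : ℕ} (w : List (Letter g)) : List (Letter g) := (w.map inv).reverse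

lemma wordG_winv {g : ℕ} (w : List (Letter g)) : wordG (winv w) = (wordG w)⁻¹ := by
  induction w with
  | nil => simp [winv]
  | cons a w ih => simp only [winv, List.map_cons, List.reverse_cons, wordG_append] at *
                   simp [ih, letterG_inv]

@[simp] lemma winv_length {g : ℕ} (w : List (Letter g)) : (winv w).length = w.length := by
  simp [winv]

lemma wordG_relator (g : ℕ) : wordG (relatorWord g) = 1 := by
  have h : PresentedGroup.mk ({relatorF g} : Set (FreeGroup (Fin (2 * g)))) (relatorF g) = 1 :=
    PresentedGroup.one_of_mem (by simp)
  refine Eq.trans ?_ h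
  unfold relatorF
  rw [map_list_prod, wordG, List.map_map]
  congr 1
  apply List.map_congr_left
  rintro ⟨i, b⟩ _
  cases b
  · simp [letterG]; rfl
  · simp [letterG]; rfl

/-- The universal property in terms of word functions. -/
theorem word_invariant {g : ℕ} {α : Type*} (F : List (Letter g) → α)
    (h1 : ∀ a b l, F (a ++ l :: inv l :: b) = F (a ++ b))
    (h2 : ∀ a b, F (a ++ relatorWord g ++ b) = F (a ++ b))
    {w w' : List (Letter g)} (h : wordG w = wordG w') : F w = F w' := by
  let c : Con (FreeMonoid (Letter g)) :=
    { r := fun u v => ∀ a b : List (Letter g), F (a ++ u.toList ++ b) = F (a ++ v.toList ++ b)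
      iseqv := ⟨fun _ _ _ => rfl, fun h a b => (h a b).symm, fun h h' a b => (h a b).trans (h' a b)⟩
      mul' := by
        intro u v x y huv hxy a b
        have e1 := huv a (x.toList ++ b)
        have e2 := hxy (a ++ v.toList) b
        simp only [FreeMonoid.toList_mul, List.append_assoc] at *
        rw [e1, e2] }
  let q : Letter g → c.Quotient := fun l => (FreeMonoid.of l : FreeMonoid (Letter g))
  have hq : ∀ l, q l * q (inv l) = 1 := by
    intro l
    change ((FreeMonoid.of l * FreeMonoid.of (inv l) : FreeMonoid (Letter g)) : c.Quotient) =
      ((1 : FreeMonoid (Letter g)) : c.Quotient)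
    rw [Con.eq]
    intro a b
    have := h1 a b l
    simpa [FreeMonoid.toList_mul, FreeMonoid.toList_of, FreeMonoid.toList_one] using this
  let U : Letter g → c.Quotientˣ := fun l =>
    ⟨q l, q (inv l), hq l, by have := hq (inv l); rwa [inv_inv'] at this⟩
  have hUinv : ∀ i : Fin (2 * g), (U (i, true))⁻¹ = U (i, false) := by
    intro i; ext; rfl
  have hqw : ∀ w : List (Letter g), (((w.map U).prod : c.Quotientˣ) : c.Quotient)
      = ((FreeMonoid.ofList w : FreeMonoid (Letter g)) : c.Quotient) := by
    intro w
    induction w with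
    | nil => rfl
    | cons l w ih =>
      rw [List.map_cons, List.prod_cons, Units.val_mul, ih]; rfl
  have hrel : ∀ r ∈ ({relatorF g} : Set (FreeGroup (Fin (2 * g)))),
      FreeGroup.lift (fun i => U (i, true)) r = 1 := by
    intro r hr
    rw [Set.mem_singleton_iff] at hr
    subst hr
    have : FreeGroup.lift (fun i => U (i, true)) (relatorF g) = ((relatorWord g).map U).prod := by
      rw [relatorF, map_list_prod, List.map_map]
      congr 1
      apply List.map_congr_left
      rintro ⟨i, b⟩ _
      cases b <;> simp [hUinv]
    rw [this]
    ext
    rw [hqw]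
    change _ = ((1 : FreeMonoid (Letter g)) : c.Quotient)
    rw [Con.eq]
    intro a b
    have := h2 a b
    simpa [FreeMonoid.toList_ofList, FreeMonoid.toList_one] using this
  let φ : Gamma g →* c.Quotientˣ := PresentedGroup.toGroup hrel
  have hφ : ∀ w, φ (wordG w) = (w.map U).prod := by
    intro w
    rw [wordG, map_list_prod, List.map_map]
    congr 1
    apply List.map_congr_left
    rintro ⟨i, b⟩ _
    cases b <;> simp [letterG, φ, PresentedGroup.toGroup.of, hUinv]
  have := congrArg (fun u : c.Quotientˣ => (u : c.Quotient)) ((hφ w).symm.trans ((congrArg φ h).trans (hφ w')))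
  simp only [hqw] at this
  rw [Con.eq] at this
  have := this [] []
  simpa using this

lemma exists_word {g : ℕ} (γ : Gamma g) : ∃ w : List (Letter g), wordG w = γ := by
  obtain ⟨f, rfl⟩ := QuotientGroup.mk_surjective γ
  induction f using FreeGroup.induction_on with
  | C1 => exact ⟨[], rfl⟩
  | of i => exact ⟨[(i, true)], by simp [letterG]; rfl⟩
  | inv_of i _ => exact ⟨[(i, false)], by simp [letterG]; rfl⟩
  | mul a b ha hb =>
    obtain ⟨u, hu⟩ := ha
    obtain ⟨v, hv⟩ := hb
    exact ⟨u ++ v, by rw [wordG_append, hu, hv]; rfl⟩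

/-! ### positions -/

def idx {g : ℕ} (l : Letter g) : ℕ := 4 * (l.1.1 / 2) + l.1.1 % 2 + (if l.2 then 0 else 2)

lemma idx_lt {g : ℕ} (l : Letter g) : idx l < 4 * g := by
  rcases l with ⟨⟨a, ha⟩, b⟩; cases b <;> simp [idx] <;> omega

/-- `rl p` the `p`-th relator letter. -/
def rl {g : ℕ} (p : ℕ) (h : p < 4 * g) : Letter g := (relLabel g ⟨p, h⟩, relSign g ⟨p, h⟩)

lemma rl_idx {g : ℕ} (l : Letter g) : rl (idx l) (idx_lt l) = l := by
  rcases l with ⟨⟨a, ha⟩, b⟩; cases b <;> simp [rl, idx, relLabel, relSign] <;> omega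

lemma idx_rl {g : ℕ} (p : ℕ) (h : p < 4 * g) : idx (rl p h) = p := by
  simp only [rl, idx, relLabel, relSign, decide_eq_true_eq]
  split_ifs <;> omega

lemma idx_inj {g : ℕ} {l m : Letter g} (h : idx l = idx m) : l = m := by
  rw [← rl_idx l, ← rl_idx m]; congr 1

lemma rel_length (g : ℕ) : (relatorWord g).length = 4 * g := by simp [relatorWord]

lemma rel_get {g : ℕ} (p : ℕ) (h : p < (relatorWord g).length) :
    (relatorWord g)[p] = rl p (by rwa [rel_length] at h) := by
  simp [relatorWord, rl]

/-- prefix of relator, as group elt -/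
def P (g : ℕ) (i : ℕ) : Gamma g := wordG ((relatorWord g).take i)

lemma P_zero (g : ℕ) : P g 0 = 1 := by simp [P]
lemma P_last (g : ℕ) : P g (4 * g) = 1 := by
  rw [P, List.take_of_length_le (by rw [rel_length]), wordG_relator]
lemma P_succ {g : ℕ} (i : ℕ) (h : i < 4 * g) : P g (i + 1) = P g i * letterG (rl i h) := by
  rw [P, List.take_add_one, wordG_append, P]
  rw [List.getElem?_eq_getElem (by rwa [rel_length]), rel_get]
  simp

lemma posLv_lt {g : ℕ} (l : Letter g) : posLv l < 4 * g := by
  rcases l with ⟨⟨a, ha⟩, b⟩; cases b <;> simp [posLv, posIn, posOut] <;> split_ifs <;> omega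

lemma posArr_eq {g : ℕ} (l : Letter g) : posArr l = posLv (inv l) := by
  rcases l with ⟨a, b⟩; cases b <;> simp [posLv, posArr, inv]

lemma posLv_inj {g : ℕ} {l m : Letter g} (h : posLv l = posLv m) : l = m := by
  rcases l with ⟨⟨a, ha⟩, b⟩; rcases m with ⟨⟨a', ha'⟩, b'⟩
  cases b <;> cases b' <;> simp [posLv, posIn, posOut] at h ⊢ <;> split_ifs at h <;> omega

/-- the letter leaving at position `p` -/
def lam {g : ℕ} (hg : 0 < g) (p : ℕ) : Letter g :=
  (⟨(2 * (p % (4 * g) / 4) + p % 2), by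
    have : p % (4 * g) < 4 * g := Nat.mod_lt _ (by omega)
    omega⟩, decide (p % 4 = 0 ∨ p % 4 = 3))

lemma posLv_lam {g : ℕ} (hg : 0 < g) (p : ℕ) : posLv (lam hg p) = p % (4 * g) := by
  have h1 : p % (4 * g) < 4 * g := Nat.mod_lt _ (by omega)
  have h2 : p % (4 * g) % 4 = p % 4 := Nat.mod_mul_right_mod p 4 g
  simp only [posLv, lam, posIn, posOut, decide_eq_true_eq]
  obtain ⟨q, hq⟩ : ∃ q, q = p % (4 * g) := ⟨_, rfl⟩
  rw [← hq] at h1 h2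
  have hk : ∀ {n : ℕ} (h : n < 2 * g), ((⟨n, h⟩ : Fin (2 * g)) : ℕ) = n := fun _ => rfl
  simp only [← hq]
  have h3 : (2 * (q / 4) + p % 2) % 2 = p % 2 := by omega
  by_cases h4 : p % 4 = 0 ∨ p % 4 = 3
  · rw [if_pos h4]; split_ifs <;> omega
  · rw [if_neg h4]; split_ifs <;> omega

lemma lam_posLv {g : ℕ} (hg : 0 < g) (l : Letter g) : lam hg (posLv l) = l :=
  posLv_inj (by rw [posLv_lam, Nat.mod_eq_of_lt (posLv_lt l)])

lemma lam_period {g : ℕ} (hg : 0 < g) (p q : ℕ) (h : p % (4 * g) = q % (4 * g)) :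
    lam hg p = lam hg q := posLv_inj (by rw [posLv_lam, posLv_lam, h])

/-- next letter in the cyclic relator -/
def suc {g : ℕ} (l : Letter g) : Letter g :=
  rl ((idx l + 1) % (4 * g)) (Nat.mod_lt _ (by have := idx_lt l; omega))

lemma idx_suc {g : ℕ} (l : Letter g) : idx (suc l) = (idx l + 1) % (4 * g) := idx_rl _ _

lemma posLv_suc {g : ℕ} (l : Letter g) : posLv (suc l) = (posArr l + 1) % (4 * g) := by
  have h0 := idx_suc l
  have hl := idx_lt l
  generalize suc l = m at h0
  have h1 : (idx l + 1 < 4 * g ∧ idx m = idx l + 1) ∨ (idx l + 1 = 4 * g ∧ idx m = 0) := by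
    rcases Nat.lt_or_ge (idx l + 1) (4 * g) with h | h
    · left; rw [h0, Nat.mod_eq_of_lt h]; exact ⟨h, rfl⟩
    · right; have : idx l + 1 = 4 * g := by omega
      rw [h0, this, Nat.mod_self]; exact ⟨rfl, rfl⟩
  rcases l with ⟨⟨a, ha⟩, b⟩; rcases m with ⟨⟨a', ha'⟩, b'⟩
  have key : ∀ x : ℕ, (x < 4 * g → x % (4 * g) = x) ∧ (x = 4 * g → x % (4 * g) = 0) :=
    fun x => ⟨Nat.mod_eq_of_lt, fun h => by rw [h, Nat.mod_self]⟩
  have kk := key (posArr (⟨a, ha⟩, b) + 1)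
  generalize (posArr (⟨a, ha⟩, b) + 1) % (4 * g) = t at kk
  cases b <;> cases b' <;> simp [posLv, posArr, posIn, posOut, idx] at h1 kk ⊢ <;>
    split_ifs at kk ⊢ <;> omega

lemma gapN_lt {g : ℕ} (s t : Letter g) : gapN s t < 4 * g :=
  Nat.mod_lt _ (by have := posLv_lt t; omega)

lemma posLv_of_gap {g : ℕ} (s t : Letter g) : posLv t = (posArr s + 1 + gapN s t) % (4 * g) := by
  have h1 := posLv_lt t
  have h2 : posArr s < 4 * g := by rw [posArr_eq]; exact posLv_lt _
  rw [gapN, Nat.add_mod_mod]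
  have : posArr s + 1 + (posLv t + 4 * g - (posArr s + 1)) = posLv t + 4 * g := by omega
  rw [this, Nat.add_mod_right, Nat.mod_eq_of_lt h1]

lemma lam_gap {g : ℕ} (hg : 0 < g) (s t : Letter g) : t = lam hg (posArr s + 1 + gapN s t) :=
  posLv_inj (by rw [posLv_lam, ← posLv_of_gap])

lemma gap_lam {g : ℕ} (hg : 0 < g) (s : Letter g) (k : ℕ) (hk : k < 4 * g) :
    gapN s (lam hg (posArr s + 1 + k)) = k := by
  have h2 : posArr s < 4 * g := by rw [posArr_eq]; exact posLv_lt _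
  rw [gapN, posLv_lam]
  rcases Nat.lt_or_ge (posArr s + 1 + k) (4 * g) with h | h
  · rw [Nat.mod_eq_of_lt h]
    have : posArr s + 1 + k + 4 * g - (posArr s + 1) = k + 4 * g := by omega
    rw [this, Nat.add_mod_right, Nat.mod_eq_of_lt hk]
  · rcases Nat.lt_or_ge (posArr s + 1 + k) (2 * (4 * g)) with h' | h'
    · have e : (posArr s + 1 + k) % (4 * g) = posArr s + 1 + k - 4 * g := by
        rw [Nat.mod_eq_sub_mod h, Nat.mod_eq_of_lt (by omega)]
      rw [e]
      have : posArr s + 1 + k - 4 * g + 4 * g - (posArr s + 1) = k := by omega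
      rw [this, Nat.mod_eq_of_lt hk]
    · have e : posArr s + 1 + k = 2 * (4 * g) := by omega
      omega

lemma suc_lam {g : ℕ} (hg : 0 < g) (l : Letter g) : suc l = lam hg (posArr l + 1) :=
  posLv_inj (by rw [posLv_lam, posLv_suc])

lemma gap_suc {g : ℕ} (l : Letter g) : gapN l (suc l) = 0 := by
  have hg : 0 < g := by have := idx_lt l; omega
  have := gap_lam hg l 0 (by omega)
  rwa [suc_lam hg]

lemma eq_suc_of_gap {g : ℕ} {s t : Letter g} (h : gapN s t = 0) : t = suc s := by
  have hg : 0 < g := by have := idx_lt s; omega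
  rw [lam_gap hg s t, h, suc_lam hg, Nat.add_zero]

lemma gap_eq_of {g : ℕ} {s t t' : Letter g} (h : gapN s t = gapN s t') : t = t' := by
  have hg : 0 < g := by have := idx_lt s; omega
  rw [lam_gap hg s t, h, ← lam_gap hg s t']

/-- consecutive position: suc (inv (lam p)) = lam (p+1) -/
lemma suc_inv_lam {g : ℕ} (hg : 0 < g) (p : ℕ) : suc (inv (lam hg p)) = lam hg (p + 1) := by
  apply posLv_inj
  rw [posLv_suc, posArr_eq, inv_inv', posLv_lam, posLv_lam, Nat.mod_add_mod]


set_option linter.unusedSectionVars false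

/-- right action of the surface group -/
class RAct (g : ℕ) (X : Type) where
  rt : X → Gamma g → X
  rt_one : ∀ x, rt x 1 = x
  rt_mul : ∀ x a b, rt (rt x a) b = rt x (a * b)

infixl:70 " ⋆ " => RAct.rt

instance instRActGamma (g : ℕ) : RAct g (Gamma g) where
  rt x a := x * a
  rt_one := mul_one
  rt_mul := mul_assoc

instance instRActCos (g : ℕ) (J : Subgroup (Gamma g)) : RAct g (Cos g J) where
  rt x a := rmul g J a x
  rt_one x := by
    induction x using Quotient.inductionOn with | _ x =>
    exact congrArg (Quotient.mk _) (mul_one x)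
  rt_mul x a b := by
    induction x using Quotient.inductionOn with | _ x =>
    exact congrArg (Quotient.mk _) (mul_assoc x a b)

section
variable {g : ℕ} {X Y : Type} [RAct g X] [RAct g Y]

@[simp] lemma rt_one (x : X) : x ⋆ (1 : Gamma g) = x := RAct.rt_one x
lemma rt_mul (x : X) (a b : Gamma g) : x ⋆ a ⋆ b = x ⋆ (a * b) := RAct.rt_mul x a b
@[simp] lemma rt_cancel (x : X) (a : Gamma g) : x ⋆ a ⋆ a⁻¹ = x := by rw [rt_mul]; simp
@[simp] lemma rt_cancel' (x : X) (a : Gamma g) : x ⋆ a⁻¹ ⋆ a = x := by rw [rt_mul]; simp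
lemma rt_eq_iff (x y : X) (a : Gamma g) : x ⋆ a = y ↔ x = y ⋆ a⁻¹ := by
  constructor
  · rintro rfl; simp
  · rintro rfl; simp
@[simp] lemma rt_Gamma (x a : Gamma g) : x ⋆ a = x * a := rfl
lemma rt_inj {x y : X} {a : Gamma g} (h : x ⋆ a = y ⋆ a) : x = y := by
  rw [rt_eq_iff] at h; simpa using h
@[simp] lemma rt_letter_inv (x : X) (ℓ : Letter g) : x ⋆ letterG ℓ ⋆ letterG (inv ℓ) = x := by
  rw [letterG_inv]; simp

def Eqv (g : ℕ) {X Y : Type} [RAct g X] [RAct g Y] (φ : X → Y) : Prop :=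
  ∀ x (a : Gamma g), φ (x ⋆ a) = φ x ⋆ a

lemma Eqv_mk (C : Subgroup (Gamma g)) : Eqv g (mkCos g C) := fun _ _ => rfl

lemma Eqv_cover {C J : Subgroup (Gamma g)} (h : C ≤ J) : Eqv g (coverMapV h) := by
  intro x a
  induction x using Quotient.inductionOn with | _ x => rfl

lemma cover_mk {C J : Subgroup (Gamma g)} (h : C ≤ J) (x : Gamma g) :
    coverMapV h (mkCos g C x) = mkCos g J x := rfl

lemma mk_eq {C : Subgroup (Gamma g)} {x y : Gamma g} :
    mkCos g C x = mkCos g C y ↔ y * x⁻¹ ∈ C := by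
  unfold mkCos
  rw [Quotient.eq]
  exact QuotientGroup.rightRel_apply

lemma mk_rt {C : Subgroup (Gamma g)} (x a : Gamma g) : mkCos g C x ⋆ a = mkCos g C (x * a) := rfl

abbrev Ch1 (g : ℕ) (X : Type) := X × Fin (2 * g) →₀ ℤ

def dch (x : X) (ℓ : Letter g) : Ch1 g X :=
  if ℓ.2 then Finsupp.single (x, ℓ.1) 1 else - Finsupp.single (x ⋆ letterG ℓ, ℓ.1) 1

def ch : X → List (Letter g) → Ch1 g X
  | _, [] => 0
  | x, ℓ :: w => dch x ℓ + ch (x ⋆ letterG ℓ) w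

@[simp] lemma ch_nil (x : X) : ch x ([] : List (Letter g)) = 0 := rfl
lemma ch_cons (x : X) (ℓ : Letter g) (w) : ch x (ℓ :: w) = dch x ℓ + ch (x ⋆ letterG ℓ) w := rfl
lemma ch_append (x : X) (w w' : List (Letter g)) :
    ch x (w ++ w') = ch x w + ch (x ⋆ wordG w) w' := by
  induction w generalizing x with
  | nil => simp
  | cons l w ih => simp [ch_cons, ih, add_assoc, rt_mul]

lemma dch_inv (x : X) (ℓ : Letter g) : dch (x ⋆ letterG ℓ) (inv ℓ) = - dch x ℓ := by
  rcases ℓ with ⟨i, b⟩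
  have := rt_letter_inv x (i, b)
  cases b
  · simp [dch, inv]
  · simp only [dch, inv, Bool.not_true] at *
    simp [this]

lemma ch_winv (x : X) (w : List (Letter g)) : ch (x ⋆ wordG w) (winv w) = - ch x w := by
  induction w generalizing x with
  | nil => simp [winv]
  | cons l w ih =>
    have e : winv (l :: w) = winv w ++ [inv l] := by simp [winv]
    rw [e, ch_append, wordG_cons, ← rt_mul, ih, wordG_winv, rt_cancel, ch_cons, dch_inv, ch_cons]
    simp

def val (k : X × Fin (2 * g) → ℤ) (x : X) (ℓ : Letter g) : ℤ :=
  if ℓ.2 then k (x, ℓ.1) else - k (x ⋆ letterG ℓ, ℓ.1)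

lemma val_inv (k : X × Fin (2 * g) → ℤ) (x : X) (ℓ : Letter g) :
    val k (x ⋆ letterG ℓ) (inv ℓ) = - val k x ℓ := by
  rcases ℓ with ⟨i, b⟩
  have := rt_letter_inv x (i, b)
  cases b
  · simp [val, inv]
  · simp only [val, inv, Bool.not_true] at *
    simp [this]

lemma val_pos (k : X × Fin (2 * g) → ℤ) (x : X) (i) : val k x (i, true) = k (x, i) := by simp [val]

@[simp] lemma val_add (k k' : X × Fin (2 * g) → ℤ) (x : X) (ℓ) :
    val (k + k') x ℓ = val k x ℓ + val k' x ℓ := by unfold val; split_ifs <;> simp; ring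
@[simp] lemma val_sub (k k' : X × Fin (2 * g) → ℤ) (x : X) (ℓ) :
    val (k - k') x ℓ = val k x ℓ - val k' x ℓ := by unfold val; split_ifs <;> simp; ring
@[simp] lemma val_neg (k : X × Fin (2 * g) → ℤ) (x : X) (ℓ) :
    val (-k) x ℓ = - val k x ℓ := by unfold val; split_ifs <;> simp
@[simp] lemma val_zero (x : X) (ℓ) :
    val (0 : X × Fin (2 * g) → ℤ) x ℓ = 0 := by unfold val; split_ifs <;> simp
@[simp] lemma val_smul (a : ℤ) (k : X × Fin (2 * g) → ℤ) (x : X) (ℓ) :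
    val (a • k) x ℓ = a * val k x ℓ := by unfold val; split_ifs <;> simp

open Classical in
lemma val_dch (x y : X) (ℓ m : Letter g) : val (dch x ℓ) y m =
    (if y = x ∧ m = ℓ then 1 else 0) - (if y ⋆ letterG m = x ∧ inv m = ℓ then 1 else 0) := by
  rcases ℓ with ⟨i, b⟩
  rcases m with ⟨j, c⟩
  have e1 : letterG ((i, false) : Letter g) = (letterG ((i, true) : Letter g))⁻¹ := by
    simp [letterG]
  cases b <;> cases c <;> simp only [val, dch, inv, Bool.not_true, Bool.not_false, if_true,
      Finsupp.coe_neg, Pi.neg_apply, Finsupp.single_apply, Prod.mk.injEq, and_true, and_false,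
      Bool.false_eq_true, if_false, reduceCtorEq, neg_neg, zero_sub, sub_zero]
  · by_cases h : i = j
    · subst h; simp only [and_true]
      by_cases h2 : x = y
      · subst h2; simp
      · rw [if_neg, if_neg]
        · exact fun h => h2 h.symm
        · exact fun h => h2 (rt_inj h)
    · rw [if_neg, if_neg]
      · exact fun h' => h h'.2.symm
      · exact fun h' => h h'.2
  · by_cases h : i = j
    · subst h; simp only [and_true]
      rw [e1, rt_eq_iff, inv_inv]
      simp only [eq_comm]
    · rw [if_neg, if_neg]
      · exact fun h' => h h'.2.symm
      · exact fun h' => h h'.2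
  · congr 1; simp only [eq_comm]
  · simp only [eq_comm]

/-- left face of a dart -/
def L (x : X) (ℓ : Letter g) : X := x ⋆ (P g (idx ℓ))⁻¹
/-- right face of a dart -/
def R (x : X) (ℓ : Letter g) : X := L (x ⋆ letterG ℓ) (inv ℓ)

lemma P_suc (ℓ : Letter g) : P g (idx (suc ℓ)) = P g (idx ℓ) * letterG ℓ := by
  have h := P_succ (idx ℓ) (idx_lt ℓ)
  rw [rl_idx] at h
  rw [← h, idx_suc]
  rcases Nat.lt_or_ge (idx ℓ + 1) (4 * g) with h | h
  · rw [Nat.mod_eq_of_lt h]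
  · have : idx ℓ + 1 = 4 * g := by have := idx_lt ℓ; omega
    rw [this, Nat.mod_self, P_last, P_zero]

lemma L_suc (x : X) (ℓ : Letter g) : L (x ⋆ letterG ℓ) (suc ℓ) = L x ℓ := by
  unfold L; rw [P_suc, rt_mul]; simp

lemma R_lam (hg : 0 < g) (x : X) (p : ℕ) : R x (lam hg p) = L x (lam hg (p + 1)) := by
  rw [R, ← L_suc (x ⋆ _), rt_letter_inv, suc_inv_lam]

lemma R_inv (x : X) (ℓ : Letter g) : R (x ⋆ letterG ℓ) (inv ℓ) = L x ℓ := by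
  rw [R, rt_letter_inv, inv_inv']

def bd (g : ℕ) {X : Type} [RAct g X] : (X →₀ ℤ) →ₗ[ℤ] Ch1 g X :=
  Finsupp.linearCombination ℤ (fun f => ch f (relatorWord g))

lemma bd_single (f : X) (a : ℤ) : bd g (Finsupp.single f a) = a • ch f (relatorWord g) := by
  simp [bd]

open Classical in
lemma val_relator (f x : X) (ℓ : Letter g) : val (ch f (relatorWord g)) x ℓ =
    (if f = L x ℓ then 1 else 0) - (if f = R x ℓ then 1 else 0) := by
  have key : ∀ k, k ≤ 4 * g → val (ch f ((relatorWord g).take k)) x ℓ =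
      (if idx ℓ < k ∧ f = L x ℓ then 1 else 0) - (if idx (inv ℓ) < k ∧ f = R x ℓ then 1 else 0) := by
    intro k
    induction k with
    | zero => intro _; simp
    | succ k ih =>
      intro hk
      have hk' : k < 4 * g := hk
      rw [List.take_add_one, ch_append, List.getElem?_eq_getElem (by rwa [rel_length]), rel_get]
      simp only [Option.toList_some, ch_cons, ch_nil, add_zero, Finsupp.coe_add, val_add]
      rw [ih (by omega), val_dch]
      have hm : ∀ m : Letter g, (m = rl k hk' ↔ idx m = k) := fun m =>
        ⟨fun h => by rw [h, idx_rl], fun h => idx_inj (by rw [h, idx_rl])⟩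
      change _ + ((if x = f ⋆ P g k ∧ _ then (1 : ℤ) else 0) - (if _ = f ⋆ P g k ∧ _ then 1 else 0)) = _
      have c1 : ∀ (y : X) (m : Letter g), (if idx m < k + 1 ∧ f = L y m then (1 : ℤ) else 0) =
          (if idx m < k ∧ f = L y m then 1 else 0) + (if y = f ⋆ P g k ∧ m = rl k hk' then 1 else 0) := by
        intro y m
        by_cases h : idx m = k
        · have : (y = f ⋆ P g k) ↔ f = L y m := by
            unfold L; rw [h, eq_comm, rt_eq_iff]
          simp [hm, h, this]
        · have : idx m < k + 1 ↔ idx m < k := by omega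
          simp [hm, h, this]
      unfold R
      rw [c1, c1]; exact sub_add_sub_comm _ _ _ _
  have := key (4 * g) le_rfl
  rw [List.take_of_length_le (by rw [rel_length])] at this
  rw [this]; simp [idx_lt]

lemma val_bd (n : X →₀ ℤ) (x : X) (ℓ : Letter g) :
    val (bd g n) x ℓ = n (L x ℓ) - n (R x ℓ) := by
  classical
  induction n using Finsupp.induction_linear with
  | zero => simp
  | add a b ha hb => rw [map_add, Finsupp.coe_add, val_add, ha, hb]; simp; ring
  | single f a =>
    rw [bd_single, Finsupp.coe_smul, val_smul, val_relator]
    simp only [Finsupp.single_apply]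
    split_ifs <;> simp

/-- divergence -/
def dv (k : X × Fin (2 * g) → ℤ) (a : X) : ℤ := ∑ ℓ : Letter g, val k a ℓ

@[simp] lemma dv_add (k k' : X × Fin (2 * g) → ℤ) (a : X) : dv (k + k') a = dv k a + dv k' a := by
  simp [dv, Finset.sum_add_distrib]
@[simp] lemma dv_sub (k k' : X × Fin (2 * g) → ℤ) (a : X) : dv (k - k') a = dv k a - dv k' a := by
  simp [dv, Finset.sum_sub_distrib]
@[simp] lemma dv_zero (a : X) : dv (0 : X × Fin (2 * g) → ℤ) a = 0 := by simp [dv]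
@[simp] lemma dv_smul (c : ℤ) (k : X × Fin (2 * g) → ℤ) (a : X) : dv (c • k) a = c * dv k a := by
  simp only [dv, Finset.mul_sum, val_smul]

open Classical in
lemma dv_dch (x : X) (ℓ : Letter g) (a : X) : dv (dch x ℓ) a =
    (if a = x then 1 else 0) - (if a = x ⋆ letterG ℓ then 1 else 0) := by
  simp only [dv, val_dch, Finset.sum_sub_distrib]
  congr 1
  · by_cases h : a = x <;> simp [h]
  · rw [Finset.sum_eq_single (inv ℓ)]
    · rw [inv_inv']; simp only [and_true, rt_eq_iff, letterG_inv, inv_inv]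
    · intro b _ hb
      rw [if_neg]
      rintro ⟨_, h⟩
      apply hb; rw [← h, inv_inv']
    · simp

open Classical in
lemma dv_ch (x : X) (w : List (Letter g)) (a : X) : dv (ch x w) a =
    (if a = x then 1 else 0) - (if a = x ⋆ wordG w then 1 else 0) := by
  induction w generalizing x with
  | nil => simp
  | cons l w ih => rw [ch_cons, Finsupp.coe_add, dv_add, dv_dch, ih, wordG_cons, rt_mul]; ring

lemma dv_bd (n : X →₀ ℤ) (a : X) : dv (bd g n) a = 0 := by
  classical
  induction n using Finsupp.induction_linear with
  | zero => simp
  | add a b ha hb => rw [map_add, Finsupp.coe_add, dv_add, ha, hb]; simp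
  | single f a =>
    rw [bd_single, Finsupp.coe_smul, dv_smul, dv_ch, wordG_relator]; simp

/-! push-forward -/
def push (g : ℕ) (φ : X → Y) (z : Ch1 g X) : Ch1 g Y := Finsupp.mapDomain (Prod.map φ id) z

lemma push_add (φ : X → Y) (z z' : Ch1 g X) : push g φ (z + z') = push g φ z + push g φ z' :=
  Finsupp.mapDomain_add

lemma push_neg (φ : X → Y) (z : Ch1 g X) : push g φ (-z) = - push g φ z :=
  map_neg (Finsupp.mapDomain.addMonoidHom (Prod.map φ id)) z
lemma push_sub (φ : X → Y) (z z' : Ch1 g X) : push g φ (z - z') = push g φ z - push g φ z' :=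
  map_sub (Finsupp.mapDomain.addMonoidHom (Prod.map φ id)) z z'

lemma push_dch {φ : X → Y} (h : Eqv g φ) (x : X) (ℓ : Letter g) :
    push g φ (dch x ℓ) = dch (φ x) ℓ := by
  unfold dch
  split_ifs
  · simp [push]
  · rw [push_neg, ← h]; simp [push]

lemma push_ch {φ : X → Y} (h : Eqv g φ) (x : X) (w : List (Letter g)) :
    push g φ (ch x w) = ch (φ x) w := by
  induction w generalizing x with
  | nil => simp [push]
  | cons l w ih => rw [ch_cons, push_add, ih, push_dch h, h, ch_cons]

lemma push_bd {φ : X → Y} (h : Eqv g φ) (n : X →₀ ℤ) :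
    push g φ (bd g n) = bd g (Finsupp.mapDomain φ n) := by
  induction n using Finsupp.induction_linear with
  | zero => simp [push]
  | add a b ha hb => rw [map_add, push_add, ha, hb, Finsupp.mapDomain_add, map_add]
  | single f a =>
    rw [Finsupp.mapDomain_single, bd_single, bd_single, ← push_ch h]
    simp [push, Finsupp.mapDomain_smul]

lemma val_comp {φ : X → Y} (h : Eqv g φ) (k : Y × Fin (2 * g) → ℤ) (x : X) (ℓ : Letter g) :
    val (fun e => k (φ e.1, e.2)) x ℓ = val k (φ x) ℓ := by
  unfold val; simp only [h x]

lemma L_comp {φ : X → Y} (h : Eqv g φ) (x : X) (ℓ : Letter g) : φ (L x ℓ) = L (φ x) ℓ := by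
  unfold L; rw [h]
lemma R_comp {φ : X → Y} (h : Eqv g φ) (x : X) (ℓ : Letter g) : φ (R x ℓ) = R (φ x) ℓ := by
  unfold R; rw [L_comp h, h]

/-! norm -/
def nm (z : Ch1 g X) : ℤ := z.sum fun _ a => |a|

lemma nm_eq {z : Ch1 g X} {S : Finset (X × Fin (2 * g))} (h : z.support ⊆ S) :
    nm z = ∑ e ∈ S, |z e| :=
  Finsupp.sum_of_support_subset _ h _ (by simp)

lemma nm_nonneg (z : Ch1 g X) : 0 ≤ nm z := Finset.sum_nonneg fun _ _ => abs_nonneg _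

lemma nm_add (z z' : Ch1 g X) : nm (z + z') ≤ nm z + nm z' := by
  classical
  rw [nm_eq (S := z.support ∪ z'.support) Finsupp.support_add,
    nm_eq (z := z) (S := z.support ∪ z'.support) Finset.subset_union_left,
    nm_eq (z := z') (S := z.support ∪ z'.support) Finset.subset_union_right, ← Finset.sum_add_distrib]
  exact Finset.sum_le_sum fun e _ => abs_add_le _ _

@[simp] lemma nm_neg (z : Ch1 g X) : nm (-z) = nm z := by
  rw [nm_eq (z := -z) (S := z.support) (by simp), nm_eq (z := z) (S := z.support) le_rfl]; simp

lemma nm_sub_comm (z z' : Ch1 g X) : nm (z - z') = nm (z' - z) := by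
  rw [← nm_neg, neg_sub]

@[simp] lemma nm_zero : nm (0 : Ch1 g X) = 0 := by simp [nm]

@[simp] lemma nm_smul (c : ℤ) (z : Ch1 g X) : nm (c • z) = |c| * nm z := by
  rw [nm_eq (z := c • z) (S := z.support) Finsupp.support_smul,
    nm_eq (z := z) (S := z.support) le_rfl, Finset.mul_sum]; simp [abs_mul]

lemma nm_dch (x : X) (ℓ : Letter g) : nm (dch x ℓ) = 1 := by
  unfold dch; split_ifs
  · simp [nm]
  · rw [nm_neg]; simp [nm]

lemma nm_ch (x : X) (w : List (Letter g)) : nm (ch x w) ≤ w.length := by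
  induction w generalizing x with
  | nil => simp
  | cons l w ih =>
    rw [ch_cons, List.length_cons]; push_cast
    have := nm_add (dch x l) (ch (x ⋆ letterG l) w)
    rw [nm_dch] at this
    linarith [ih (x ⋆ letterG l)]

lemma nm_push (φ : X → Y) (z : Ch1 g X) : nm (push g φ z) ≤ nm z := by
  classical
  induction z using Finsupp.induction with
  | zero => simp [push]
  | single_add e a z he ha ih =>
    rw [push_add]
    have h1 : nm (Finsupp.single e a + z) = |a| + nm z := by
      unfold nm
      rw [Finsupp.sum_add_index_of_disjoint]
      · simp
      · rw [Finset.disjoint_left]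
        intro b hb hb'
        have : b = e := by
          have := Finsupp.support_single_subset hb; simpa using this
        subst this; exact he hb'
    rw [h1]
    refine (nm_add _ _).trans (add_le_add ?_ ih)
    simp [push, nm]

lemma ext_val {k k' : X × Fin (2 * g) → ℤ} (h : ∀ x ℓ, val k x ℓ = val k' x ℓ) : k = k' := by
  funext ⟨x, i⟩
  have := h x (i, true)
  simpa [val] using this
end



section
variable {g : ℕ} {X Y : Type} [RAct g X] [RAct g Y]

def Sh (w : List (Letter g)) : Prop :=
  wordG w ≠ 1 ∧ ∀ (w' : List (Letter g)) (y : Gamma g), y * wordG w' * y⁻¹ = wordG w →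
    w.length ≤ w'.length

lemma Sh_conj {w v : List (Letter g)} (h : Sh w) (y : Gamma g) (hy : y * wordG v * y⁻¹ = wordG w)
    (hl : v.length ≤ w.length) : Sh v := by
  refine ⟨fun h1 => h.1 (by rw [← hy, h1]; simp), fun w' y' h' => hl.trans (h.2 w' (y * y') ?_)⟩
  rw [← hy, ← h']; group

lemma Sh_rot {a b : List (Letter g)} (h : Sh (a ++ b)) : Sh (b ++ a) :=
  Sh_conj h (wordG a) (by simp [mul_assoc]) (by simp; omega)

lemma Sh_winv {w : List (Letter g)} (h : Sh w) : Sh (winv w) := by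
  refine ⟨fun h1 => h.1 (by rwa [wordG_winv, inv_eq_one] at h1), fun w' y hy => ?_⟩
  have := h.2 (winv w') y (by rw [wordG_winv] at *; rw [← inv_inj, ← hy]; group)
  simpa using this

lemma Sh_ne {w : List (Letter g)} (h : Sh w) : w ≠ [] := by
  rintro rfl; exact h.1 rfl

def E1 (x : X) (ℓ : Letter g) : Prop :=
  ∃ w', Sh (ℓ :: w') ∧ x ⋆ wordG (ℓ :: w') = x

lemma E1_mem {x : X} {a b : List (Letter g)} {ℓ : Letter g} (h : Sh (a ++ ℓ :: b))
    (hx : x ⋆ wordG (a ++ ℓ :: b) = x) : E1 (x ⋆ wordG a) ℓ := by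
  refine ⟨b ++ a, Sh_rot h, ?_⟩
  have : wordG (ℓ :: (b ++ a)) = (wordG a)⁻¹ * wordG (a ++ ℓ :: b) * wordG a := by simp [mul_assoc]
  rw [this, ← rt_mul, ← rt_mul, rt_cancel, hx]

lemma E1_rev {x : X} {ℓ : Letter g} (h : E1 x ℓ) : E1 (x ⋆ letterG ℓ) (inv ℓ) := by
  obtain ⟨w, hs, hx⟩ := h
  have e : winv (ℓ :: w) = winv w ++ [inv ℓ] := by simp [winv]
  have h2 := Sh_winv hs
  rw [e] at h2
  have h3 := Sh_rot h2
  refine ⟨winv w, h3, ?_⟩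
  have : letterG ℓ * wordG (inv ℓ :: winv w) = (wordG (ℓ :: w))⁻¹ * letterG ℓ := by
    simp [wordG_winv, letterG_inv]
  rw [rt_mul, this, ← rt_mul]
  rw [rt_eq_iff] at hx
  rw [← hx]

lemma E1_push {φ : X → Y} (hφ : Eqv g φ) {x : X} {ℓ : Letter g} (h : E1 x ℓ) : E1 (φ x) ℓ := by
  obtain ⟨w, hs, hx⟩ := h
  exact ⟨w, hs, by rw [← hφ, hx]⟩

lemma exists_bd (x : X) {w w' : List (Letter g)} (h : wordG w = wordG w') :
    ∃ n, ch x w - ch x w' = bd g n := by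
  have := word_invariant (fun w => (Submodule.Quotient.mk (ch x w) :
    Ch1 g X ⧸ LinearMap.range (bd g (X := X)))) ?_ ?_ h
  · rw [Submodule.Quotient.eq] at this
    obtain ⟨n, hn⟩ := this
    exact ⟨n, hn.symm⟩
  · intro a b l
    have : ch x (a ++ l :: inv l :: b) = ch x (a ++ b) := by
      rw [ch_append, ch_append, ch_cons, ch_cons, dch_inv, rt_letter_inv]; simp
    simp only [this]
  · intro a b
    rw [Submodule.Quotient.eq]
    refine ⟨Finsupp.single (x ⋆ wordG a) 1, ?_⟩
    rw [bd_single, ch_append, ch_append, ch_append, wordG_append, wordG_relator]; simp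

lemma conj_bd {x : X} {w w' : List (Letter g)} {y : Gamma g} (hx : x ⋆ wordG w = x)
    (h : y * wordG w' * y⁻¹ = wordG w) : ∃ n, ch x w - ch (x ⋆ y) w' = bd g n := by
  obtain ⟨v, rfl⟩ := exists_word y
  obtain ⟨n, hn⟩ := exists_bd x (w := w) (w' := v ++ w' ++ winv v) (by
    rw [← h]; simp [wordG_winv, mul_assoc])
  refine ⟨n, ?_⟩
  rw [← hn, ch_append, ch_append, wordG_append]
  have : x ⋆ (wordG v * wordG w') = x ⋆ wordG v := by
    have e : wordG v * wordG w' = wordG w * wordG v := by rw [← h]; group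
    rw [e, ← rt_mul, hx]
  rw [this, ch_winv]; abel

/-- adding to one edge -/
lemma nm_edge (z : Ch1 g X) (e : X × Fin (2 * g)) (c : ℤ) :
    nm (z + Finsupp.single e c) = nm z - |z e| + |z e + c| := by
  classical
  rw [nm_eq (z := z) (S := insert e z.support) (Finset.subset_insert _ _),
    nm_eq (z := z + _) (S := insert e z.support), ← Finset.add_sum_erase _ _ (Finset.mem_insert_self e _),
    ← Finset.add_sum_erase _ (fun e => |z e|) (Finset.mem_insert_self e _)]
  · have : ∑ x ∈ (insert e z.support).erase e, |(z + Finsupp.single e c) x| =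
        ∑ x ∈ (insert e z.support).erase e, |z x| := by
      apply Finset.sum_congr rfl
      intro x hx
      have : e ≠ x := fun h => by subst h; simp at hx
      simp [this]
    rw [this]; simp; ring
  · intro x hx
    have := Finsupp.support_add hx
    rw [Finset.mem_union] at this
    rcases this with h | h
    · exact Finset.mem_insert_of_mem h
    · have := Finsupp.support_single_subset h
      simp at this; simp [this]

lemma nm_sub_dch (z : Ch1 g X) (x : X) (ℓ : Letter g) :
    nm (z - dch x ℓ) = nm z - |val z x ℓ| + |val z x ℓ - 1| := by
  unfold dch val
  split_ifs
  · rw [sub_eq_add_neg, ← Finsupp.single_neg, nm_edge]; rfl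
  · rw [sub_neg_eq_add, nm_edge, abs_neg, ← abs_neg (_ - 1)]; congr 2; ring

lemma nm_sub_dch_pos {z : Ch1 g X} {x : X} {ℓ : Letter g} (h : 0 < val z x ℓ) :
    nm (z - dch x ℓ) = nm z - 1 := by
  rw [nm_sub_dch, abs_of_pos h, abs_of_nonneg (by omega)]; ring

lemma nm_sub_dch_neg {z : Ch1 g X} {x : X} {ℓ : Letter g} (h : val z x ℓ ≤ 0) :
    nm (z - dch x ℓ) = nm z + 1 := by
  rw [nm_sub_dch, abs_of_nonpos h, abs_of_neg (by omega)]; ring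

open Classical in
lemma flow (N : ℕ) : ∀ (z : Ch1 g X) (a b : X), nm z ≤ N →
    (∀ v, dv z v = (if v = a then 1 else 0) - (if v = b then 1 else 0)) →
    ∃ w : List (Letter g), a ⋆ wordG w = b ∧ nm (z - ch a w) + w.length = nm z := by
  induction N with
  | zero =>
    intro z a b hz hd
    by_cases hab : a = b
    · exact ⟨[], by simp [hab], by simp⟩
    exfalso
    have h0 : z = 0 := by
      ext e
      have h1 : nm z = 0 := le_antisymm (by simpa using hz) (nm_nonneg z)
      by_contra he
      have h2 : |z e| ≤ nm z :=
        Finset.single_le_sum (f := fun e => |z e|) (fun _ _ => abs_nonneg _) (Finsupp.mem_support_iff.2 he)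
      have : 0 < |z e| := abs_pos.2 he
      omega
    have := hd a
    simp [h0, hab] at this
  | succ N ih =>
    intro z a b hz hd
    by_cases hab : a = b
    · exact ⟨[], by simp [hab], by simp⟩
    have h1 := hd a
    simp only [if_true, hab, if_false, sub_zero] at h1
    have : ∃ ℓ ∈ (Finset.univ : Finset (Letter g)), 0 < val z a ℓ := by
      apply Finset.exists_lt_of_sum_lt
      simp only [Finset.sum_const_zero]
      unfold dv at h1
      omega
    obtain ⟨ℓ, _, hℓ⟩ := this
    have hn := nm_sub_dch_pos hℓ
    obtain ⟨w, hw, hw'⟩ := ih (z - dch a ℓ) (a ⋆ letterG ℓ) b (by push_cast at hz; omega) (by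
      intro v
      rw [Finsupp.coe_sub, dv_sub, hd, dv_dch]; ring)
    refine ⟨ℓ :: w, by rw [wordG_cons, ← rt_mul, hw], ?_⟩
    rw [ch_cons, ← sub_sub, List.length_cons]; push_cast; omega

/-- extraction of a closed walk through a positive dart -/
lemma extract {z : Ch1 g X} (hz : ∀ v, dv z v = 0) {x : X} {ℓ : Letter g} (h : 0 < val z x ℓ) :
    ∃ w, x ⋆ wordG (ℓ :: w) = x ∧ nm (z - ch x (ℓ :: w)) + (ℓ :: w).length = nm z := by
  classical
  obtain ⟨w, hw, hw'⟩ := flow (nm z).toNat (z - dch x ℓ) (x ⋆ letterG ℓ) x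
    (by rw [nm_sub_dch_pos h]; have := nm_nonneg z; omega) (by
      intro v; rw [Finsupp.coe_sub, dv_sub, hz, dv_dch]; ring)
  refine ⟨w, by rw [wordG_cons, ← rt_mul, hw], ?_⟩
  rw [nm_sub_dch_pos h] at hw'
  rw [ch_cons, ← sub_sub, List.length_cons]; push_cast; omega

def Mini (z : Ch1 g X) : Prop := ∀ n, nm z ≤ nm (z - bd g n)

lemma mini_E1 {z : Ch1 g X} (hz : ∀ v, dv z v = 0) (hm : Mini z) {x : X} {ℓ : Letter g}
    (h : 0 < val z x ℓ) : E1 x ℓ := by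
  obtain ⟨w, hw, hl⟩ := extract hz h
  refine ⟨w, ⟨?_, ?_⟩, hw⟩
  · intro h1
    obtain ⟨n, hn⟩ := exists_bd x (w := ℓ :: w) (w' := []) h1
    have := hm n
    rw [← hn] at this
    simp only [ch_nil, sub_zero] at this
    simp only [List.length_cons] at hl
    push_cast at hl; omega
  · intro w' y hy
    obtain ⟨n, hn⟩ := conj_bd hw hy
    have h1 := hm n
    have h2 : z - bd g n = (z - ch x (ℓ :: w)) + ch (x ⋆ y) w' := by rw [← hn]; abel
    rw [h2] at h1
    have h3 := nm_add (z - ch x (ℓ :: w)) (ch (x ⋆ y) w')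
    have h4 := nm_ch (x ⋆ y) w'
    omega

lemma mini_E1' {z : Ch1 g X} (hz : ∀ v, dv z v = 0) (hm : Mini z) {x : X} {ℓ : Letter g}
    (h : val z x ℓ ≠ 0) : E1 x ℓ := by
  rcases lt_or_gt_of_ne h with h | h
  · have := mini_E1 hz hm (x := x ⋆ letterG ℓ) (ℓ := inv ℓ) (by rw [val_inv]; omega)
    have := E1_rev this
    simpa using this
  · exact mini_E1 hz hm h

/-! decomposition -/
open Classical in
lemma decompose (N : ℕ) : ∀ z : Ch1 g X, nm z ≤ N → (∀ v, dv z v = 0) →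
    ∃ ps : List (X × List (Letter g)), (∀ p ∈ ps, p.1 ⋆ wordG p.2 = p.1) ∧
      z = (ps.map fun p => ch p.1 p.2).sum ∧ ((ps.map fun p => p.2.length).sum : ℤ) = nm z := by
  induction N with
  | zero =>
    intro z hz _
    have h0 : z = 0 := by
      ext e
      have h1 : nm z = 0 := le_antisymm (by simpa using hz) (nm_nonneg z)
      by_contra he
      have h2 : |z e| ≤ nm z :=
        Finset.single_le_sum (f := fun e => |z e|) (fun _ _ => abs_nonneg _) (Finsupp.mem_support_iff.2 he)
      have : 0 < |z e| := abs_pos.2 he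
      omega
    exact ⟨[], by simp, by simp [h0], by simp [h0]⟩
  | succ N ih =>
    intro z hz hd
    by_cases h0 : z = 0
    · exact ⟨[], by simp, by simp [h0], by simp [h0]⟩
    obtain ⟨⟨x, i⟩, he⟩ := Finsupp.ne_iff.1 h0
    have : ∃ y ℓ, 0 < val z y ℓ := by
      rw [Finsupp.coe_zero, Pi.zero_apply] at he
      rcases lt_or_gt_of_ne he with h | h
      · refine ⟨x ⋆ letterG (i, true), inv (i, true), ?_⟩
        rw [val_inv, val_pos]; omega
      · exact ⟨x, (i, true), by rwa [val_pos]⟩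
    obtain ⟨y, ℓ, hy⟩ := this
    obtain ⟨w, hw, hl⟩ := extract hd hy
    obtain ⟨ps, h1, h2, h3⟩ := ih (z - ch y (ℓ :: w)) (by
      simp only [List.length_cons] at hl; push_cast at hl hz; omega) (by
      intro v; rw [Finsupp.coe_sub, dv_sub, hd, dv_ch, hw]; simp)
    refine ⟨(y, ℓ :: w) :: ps, ?_, ?_, ?_⟩
    · intro p hp
      rcases List.mem_cons.1 hp with rfl | hp
      · exact hw
      · exact h1 p hp
    · rw [List.map_cons, List.sum_cons, ← h2]; abel
    · rw [List.map_cons, List.sum_cons]; push_cast at *; omega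

/-! Hermite -/
def hq (n : X →₀ ℤ) (k : ℕ) (i : Fin k) : X →₀ ℤ :=
  n.mapRange (fun a => (a + (i : ℕ)) / (k : ℤ)) (by
    have := i.2; rw [zero_add]; exact Int.ediv_eq_zero_of_lt (by positivity) (by exact_mod_cast this))

lemma herm (k : ℕ) (hk : 0 < k) (a : ℤ) : ∑ i : Fin k, (a + (i : ℕ)) / (k : ℤ) = a := by
  rw [Fin.sum_univ_eq_sum_range (fun i => (a + (i : ℕ)) / (k : ℤ)) k]
  have hk' : (k : ℤ) ≠ 0 := by exact_mod_cast hk.ne'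
  have step : ∀ a : ℤ, ∑ i ∈ Finset.range k, (a + 1 + (i : ℕ)) / (k : ℤ) =
      ∑ i ∈ Finset.range k, (a + (i : ℕ)) / (k : ℤ) + 1 := by
    intro a
    have h1 := Finset.sum_range_succ (fun i : ℕ => (a + (i : ℕ)) / (k : ℤ)) k
    have h2 := Finset.sum_range_succ' (fun i : ℕ => (a + (i : ℕ)) / (k : ℤ)) k
    rw [h1] at h2
    rw [Int.add_ediv_of_dvd_right (dvd_refl _), Int.ediv_self hk'] at h2
    have h3 : ∑ i ∈ Finset.range k, (a + 1 + (i : ℕ)) / (k : ℤ) =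
      ∑ i ∈ Finset.range k, (a + ((i + 1 : ℕ) : ℤ)) / (k : ℤ) := by
      apply Finset.sum_congr rfl; intro i _; congr 1; push_cast; ring
    rw [h3]; simp only [Nat.cast_zero, add_zero] at h2; omega
  induction a using Int.induction_on with
  | zero =>
    apply Finset.sum_eq_zero
    intro i hi
    rw [zero_add]
    exact Int.ediv_eq_zero_of_lt (by positivity) (by exact_mod_cast Finset.mem_range.1 hi)
  | succ a ih => rw [step, ih]
  | pred a ih =>
    have := step (-(a : ℤ) - 1)
    rw [sub_add_cancel, ih] at this; omega

lemma herm_abs (k : ℕ) (hk : 0 < k) (z A B : ℤ) :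
    ∑ i : Fin k, |z - ((A + (i : ℕ)) / (k : ℤ) - (B + (i : ℕ)) / (k : ℤ))| = |k * z - (A - B)| := by
  have hk' : (0 : ℤ) < k := by exact_mod_cast hk
  have e : ∑ i : Fin k, (z - ((A + (i : ℕ)) / (k : ℤ) - (B + (i : ℕ)) / (k : ℤ))) = k * z - (A - B) := by
    rw [Finset.sum_sub_distrib, Finset.sum_sub_distrib, herm k hk, herm k hk]; simp
  rcases le_total (A - B) (k * z) with h | h
  · rw [abs_of_nonneg (by omega), ← e]
    apply Finset.sum_congr rfl
    intro i _
    apply abs_of_nonneg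
    have : (A + (i : ℕ)) / (k : ℤ) ≤ (B + (i : ℕ) + k * z) / (k : ℤ) :=
      Int.ediv_le_ediv hk' (by omega)
    rw [Int.add_mul_ediv_left _ _ hk'.ne'] at this
    omega
  · rw [abs_of_nonpos (by omega), ← e, ← Finset.sum_neg_distrib]
    apply Finset.sum_congr rfl
    intro i _
    apply abs_of_nonpos
    have : (B + (i : ℕ) + k * z) / (k : ℤ) ≤ (A + (i : ℕ)) / (k : ℤ) :=
      Int.ediv_le_ediv hk' (by omega)
    rw [Int.add_mul_ediv_left _ _ hk'.ne'] at this
    omega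

lemma hermite (k : ℕ) (hk : 0 < k) (z : Ch1 g X) (n : X →₀ ℤ) :
    ∑ i : Fin k, nm (z - bd g (hq n k i)) = nm ((k : ℤ) • z - bd g n) := by
  classical
  let S : Finset (X × Fin (2 * g)) := ((k : ℤ) • z - bd g n).support ∪
    Finset.univ.biUnion fun i : Fin k => (z - bd g (hq n k i)).support
  rw [nm_eq (S := S) Finset.subset_union_left]
  have : ∀ i : Fin k, nm (z - bd g (hq n k i)) = ∑ e ∈ S, |(z - bd g (hq n k i)) e| := fun i =>
    nm_eq (Finset.Subset.trans (Finset.subset_biUnion_of_mem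
      (fun i : Fin k => (z - bd g (hq n k i)).support) (Finset.mem_univ i)) Finset.subset_union_right)
  simp only [this]
  rw [Finset.sum_comm]
  apply Finset.sum_congr rfl
  rintro ⟨x, j⟩ _
  have hv : ∀ m : X →₀ ℤ, bd g m (x, j) = m (L x (j, true)) - m (R x (j, true)) := fun m => by
    rw [← val_bd, val_pos]
  simp only [Finsupp.coe_sub, Pi.sub_apply, hv, Finsupp.coe_smul, Pi.smul_apply, smul_eq_mul]
  rw [← herm_abs k hk]
  rfl

lemma hermite_ge (k : ℕ) (hk : 0 < k) (z : Ch1 g X) (c : ℤ) (h : ∀ n, c ≤ nm (z - bd g n))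
    (n : X →₀ ℤ) : k * c ≤ nm ((k : ℤ) • z - bd g n) := by
  rw [← hermite k hk]
  have := Finset.sum_le_sum (s := (Finset.univ : Finset (Fin k))) (f := fun _ => c)
    (g := fun i => nm (z - bd g (hq n k i))) (fun i _ => h _)
  simpa using this

lemma exists_min (z : Ch1 g X) : ∃ n, Mini (z - bd g n) := by
  classical
  have hne : ∃ m : ℕ, ∃ n : X →₀ ℤ, nm (z - bd g n) = m :=
    ⟨(nm z).toNat, 0, by have := nm_nonneg z; simp; omega⟩
  obtain ⟨n, hn⟩ := Nat.find_spec hne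
  refine ⟨n, fun m => ?_⟩
  rw [hn, sub_sub, ← map_add]
  have : Nat.find hne ≤ (nm (z - bd g (n + m))).toNat :=
    Nat.find_min' hne ⟨n + m, by have := nm_nonneg (z - bd g (n + m)); omega⟩
  have := nm_nonneg (z - bd g (n + m)); omega

lemma nocancel {x : X} {a b : List (Letter g)} {ℓ : Letter g}
    (h : nm (ch x (a ++ ℓ :: b)) = (a ++ ℓ :: b).length) :
    1 ≤ val (ch x (a ++ ℓ :: b)) (x ⋆ wordG a) ℓ := by
  by_contra hc
  have h1 := nm_sub_dch_neg (z := ch x (a ++ ℓ :: b)) (x := x ⋆ wordG a) (ℓ := ℓ) (by omega)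
  have h2 : ch x (a ++ ℓ :: b) - dch (x ⋆ wordG a) ℓ =
      ch x a + ch (x ⋆ wordG a ⋆ letterG ℓ) b := by
    rw [ch_append, ch_cons]; abel
  rw [h2, h] at h1
  have h3 := nm_add (ch x a) (ch (x ⋆ wordG a ⋆ letterG ℓ) b)
  have h4 := nm_ch x a
  have h5 := nm_ch (x ⋆ wordG a ⋆ letterG ℓ) b
  simp only [List.length_append, List.length_cons] at h1
  push_cast at h1
  omega

def wpow (w : List (Letter g)) (k : ℕ) : List (Letter g) := (List.replicate k w).flatten
lemma wpow_succ (w : List (Letter g)) (k : ℕ) : wpow w (k + 1) = w ++ wpow w k := by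
  simp [wpow, List.replicate_succ]
lemma wordG_wpow (w : List (Letter g)) (k : ℕ) : wordG (wpow w k) = wordG w ^ k := by
  induction k with
  | zero => simp [wpow]
  | succ k ih => rw [wpow_succ, wordG_append, ih, pow_succ']
lemma wpow_length (w : List (Letter g)) (k : ℕ) : (wpow w k).length = k * w.length := by
  simp [wpow]
lemma ch_wpow {x : X} {w : List (Letter g)} (h : x ⋆ wordG w = x) (k : ℕ) :
    ch x (wpow w k) = (k : ℤ) • ch x w := by
  induction k with
  | zero => simp [wpow]
  | succ k ih => rw [wpow_succ, ch_append, h, ih]; push_cast; rw [add_smul, one_smul, add_comm]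
end



section
variable {g : ℕ}

def sec (C : Subgroup (Gamma g)) (x : Cos g C) : Gamma g := Quotient.out x
lemma mk_sec (C : Subgroup (Gamma g)) (x : Cos g C) : mkCos g C (sec C x) = x := Quotient.out_eq x

def kw (C : Subgroup (Gamma g)) (x : Cos g C) (a : Gamma g) : C :=
  ⟨sec C x * a * (sec C (x ⋆ a))⁻¹, by
    rw [← mk_eq, mk_sec, ← mk_rt, mk_sec]⟩

lemma kw_mul (C : Subgroup (Gamma g)) (x : Cos g C) (a b : Gamma g) :
    kw C x (a * b) = kw C x a * kw C (x ⋆ a) b := by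
  ext
  simp only [kw, Subgroup.coe_mul, rt_mul]; group

lemma kw_one (C : Subgroup (Gamma g)) (x : Cos g C) : kw C x 1 = 1 := by
  ext; simp [kw]

variable {C : Subgroup (Gamma g)} {M : Type} [CommGroup M] (ψ : C →* M)

def kap : Ch1 g (Cos g C) →+ Additive M :=
  Finsupp.liftAddHom (fun e : Cos g C × Fin (2 * g) =>
    zmultiplesHom (Additive M) (Additive.ofMul (ψ (kw C e.1 (letterG (e.2, true))))))

lemma kap_single (e : Cos g C × Fin (2 * g)) (a : ℤ) : kap ψ (Finsupp.single e a) =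
    a • (Additive.ofMul (ψ (kw C e.1 (letterG (e.2, true))))) := by
  simp [kap]

lemma kap_dch (x : Cos g C) (ℓ : Letter g) :
    kap ψ (dch x ℓ) = Additive.ofMul (ψ (kw C x (letterG ℓ))) := by
  rcases ℓ with ⟨i, b⟩
  cases b
  · simp only [dch, Bool.false_eq_true, if_false, map_neg, kap_single, one_smul]
    rw [← ofMul_inv]
    congr 1
    rw [inv_eq_iff_mul_eq_one]
    have : letterG ((i, true) : Letter g) = (letterG ((i, false) : Letter g))⁻¹ := by simp [letterG]
    rw [mul_comm (ψ _), this, ← map_mul, ← kw_mul, mul_inv_cancel, kw_one, map_one]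
  · simp [dch, kap_single]

lemma kap_ch (x : Cos g C) (w : List (Letter g)) :
    kap ψ (ch x w) = Additive.ofMul (ψ (kw C x (wordG w))) := by
  induction w generalizing x with
  | nil => simp [kw_one]
  | cons l w ih => rw [ch_cons, map_add, ih, kap_dch, wordG_cons, kw_mul, map_mul, ofMul_mul]

lemma kap_bd (n : Cos g C →₀ ℤ) : kap ψ (bd g n) = 0 := by
  induction n using Finsupp.induction_linear with
  | zero => simp
  | add a b ha hb => rw [map_add, map_add, ha, hb, add_zero]
  | single f a => rw [bd_single, map_zsmul, kap_ch, wordG_relator, kw_one]; simp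
end

section
variable {g : ℕ}

lemma list_sum_ne {M : Type*} [AddCommMonoid M] (l : List M) (h : l.sum ≠ 0) : ∃ a ∈ l, a ≠ 0 := by
  by_contra hc
  push Not at hc
  exact h (List.sum_eq_zero hc)

theorem alpha_gen {C : Subgroup (Gamma g)} {M : Type} [CommGroup M] (ψ : C →* M)
    (hψ : ∀ c, ψ c = 1 → c = 1)
    {a : List (Letter g)} (ha : Sh a) {x h : Gamma g} (hh : h = x * wordG a * x⁻¹)
    (hhC : h ∈ C) (hCz : ∀ c ∈ C, ∃ k : ℤ, h ^ k = c) (m : Cos g C →₀ ℤ) :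
    (a.length : ℤ) ≤ nm (ch (mkCos g C x) a - bd g m) := by
  classical
  obtain ⟨xh, hxh⟩ : ∃ xh, xh = mkCos g C x := ⟨_, rfl⟩
  rw [← hxh]
  have hcl : xh ⋆ wordG a = xh := by
    rw [hxh, mk_rt, eq_comm, mk_eq]
    rw [← hh]; exact hhC
  obtain ⟨n, hn⟩ := exists_min (ch xh a)
  obtain ⟨z, hz⟩ : ∃ z, z = ch xh a - bd g n := ⟨_, rfl⟩
  have hdz : ∀ v, dv z v = 0 := by
    intro v; rw [hz, Finsupp.coe_sub, dv_sub, dv_bd, dv_ch, hcl]; simp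
  have hmin : ∀ m, nm z ≤ nm (ch xh a - bd g m) := by
    intro m
    have := hn (m - n)
    rw [sub_sub, ← map_add, add_sub_cancel, ← hz] at this; exact this
  refine le_trans ?_ (hmin m)
  obtain ⟨ps, hp1, hp2, hp3⟩ := decompose (nm z).toNat z (by have := nm_nonneg z; omega) hdz
  have hk : kap ψ z ≠ 0 := by
    rw [hz, map_sub, kap_bd, sub_zero, kap_ch]
    intro h0
    have : kw C xh (wordG a) = 1 := hψ _ h0
    have := congrArg Subtype.val this
    simp only [kw, hcl, Subgroup.coe_one] at this
    have : wordG a = 1 := by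
      have := mul_inv_eq_one.1 this
      simpa using this
    exact ha.1 this
  have : ((ps.map fun p => kap ψ (ch p.1 p.2)).sum) ≠ 0 := by
    have e := congrArg (kap ψ) hp2
    rw [map_list_sum, List.map_map] at e
    rw [e] at hk
    exact hk
  obtain ⟨t, ht, ht0⟩ := list_sum_ne _ this
  obtain ⟨⟨u, w⟩, hp, rfl⟩ := List.mem_map.1 ht
  have huw := hp1 _ hp
  simp only [kap_ch] at ht0 huw
  have hmem : sec C u * wordG w * (sec C u)⁻¹ ∈ C := by
    have := (kw C u (wordG w)).2; simp only [kw, huw] at this; exact this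
  have hne : sec C u * wordG w * (sec C u)⁻¹ ≠ 1 := by
    intro h0; apply ht0
    have : kw C u (wordG w) = 1 := by ext; simp only [kw, huw, h0, Subgroup.coe_one]
    rw [this, map_one]; rfl
  have hwl : (w.length : ℤ) ≤ nm z := by
    rw [← hp3]
    have : ∀ (qs : List (Cos g C × List (Letter g))), (u, w) ∈ qs →
        (w.length : ℤ) ≤ (qs.map fun p => (p.2.length : ℤ)).sum := by
      intro qs hq
      exact List.single_le_sum (by simp only [List.mem_map]; rintro x ⟨p, -, rfl⟩; positivity) _ (List.mem_map.2 ⟨_, hq, rfl⟩)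
    exact this ps hp
  have hwpos : 0 < w.length := by
    rcases w with _ | ⟨l, w⟩
    · simp at hne
    · simp
  obtain ⟨k, hk'⟩ := hCz _ hmem
  -- key claim for natural powers of words of either direction
  have key : ∀ (b : List (Letter g)) (k : ℕ), b.length = a.length → xh ⋆ wordG b = xh →
      (∀ m, nm z ≤ nm (ch xh b - bd g m)) → Sh b →
      sec C u * wordG w * (sec C u)⁻¹ = (x * wordG b * x⁻¹) ^ k → (a.length : ℤ) ≤ nm z := by
    intro b k hbl hbc hbm hbs hbk
    have hkpos : 0 < k := by
      rcases Nat.eq_zero_or_pos k with rfl | h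
      · simp at hbk; simp [hbk] at hne
      · exact h
    have e1 : (x * wordG b * x⁻¹) ^ k = x * wordG (wpow b k) * x⁻¹ := by
      rw [wordG_wpow, conj_pow]
    obtain ⟨n', hn'⟩ := conj_bd (x := u) (w := w) (w' := wpow b k) (y := (sec C u)⁻¹ * x) huw (by
      rw [e1] at hbk
      have : wordG w = (sec C u)⁻¹ * (x * wordG (wpow b k) * x⁻¹) * sec C u := by rw [← hbk]; group
      rw [this]; group)
    have e2 : u ⋆ ((sec C u)⁻¹ * x) = xh := by
      conv_lhs => rw [← mk_sec C u]
      rw [mk_rt, mk_sec, hxh]; congr 1; group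
    rw [e2, ch_wpow hbc] at hn'
    have h1 := hermite_ge k hkpos (ch xh b) (nm z) hbm (-n')
    have h2 : (k : ℤ) • ch xh b - bd g (-n') = ch u w := by rw [map_neg, ← hn']; abel
    rw [h2] at h1
    have h3 := nm_ch u w
    have hk1 : k = 1 := by
      have hz0 : 0 < nm z := by omega
      have : (k : ℤ) * nm z ≤ 1 * nm z := by linarith
      have := le_of_mul_le_mul_right this hz0
      omega
    rw [hk1, pow_one] at hbk
    have := hbs.2 w ((x⁻¹ * sec C u)) (by
      have : wordG b = x⁻¹ * (sec C u * wordG w * (sec C u)⁻¹) * x := by rw [hbk]; group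
      rw [this]; group)
    omega
  rcases Int.eq_nat_or_neg k with ⟨j, rfl | rfl⟩
  · refine key a j rfl hcl hmin ha ?_
    rw [← hk', ← hh]; simp
  · have hcl' : xh ⋆ wordG (winv a) = xh := by
      rw [wordG_winv]; exact ((rt_eq_iff xh xh _).1 hcl).symm
    have hcc : ch xh (winv a) = - ch xh a := by
      have := ch_winv xh a; rwa [hcl] at this
    refine key (winv a) j (by simp) hcl' ?_ (Sh_winv ha) ?_
    · intro m
      have := hmin (-m)
      have e : ch xh (winv a) - bd g m = -(ch xh a - bd g (-m)) := by rw [hcc, map_neg]; abel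
      rw [e, nm_neg]; exact this
    · rw [← hk', wordG_winv, zpow_neg, zpow_natCast, ← inv_pow, hh]; congr 1; group

theorem alpha {a : List (Letter g)} (ha : Sh a) {x h : Gamma g} (hh : h = x * wordG a * x⁻¹)
    (m : Cos g (Subgroup.zpowers h) →₀ ℤ) :
    (a.length : ℤ) ≤ nm (ch (mkCos g (Subgroup.zpowers h) x) a - bd g m) := by
  let _ : CommGroup (Subgroup.zpowers h) := { (inferInstance : Group (Subgroup.zpowers h)) with mul_comm := mul_comm' }
  exact alpha_gen (MonoidHom.id (Subgroup.zpowers h)) (fun c hc => hc) ha hh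
    (Subgroup.mem_zpowers h) (fun c hc => Subgroup.mem_zpowers_iff.1 hc) m

theorem alphaN {a : List (Letter g)} (ha : Sh a) {x h : Gamma g} (hh : h = x * wordG a * x⁻¹)
    (N : ℕ) (hN : 0 < N) (m : Cos g (Subgroup.zpowers h) →₀ ℤ) :
    (N * a.length : ℤ) ≤ nm ((N : ℤ) • ch (mkCos g (Subgroup.zpowers h) x) a - bd g m) :=
  hermite_ge N hN _ _ (alpha ha hh) m

theorem alpha_nm {a : List (Letter g)} (ha : Sh a) {x h : Gamma g} (hh : h = x * wordG a * x⁻¹) :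
    nm (ch (mkCos g (Subgroup.zpowers h) x) a) = a.length := by
  apply le_antisymm (nm_ch _ _)
  have := alpha ha hh 0
  simpa using this
end



section
variable {g : ℕ} {X Y : Type} [RAct g X] [RAct g Y]

lemma abs_le_nm (z : Ch1 g X) (e : X × Fin (2 * g)) : |z e| ≤ nm z := by
  classical
  by_cases h : e ∈ z.support
  · exact Finset.single_le_sum (f := fun e => |z e|) (fun _ _ => abs_nonneg _) h
  · rw [Finsupp.notMem_support_iff.1 h]; simpa using nm_nonneg z

/-- first variation -/
def vr (k : X × Fin (2 * g) → ℤ) (t : Ch1 g X) : ℤ := t.sum fun e c => |k e + c| - |k e|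

lemma vr_eq (k : X × Fin (2 * g) → ℤ) {t : Ch1 g X} {S : Finset (X × Fin (2 * g))}
    (h : t.support ⊆ S) : vr k t = ∑ e ∈ S, (|k e + t e| - |k e|) :=
  Finsupp.sum_of_support_subset _ h _ (by simp)

lemma slope (φ : X → Y) (z : Ch1 g Y) (N : ℕ) (t : Ch1 g X) : nm t ≤ N →
    nm ((N : ℤ) • z + push g φ t) ≤ N * nm z + vr (fun e => z (φ e.1, e.2)) t := by
  classical
  induction t using Finsupp.induction with
  | zero => intro _; have := nm_smul (N : ℤ) z; simp only [push, vr, Finsupp.mapDomain_zero, add_zero, Finsupp.sum_zero_index]; rw [this, Nat.abs_cast]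
  | single_add e c t he hc ih =>
    intro hN
    have hnm : nm (Finsupp.single e c + t) = nm t + |c| := by
      rw [add_comm, nm_edge, Finsupp.notMem_support_iff.1 he]; simp
    have hN' : nm t ≤ N := by have := abs_nonneg c; omega
    have ih := ih hN'
    have e1 : vr (fun e => z (φ e.1, e.2)) (Finsupp.single e c + t) =
        vr (fun e => z (φ e.1, e.2)) t + (|z (φ e.1, e.2) + c| - |z (φ e.1, e.2)|) := by
      unfold vr
      rw [Finsupp.sum_add_index_of_disjoint, Finsupp.sum_single_index (by simp), add_comm]
      rw [Finsupp.support_single _ hc]; simpa using he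
    have e2 : push g φ (Finsupp.single e c + t) = push g φ t + Finsupp.single (φ e.1, e.2) c := by
      rw [push_add, add_comm]; congr 1; simp [push, Prod.map]
    rw [e1, e2, ← add_assoc, nm_edge]
    have h1 := (abs_le_nm (push g φ t) (φ e.1, e.2)).trans (nm_push φ t)
    have h2 : ((N : ℤ) • z + push g φ t) (φ e.1, e.2) = N * z (φ e.1, e.2) + push g φ t (φ e.1, e.2) := by
      simp
    rw [h2]
    generalize push g φ t (φ e.1, e.2) = p at *
    generalize z (φ e.1, e.2) = q at *
    rcases lt_trichotomy q 0 with hq | rfl | hq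
    · have : (N : ℤ) * q ≤ -N := by nlinarith
      generalize (N : ℤ) * q = r at *
      have := abs_le.1 h1
      have e3 : |r + p| = -(r + p) := abs_of_nonpos (by have := abs_nonneg c; omega)
      have e4 : |r + p + c| = -(r + p + c) := abs_of_nonpos (by have := le_abs_self c; omega)
      have := neg_le_abs (q + c)
      rw [e3, e4, abs_of_neg hq]; linarith
    · have := abs_add_le p c
      simp at *; linarith
    · have : (N : ℤ) ≤ N * q := by nlinarith
      generalize (N : ℤ) * q = r at *
      have := abs_le.1 h1
      have e3 : |r + p| = (r + p) := abs_of_nonneg (by have := abs_nonneg c; omega)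
      have e4 : |r + p + c| = (r + p + c) := abs_of_nonneg (by have := neg_abs_le c; omega)
      have := le_abs_self (q + c)
      rw [e3, e4, abs_of_pos hq]; linarith
end

section
variable {g : ℕ}

/-- the lifted geodesic is locally minimizing -/
theorem vr_nonneg {a : List (Letter g)} (ha : Sh a) {x h : Gamma g} (hh : h = x * wordG a * x⁻¹)
    (n : Gamma g →₀ ℤ) : 0 ≤ vr (fun e : Gamma g × Fin (2 * g) =>
      ch (mkCos g (Subgroup.zpowers h) x) a (mkCos g (Subgroup.zpowers h) e.1, e.2)) (bd g n) := by
  have h1 := slope (mkCos g (Subgroup.zpowers h)) (ch (mkCos g (Subgroup.zpowers h) x) a)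
    ((nm (bd g n)).toNat + 1) (bd g n) (by have := nm_nonneg (bd g n); omega)
  have h2 := alphaN ha hh ((nm (bd g n)).toNat + 1) (by omega)
    (-(Finsupp.mapDomain (mkCos g (Subgroup.zpowers h)) n))
  rw [push_bd (Eqv_mk _)] at h1
  rw [map_neg, sub_neg_eq_add] at h2
  rw [alpha_nm ha hh] at h1
  linarith

def sumW (F : Gamma g → Letter g → ℤ) : Gamma g → List (Letter g) → ℤ
  | _, [] => 0
  | v, l :: w => F v l + sumW F (v * letterG l) w

lemma sumW_append (F : Gamma g → Letter g → ℤ) (v : Gamma g) (a b : List (Letter g)) :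
    sumW F v (a ++ b) = sumW F v a + sumW F (v * wordG a) b := by
  induction a generalizing v with
  | nil => simp [sumW]
  | cons l a ih => simp [sumW, ih, mul_assoc, add_assoc]

lemma exists_pot (F : Gamma g → Letter g → ℤ)
    (hb : ∀ v l, F v l + F (v * letterG l) (inv l) = 0)
    (hr : ∀ v, sumW F v (relatorWord g) = 0) :
    ∃ t : Gamma g → ℤ, ∀ v l, t (v * letterG l) = t v + F v l := by
  have key : ∀ {w w' : List (Letter g)}, wordG w = wordG w' → sumW F 1 w = sumW F 1 w' := by
    intro w w' h
    refine word_invariant (sumW F 1) ?_ ?_ h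
    · intro a b l
      rw [sumW_append, sumW_append, sumW, sumW, letterG_inv, mul_inv_cancel_right]
      have := hb (1 * wordG a) l
      linarith
    · intro a b
      rw [List.append_assoc, sumW_append, sumW_append, sumW_append, hr, wordG_relator, mul_one]; ring
  choose wd hwd using exists_word (g := g)
  refine ⟨fun v => sumW F 1 (wd v), fun v l => ?_⟩
  have : sumW F 1 (wd (v * letterG l)) = sumW F 1 (wd v ++ [l]) := key (by rw [hwd]; simp [hwd])
  simp only [this, sumW_append, hwd, sumW]; simp

lemma exists_U (hg : 0 < g) (k : Gamma g × Fin (2 * g) → ℤ) (hk : ∀ v, dv k v = 0) :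
    ∃ U : Gamma g → Letter g → ℤ, ∀ v l, U v (suc (inv l)) = U v l + val k v l := by
  let S : Gamma g → ℕ → ℤ := fun v p => ∑ q ∈ Finset.range p, val k v (lam hg q)
  have hS : ∀ v, S v (4 * g) = 0 := by
    intro v
    rw [← hk v, dv]
    symm
    refine Finset.sum_bij' (fun l _ => posLv l) (fun p _ => lam hg p) ?_ ?_ ?_ ?_ ?_
    · intro l _; simpa using posLv_lt l
    · simp
    · intro l _; exact lam_posLv hg l
    · intro p hp; simp only [Finset.mem_range] at hp; rw [posLv_lam, Nat.mod_eq_of_lt hp]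
    · intro l _; rw [lam_posLv]
  refine ⟨fun v l => S v (posLv l), fun v l => ?_⟩
  have e : suc (inv l) = lam hg (posLv l + 1) := by rw [← suc_inv_lam, lam_posLv]
  have e2 : S v (posLv l) + val k v l = S v (posLv l + 1) := by
    simp only [S, Finset.sum_range_succ, lam_posLv]
  simp only [e2]
  rw [e, posLv_lam]
  rcases Nat.lt_or_ge (posLv l + 1) (4 * g) with h | h
  · rw [Nat.mod_eq_of_lt h]
  · have : posLv l + 1 = 4 * g := by have := posLv_lt l; omega
    rw [this, hS, Nat.mod_self]; simp [S]

theorem dual (hg : 0 < g) (k : Gamma g × Fin (2 * g) → ℤ) (hk : ∀ v, dv k v = 0) :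
    ∃ χ : Gamma g → ℤ, ∀ v l, val k v l = χ (L v l) - χ (R v l) := by
  obtain ⟨U, hU⟩ := exists_U hg k hk
  have hpre : ∀ (f : Gamma g) (i : ℕ) (hi : i < 4 * g),
      sumW (fun v l => U (v * letterG l) (suc l) - U v l) f ((relatorWord g).take i) =
        U (f * P g i) (rl i hi) - U f (rl 0 (by omega)) := by
    intro f i
    induction i with
    | zero => intro hi; simp [sumW, P_zero]
    | succ i ih =>
      intro hi
      have ih := ih (by omega)
      rw [List.take_add_one, sumW_append, ih, List.getElem?_eq_getElem (by rw [rel_length]; omega), rel_get,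
        P_succ i (by omega)]
      have : suc (rl i (by omega : i < 4 * g)) = rl (i + 1) hi := by
        apply idx_inj; rw [idx_suc, idx_rl, idx_rl, Nat.mod_eq_of_lt hi]
      simp only [Option.toList, sumW, this, P, mul_assoc]; ring
  obtain ⟨t, ht⟩ := exists_pot (fun v l => U (v * letterG l) (suc l) - U v l) (by
    intro v l
    have h1 := hU v l
    have h2 := hU (v * letterG l) (inv l)
    have h3 := val_inv k v l
    rw [inv_inv'] at h2
    rw [rt_Gamma] at h3
    simp only [letterG_inv, mul_inv_cancel_right]
    linarith) (by
    intro f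
    have h0 := hpre f (4 * g - 1) (by omega)
    have hlen := rel_length g
    have e : relatorWord g = (relatorWord g).take (4 * g - 1) ++ [rl (4 * g - 1) (by omega)] := by
      conv_lhs => rw [← List.take_length (l := relatorWord g), hlen,
        show 4 * g = (4 * g - 1) + 1 by omega, List.take_add_one,
        List.getElem?_eq_getElem (by omega), rel_get]
      rfl
    have h1 : P g (4 * g - 1) * letterG (rl (4 * g - 1) (by omega)) = 1 := by
      rw [← P_succ, show 4 * g - 1 + 1 = 4 * g by omega, P_last]
    rw [e, sumW_append, h0]
    have : suc (rl (4 * g - 1) (by omega : 4 * g - 1 < 4 * g)) = rl 0 (by omega) := by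
      apply idx_inj; rw [idx_suc, idx_rl, idx_rl, show 4 * g - 1 + 1 = 4 * g by omega, Nat.mod_self]
    simp only [sumW, this]
    rw [show wordG ((relatorWord g).take (4 * g - 1)) = P g (4 * g - 1) from rfl, mul_assoc f, h1]
    simp)
  -- G v l = t v - U v l is constant around faces
  have hG : ∀ (f : Gamma g) (i : ℕ) (hi : i < 4 * g),
      t (f * P g i) - U (f * P g i) (rl i hi) = t f - U f (rl 0 (by omega)) := by
    intro f i
    induction i with
    | zero => intro hi; simp [P_zero]
    | succ i ih =>
      intro hi
      rw [← ih (by omega), P_succ i (by omega), ← mul_assoc, ht]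
      have : suc (rl i (by omega : i < 4 * g)) = rl (i + 1) hi := by
        apply idx_inj; rw [idx_suc, idx_rl, idx_rl, Nat.mod_eq_of_lt hi]
      rw [this]; ring
  have hL : ∀ v (l : Letter g), t v - U v l = t (L v l) - U (L v l) (rl 0 (by omega)) := by
    intro v l
    have := hG (L v l) (idx l) (idx_lt l)
    rw [rl_idx] at this
    have e : L v l * P g (idx l) = v := by simp [L]
    rw [e] at this
    exact this
  refine ⟨fun f => t f - U f (rl 0 (by omega)), fun v l => ?_⟩
  have e : R v l = L v (suc (inv l)) := by
    rw [← lam_posLv hg l, R_lam, suc_inv_lam]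
  simp only [e, ← hL, hU]; ring
end



section
variable {g : ℕ} {X : Type} [RAct g X]

def negp (n : X →₀ ℤ) : ℕ := n.sum fun _ a => (-a).toNat

lemma negp_eq {n : X →₀ ℤ} {S : Finset X} (h : n.support ⊆ S) :
    negp n = ∑ e ∈ S, (-(n e)).toNat :=
  Finsupp.sum_of_support_subset _ h _ (by simp)

lemma exists_min2 (u : Ch1 g X) : ∃ n, (∀ m, nm (u - bd g n) ≤ nm (u - bd g m)) ∧
    ∀ m, nm (u - bd g m) ≤ nm (u - bd g n) → negp n ≤ negp m := by
  obtain ⟨n0, h0⟩ := exists_min u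
  have h0' : ∀ m, nm (u - bd g n0) ≤ nm (u - bd g m) := by
    intro m
    have := h0 (m - n0)
    rwa [sub_sub, ← map_add, add_sub_cancel] at this
  obtain ⟨n, hn, hmin⟩ := (measure (negp (X := X))).wf.has_min
    {n | nm (u - bd g n) = nm (u - bd g n0)} ⟨n0, rfl⟩
  have hn : nm (u - bd g n) = nm (u - bd g n0) := hn
  refine ⟨n, fun m => hn ▸ h0' m, fun m hm => ?_⟩
  have := hmin m (le_antisymm (hn ▸ hm) (h0' m))
  exact not_lt.1 this

theorem LL {u : Ch1 g X} {n : X →₀ ℤ}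
    (hn2 : ∀ m, nm (u - bd g m) ≤ nm (u - bd g n) → negp n ≤ negp m)
    {k : X × Fin (2 * g) → ℤ} {χ : X → ℤ} (hχ : ∀ v l, val k v l = χ (L v l) - χ (R v l))
    (hvr : ∀ m, 0 ≤ vr k (bd g m)) (hu : ∀ v l, 0 < val u v l → 1 ≤ χ (L v l)) :
    ∀ t, χ t ≤ 0 → 0 ≤ n t := by
  classical
  by_contra hcon
  push Not at hcon
  obtain ⟨t0, ht0, hnt0⟩ := hcon
  let T : Finset X := n.support.filter fun t => n t < 0 ∧ χ t ≤ 0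
  let o : X →₀ ℤ := Finsupp.indicator T (fun _ _ => 1)
  have ho : ∀ t, o t = if (n t < 0 ∧ χ t ≤ 0) then 1 else 0 := by
    intro t
    simp only [o, Finsupp.indicator_apply, T, Finset.mem_filter, Finsupp.mem_support_iff]
    by_cases h : n t < 0 ∧ χ t ≤ 0
    · simp [h, h.1.ne]
    · simp [h]
  have h1 : nm (u - bd g (n + o)) ≤ nm (u - bd g n) := by
    have hv := hvr o
    let S := (u - bd g (n + o)).support ∪ (u - bd g n).support ∪ (bd g o).support
    rw [vr_eq k (S := S) Finset.subset_union_right] at hv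
    rw [nm_eq (z := u - bd g (n + o)) (S := S)
        (Finset.subset_union_left.trans Finset.subset_union_left),
      nm_eq (z := u - bd g n) (S := S)
        (Finset.subset_union_right.trans Finset.subset_union_left)]
    have : ∀ e ∈ S, |(u - bd g (n + o)) e| + (|k e + bd g o e| - |k e|) ≤ |(u - bd g n) e| := by
      rintro ⟨x, i⟩ _
      have e1 := val_bd n x (i, true)
      have e2 := val_bd o x (i, true)
      have e3 := hχ x (i, true)
      have e4 := hu x (i, true)
      have e5 := hu (x ⋆ letterG (i, true)) (inv (i, true))
      rw [val_inv, ← R] at e5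
      rw [val_pos] at *
      rw [ho, ho] at e2
      simp only [map_add, Finsupp.coe_sub, Finsupp.coe_add, Pi.sub_apply, Pi.add_apply]
      rw [e1, e2, e3]
      generalize L x (i, true) = a at *
      generalize R x (i, true) = b at *
      generalize u (x, i) = w at *
      clear e1 e2 e3 hv hu hvr hχ hn2
      split_ifs with c1 c2 c2 <;> (try simp only [sub_self, add_zero, sub_zero, le_refl]) <;>
        simp only [abs_eq_max_neg] <;> omega
    have := Finset.sum_le_sum this
    rw [Finset.sum_add_distrib] at this
    linarith
  have h2 := hn2 _ h1
  have h3 : negp (n + o) < negp n := by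
    have hs : o.support ⊆ n.support := (Finsupp.support_indicator_subset T _).trans
      (Finset.filter_subset _ _)
    rw [negp_eq (S := n.support) (Finsupp.support_add.trans (Finset.union_subset le_rfl hs)),
      negp_eq (n := n) (S := n.support) le_rfl]
    refine Finset.sum_lt_sum ?_ ⟨t0, by simp; omega, ?_⟩
    · intro t _; simp only [Finsupp.add_apply, ho]; split_ifs <;> omega
    · simp only [Finsupp.add_apply, ho]; rw [if_pos ⟨hnt0, ht0⟩]; omega
  omega
end



section
variable {g : ℕ} {X : Type} [RAct g X]

lemma val_ch_ne {x : X} {w : List (Letter g)} {v : X} {l : Letter g} (h : val (ch x w) v l ≠ 0) :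
    ∃ a1 m a2, w = a1 ++ m :: a2 ∧ ((v = x ⋆ wordG a1 ∧ l = m) ∨
      (v ⋆ letterG l = x ⋆ wordG a1 ∧ inv l = m)) := by
  classical
  induction w generalizing x with
  | nil => simp at h
  | cons m w ih =>
    rw [ch_cons, Finsupp.coe_add, val_add] at h
    by_cases h2 : val (ch (x ⋆ letterG m) w) v l = 0
    · rw [h2, add_zero, val_dch] at h
      refine ⟨[], m, w, rfl, ?_⟩
      simp only [wordG_nil, rt_one]
      by_contra hc
      push Not at hc
      rw [if_neg (fun h => hc.1 h.1 h.2), if_neg (fun h => hc.2 h.1 h.2)] at h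
      simp at h
    · obtain ⟨a1, m', a2, rfl, h'⟩ := ih h2
      exact ⟨m :: a1, m', a2, rfl, by rwa [wordG_cons, ← rt_mul]⟩

lemma val_ch_pos {x : X} {w : List (Letter g)} {v : X} {l : Letter g} (h : 0 < val (ch x w) v l) :
    ∃ a1 a2, w = a1 ++ l :: a2 ∧ v = x ⋆ wordG a1 := by
  classical
  induction w generalizing x with
  | nil => simp at h
  | cons m w ih =>
    rw [ch_cons, Finsupp.coe_add, val_add] at h
    by_cases h2 : val (ch (x ⋆ letterG m) w) v l ≤ 0
    · have h : 0 < val (dch x m) v l := by omega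
      rw [val_dch] at h
      by_cases hc : v = x ∧ l = m
      · exact ⟨[], w, by rw [hc.2]; rfl, by simp [hc.1]⟩
      · rw [if_neg hc] at h
        split_ifs at h <;> omega
    · obtain ⟨a1, a2, rfl, h'⟩ := ih (x := x ⋆ letterG m) (by omega)
      exact ⟨m :: a1, a2, rfl, by rwa [wordG_cons, ← rt_mul]⟩

lemma rot_const {χ : X → ℤ} {k : X × Fin (2 * g) → ℤ} (hχ : ∀ v l, val k v l = χ (L v l) - χ (R v l))
    {v : X} {s t : Letter g} (h : ∀ m, gapN s m < gapN s t → val k (v ⋆ letterG s) m = 0) :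
    χ (L (v ⋆ letterG s) t) = χ (L v s) := by
  have hg : 0 < g := by have := idx_lt s; omega
  have key : ∀ j, j ≤ gapN s t → χ (L (v ⋆ letterG s) (lam hg (posArr s + 1 + j))) = χ (L v s) := by
    intro j
    induction j with
    | zero => intro _; rw [Nat.add_zero, ← suc_lam, L_suc]
    | succ j ih =>
      intro hj
      rw [← ih (by omega), ← add_assoc, ← R_lam]
      have h1 := h (lam hg (posArr s + 1 + j)) (by
        rw [gap_lam hg s j (by have := gapN_lt s t; omega)]; omega)
      rw [hχ] at h1; linarith
  have := key _ le_rfl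
  rwa [← lam_gap] at this
end

section
variable {g : ℕ} {J : Subgroup (Gamma g)}

/-- for each index, the geodesic potential -/
theorem geo_pot {y : ℤ → Gamma g} {ℓ : ℤ → Letter g} (hy : ∀ i, y (i + 1) = y i * letterG (ℓ i))
    {K : Cos g J → Letter g → Prop} (hK : ∀ v l, K (v ⋆ letterG l) (inv l) → K v l)
    (H1 : ∀ i m, gapN (ℓ i) m < gapN (ℓ i) (ℓ (i + 1)) → ¬ K (mkCos g J (y (i + 1))) m)
    (i₀ : ℤ)
    (H2 : ∃ a, Sh (ℓ i₀ :: a) ∧ mkCos g J (y i₀) ⋆ wordG (ℓ i₀ :: a) = mkCos g J (y i₀) ∧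
      ∀ a1 l a2, ℓ i₀ :: a = a1 ++ l :: a2 → K (mkCos g J (y i₀) ⋆ wordG a1) l) :
    ∃ (χ : Gamma g → ℤ) (k : Gamma g × Fin (2 * g) → ℤ),
      (∀ v l, val k v l = χ (L v l) - χ (R v l)) ∧ (∀ m, 0 ≤ vr k (bd g m)) ∧
      (∀ i, χ (L (y i) (ℓ i)) = 1) ∧ χ (R (y i₀) (ℓ i₀)) ≤ 0 := by
  have hg : 0 < g := by have := idx_lt (ℓ 0); omega
  obtain ⟨a, ha, hcl, haK⟩ := H2
  obtain ⟨h, hh⟩ : ∃ h, h = y i₀ * wordG (ℓ i₀ :: a) * (y i₀)⁻¹ := ⟨_, rfl⟩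
  have hhJ : h ∈ J := by
    rw [mk_rt, eq_comm, mk_eq] at hcl; rw [hh]; exact hcl
  have hle : Subgroup.zpowers h ≤ J := by rwa [Subgroup.zpowers_le]
  have hvr := vr_nonneg ha hh
  have hnm := alpha_nm ha hh
  obtain ⟨z, hz⟩ : ∃ z, z = ch (mkCos g (Subgroup.zpowers h) (y i₀)) (ℓ i₀ :: a) := ⟨_, rfl⟩
  have hcl2 : mkCos g (Subgroup.zpowers h) (y i₀) ⋆ wordG (ℓ i₀ :: a) =
      mkCos g (Subgroup.zpowers h) (y i₀) := by
    rw [mk_rt, eq_comm, mk_eq, ← hh]; exact Subgroup.mem_zpowers h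
  have hdz : ∀ v, dv z v = 0 := by
    classical
    intro v; rw [hz, dv_ch, hcl2]; simp
  have hpos : 1 ≤ val z (mkCos g (Subgroup.zpowers h) (y i₀)) (ℓ i₀) := by
    have := nocancel (a := []) (b := a) (ℓ := ℓ i₀) hnm
    rw [hz]; simpa using this
  rw [← hz] at hvr
  have hsup : ∀ v l, val z (mkCos g (Subgroup.zpowers h) v) l ≠ 0 → K (mkCos g J v) l := by
    intro v l hv
    rw [hz] at hv
    obtain ⟨a1, m, a2, e, h' | h'⟩ := val_ch_ne hv
    · have := congrArg (coverMapV hle) h'.1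
      rw [cover_mk, Eqv_cover hle, cover_mk] at this
      rw [this, h'.2]; exact haK _ _ _ e
    · have := congrArg (coverMapV hle) h'.1
      rw [Eqv_cover hle, Eqv_cover hle, cover_mk, cover_mk] at this
      apply hK
      rw [this, h'.2]; exact haK _ _ _ e
  obtain ⟨k, hk⟩ : ∃ k : Gamma g × Fin (2 * g) → ℤ,
    k = fun e => z (mkCos g (Subgroup.zpowers h) e.1, e.2) := ⟨_, rfl⟩
  rw [← hk] at hvr
  have hval : ∀ v l, val k v l = val z (mkCos g (Subgroup.zpowers h) v) l := by
    intro v l; rw [hk]; exact val_comp (Eqv_mk _) _ v l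
  obtain ⟨χ, hχ⟩ := dual hg k (by
    intro v
    have := hdz (mkCos g (Subgroup.zpowers h) v)
    simpa only [dv, hval] using this)
  have hstep : ∀ i, χ (L (y (i + 1)) (ℓ (i + 1))) = χ (L (y i) (ℓ i)) := by
    intro i
    have h1 := H1 i
    rw [hy] at h1 ⊢
    apply rot_const hχ
    intro m hm
    by_contra hc
    rw [rt_Gamma, hval] at hc
    exact h1 m hm (hsup _ _ hc)
  have hconst : ∀ i, χ (L (y i) (ℓ i)) = χ (L (y i₀) (ℓ i₀)) := by
    intro i
    induction i using Int.inductionOn' (b := i₀) with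
    | zero => rfl
    | succ k _ ih => rw [hstep, ih]
    | pred k _ ih => rw [← ih, ← hstep (k - 1), sub_add_cancel]
  refine ⟨fun t => χ t - χ (L (y i₀) (ℓ i₀)) + 1, k, ?_, hvr, ?_, ?_⟩
  · intro v l; rw [hχ]; ring
  · intro i; simp only [hconst i]; ring
  · have := hχ (y i₀) (ℓ i₀)
    rw [hval] at this
    simp only
    linarith

theorem geo {y : ℤ → Gamma g} {ℓ : ℤ → Letter g} (hy : ∀ i, y (i + 1) = y i * letterG (ℓ i))
    {K : Cos g J → Letter g → Prop} (hK : ∀ v l, K (v ⋆ letterG l) (inv l) → K v l)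
    (H1 : ∀ i m, gapN (ℓ i) m < gapN (ℓ i) (ℓ (i + 1)) → ¬ K (mkCos g J (y (i + 1))) m)
    (H2 : ∀ i, ∃ a, Sh (ℓ i :: a) ∧ mkCos g J (y i) ⋆ wordG (ℓ i :: a) = mkCos g J (y i) ∧
      ∀ a1 l a2, ℓ i :: a = a1 ++ l :: a2 → K (mkCos g J (y i) ⋆ wordG a1) l) :
    (∀ i j, ¬ (y j = y i * letterG (ℓ i) ∧ ℓ j = inv (ℓ i))) ∧
    ∀ u : Ch1 g (Gamma g), (∀ v l, 0 < val u v l → ∃ i, v = y i ∧ l = ℓ i) →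
      ∃ n, (∀ m, nm (u - bd g n) ≤ nm (u - bd g m)) ∧ ∀ i, 0 ≤ n (R (y i) (ℓ i)) := by
  refine ⟨?_, ?_⟩
  · rintro i j ⟨h1, h2⟩
    obtain ⟨χ, k, -, -, hL, hR⟩ := geo_pot hy hK H1 i (H2 i)
    have := hL j
    rw [h1, h2] at this
    rw [R, rt_Gamma] at hR
    omega
  · intro u hu
    obtain ⟨n, hn1, hn2⟩ := exists_min2 u
    refine ⟨n, hn1, fun i => ?_⟩
    obtain ⟨χ, k, hχ, hvr, hL, hR⟩ := geo_pot hy hK H1 i (H2 i)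
    refine LL hn2 hχ hvr ?_ _ hR
    intro v l hv
    obtain ⟨i, rfl, rfl⟩ := hu v l hv
    rw [hL]
end



section
variable {g : ℕ}

lemma md_lt {W : List (Letter g)} (hW : W ≠ []) (i : ℤ) : (i % (W.length : ℤ)).toNat < W.length := by
  have h : 0 < W.length := List.length_pos_iff.2 hW
  have h1 := Int.emod_nonneg i (b := (W.length : ℤ)) (by omega)
  have h2 := Int.emod_lt_of_pos i (b := (W.length : ℤ)) (by omega)
  omega

def lz (W : List (Letter g)) (hW : W ≠ []) (i : ℤ) : Letter g :=
  W[(i % (W.length : ℤ)).toNat]'(md_lt hW i)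

def yz (x : Gamma g) (W : List (Letter g)) (i : ℤ) : Gamma g :=
  x * wordG W ^ (i / (W.length : ℤ)) * wordG (W.take (i % (W.length : ℤ)).toNat)

lemma take_succ_wordG (W : List (Letter g)) (k : ℕ) (hk : k < W.length) :
    wordG (W.take (k + 1)) = wordG (W.take k) * letterG W[k] := by
  rw [List.take_add_one, List.getElem?_eq_getElem hk, wordG_append]; simp

lemma yz_step (x : Gamma g) (W : List (Letter g)) (hW : W ≠ []) (i : ℤ) :
    yz x W (i + 1) = yz x W i * letterG (lz W hW i) := by
  have h : 0 < W.length := List.length_pos_iff.2 hW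
  have h1 := Int.emod_nonneg i (b := (W.length : ℤ)) (by omega)
  have h2 := Int.emod_lt_of_pos i (b := (W.length : ℤ)) (by omega)
  have h3 := Int.mul_ediv_add_emod i (W.length : ℤ)
  obtain ⟨s, hs0⟩ := Int.eq_ofNat_of_zero_le h1
  have hsl : s < W.length := by omega
  have hl : lz W hW i = W[s] := by
    unfold lz; simp only [hs0, Int.toNat_natCast]
  rw [hl]
  unfold yz
  rw [hs0] at h1 h2 h3 ⊢
  generalize hq : i / (W.length : ℤ) = q at *
  rcases Nat.lt_or_ge (s + 1) W.length with hs | hs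
  · have e1 : (i + 1) / (W.length : ℤ) = q := by
      rw [Int.ediv_eq_iff_of_pos (by omega)]
      constructor <;> nlinarith
    have e2 : (i + 1) % (W.length : ℤ) = (s + 1 : ℕ) := by
      rw [Int.emod_def, e1]; push_cast; linarith
    rw [e1, e2]
    simp only [Int.toNat_natCast]
    rw [take_succ_wordG W s (by omega), mul_assoc]
    simp only [mul_assoc]
  · have hs : s + 1 = W.length := by omega
    have e1 : (i + 1) / (W.length : ℤ) = q + 1 := by
      rw [Int.ediv_eq_iff_of_pos (by omega)]
      constructor <;> nlinarith
    have e2 : (i + 1) % (W.length : ℤ) = 0 := by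
      rw [Int.emod_def, e1]; have : (W.length : ℤ) = s + 1 := by omega
      linarith
    rw [e1, e2]
    simp only [Int.toNat_natCast, Int.toNat_zero, List.take_zero, wordG_nil, mul_one]
    have := take_succ_wordG W s (by omega)
    rw [hs, List.take_length] at this
    rw [mul_assoc, ← this, zpow_add_one, mul_assoc]

lemma lz_shift (W : List (Letter g)) (hW : W ≠ []) (i k : ℤ) :
    lz W hW (i + k * W.length) = lz W hW i := by
  unfold lz; simp

lemma yz_shift (x : Gamma g) (W : List (Letter g)) (hW : W ≠ []) (i k : ℤ) :
    yz x W (i + k * W.length) = (x * wordG W * x⁻¹) ^ k * yz x W i := by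
  have h : (W.length : ℤ) ≠ 0 := by have := List.length_pos_iff.2 hW; omega
  unfold yz
  rw [Int.add_mul_emod_self_right, Int.add_mul_ediv_right _ _ h, conj_zpow, add_comm, zpow_add]
  group

lemma lz_nat (W : List (Letter g)) (hW : W ≠ []) (k : ℕ) (hk : k < W.length) :
    lz W hW k = W[k] := by
  unfold lz
  have : ((k : ℤ) % (W.length : ℤ)).toNat = k := by
    rw [← Int.natCast_mod, Int.toNat_natCast, Nat.mod_eq_of_lt hk]
  simp only [this]

lemma yz_nat (x : Gamma g) (W : List (Letter g)) (k : ℕ) (hk : k < W.length) :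
    yz x W k = x * wordG (W.take k) := by
  unfold yz
  have e : ((k : ℤ) % (W.length : ℤ)).toNat = k := by
    rw [← Int.natCast_mod, Int.toNat_natCast, Nat.mod_eq_of_lt hk]
  have e2 : (k : ℤ) / (W.length : ℤ) = 0 := by
    rw [← Int.natCast_div, Nat.div_eq_of_lt hk]; rfl
  rw [e, e2]; simp

lemma wpow_get (W : List (Letter g)) (N i : ℕ) (l : Letter g) (h : (wpow W N)[i]? = some l) :
    W[i % W.length]? = some l := by
  induction N generalizing i with
  | zero => simp [wpow] at h
  | succ N ih =>
    rw [wpow_succ] at h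
    rcases Nat.lt_or_ge i W.length with hi | hi
    · rw [List.getElem?_append_left hi] at h; rwa [Nat.mod_eq_of_lt hi]
    · rw [List.getElem?_append_right hi] at h
      have := ih _ h
      rwa [Nat.mod_eq_sub_mod hi]

lemma wpow_split (x : Gamma g) (W : List (Letter g)) (hW : W ≠ []) (N : ℕ) (a1 : List (Letter g)) :
    ∀ l a2, wpow W N = a1 ++ l :: a2 →
      lz W hW a1.length = l ∧ yz x W a1.length = x * wordG a1 := by
  have key : ∀ a1 l a2, wpow W N = a1 ++ l :: a2 → lz W hW a1.length = l := by
    intro a1 l a2 h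
    have := wpow_get W N a1.length l (by rw [h]; simp)
    unfold lz
    have e : ((a1.length : ℤ) % (W.length : ℤ)).toNat = a1.length % W.length := by
      rw [← Int.natCast_mod, Int.toNat_natCast]
    simp only [e]
    exact (List.getElem?_eq_some_iff.1 this).2
  induction a1 using List.reverseRecOn with
  | nil =>
    intro l a2 h
    exact ⟨key _ _ _ h, by simp [yz]⟩
  | append_singleton a1 m ih =>
    intro l a2 h
    refine ⟨key _ _ _ h, ?_⟩
    rw [List.append_assoc] at h
    obtain ⟨h1, h2⟩ := ih m (l :: a2) h
    rw [List.length_append]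
    simp only [List.length_cons, List.length_nil]
    push_cast
    rw [yz_step x W hW, h1, h2, wordG_append]; simp [mul_assoc]

lemma nm_nocancel {X : Type} [RAct g X] (w : List (Letter g)) : ∀ x : X,
    (∀ a1 l a2 b1 m b2, w = a1 ++ l :: a2 → w = b1 ++ m :: b2 →
      ¬ (x ⋆ wordG b1 = x ⋆ wordG a1 ⋆ letterG l ∧ m = inv l)) → nm (ch x w) = w.length := by
  induction w with
  | nil => intro x _; simp
  | cons m w ih =>
    intro x H
    have h1 := ih (x ⋆ letterG m) (by
      rintro a1 l a2 b1 m' b2 e1 e2 ⟨h1, h2⟩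
      refine H (m :: a1) l a2 (m :: b1) m' b2 (by rw [e1]; rfl) (by rw [e2]; rfl) ⟨?_, h2⟩
      rwa [wordG_cons, wordG_cons, ← rt_mul, ← rt_mul])
    have h2 : ch x (m :: w) = ch (x ⋆ letterG m) w - dch (x ⋆ letterG m) (inv m) := by
      rw [ch_cons, dch_inv]; abel
    rw [h2, nm_sub_dch_neg, h1]
    · simp
    · by_contra hc
      obtain ⟨a1, a2, e, h3⟩ := val_ch_pos (not_le.1 hc)
      refine H [] m w (m :: a1) (inv m) a2 rfl (by rw [e]; rfl) ⟨?_, rfl⟩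
      rw [wordG_cons, ← rt_mul, ← h3]; simp

lemma conjLen_spec (γ : Gamma g) : ∃ c : List (Letter g), c.length = conjLen γ ∧
    ∃ y, y * wordG c * y⁻¹ = γ := by
  obtain ⟨w, hw⟩ := exists_word γ
  exact Nat.sInf_mem (s := {n | ∃ w : List (Letter g), w.length = n ∧ ∃ x : Gamma g, x * wordG w * x⁻¹ = γ})
    ⟨w.length, w, rfl, 1, by simp [hw]⟩

lemma conjLen_le {γ : Gamma g} (w : List (Letter g)) (y : Gamma g) (h : y * wordG w * y⁻¹ = γ) :
    conjLen γ ≤ w.length := Nat.sInf_le ⟨w, rfl, y, h⟩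

lemma R_left (k x : Gamma g) (l : Letter g) : R (k * x) l = k * R x l := by
  simp [R, L, mul_assoc]

lemma take_split (W : List (Letter g)) (k : ℕ) (hk : k < W.length) :
    W = W.take k ++ W[k] :: W.drop (k + 1) := by
  rw [List.getElem_cons_drop, List.take_append_drop]

variable {J : Subgroup (Gamma g)}

theorem geoList {W : List (Letter g)} (hW : W ≠ []) {x : Gamma g}
    (hcl : mkCos g J x ⋆ wordG W = mkCos g J x)
    {K : Cos g J → Letter g → Prop} (hK : ∀ v l, K (v ⋆ letterG l) (inv l) → K v l)
    (H1 : ∀ k (hk : k < W.length) m,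
      gapN W[k] m < gapN W[k] (W[(k + 1) % W.length]'(Nat.mod_lt _ (by omega))) →
      ¬ K (mkCos g J x ⋆ wordG (W.take k) ⋆ letterG W[k]) m)
    (H2 : ∀ k (hk : k < W.length), ∃ a, Sh (W[k] :: a) ∧
      mkCos g J x ⋆ wordG (W.take k) ⋆ wordG (W[k] :: a) = mkCos g J x ⋆ wordG (W.take k) ∧
      ∀ a1 l a2, W[k] :: a = a1 ++ l :: a2 → K (mkCos g J x ⋆ wordG (W.take k) ⋆ wordG a1) l)
    {h : Gamma g} (hh : h = x * wordG W * x⁻¹) :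
    nm (ch (mkCos g (Subgroup.zpowers h) x) W) = W.length ∧
    ∃ n, nm (ch (mkCos g (Subgroup.zpowers h) x) W - bd g n) = conjLen (wordG W) ∧
      Mini (ch (mkCos g (Subgroup.zpowers h) x) W - bd g n) ∧
      ∀ k (hk : k < W.length),
        0 ≤ n (R (mkCos g (Subgroup.zpowers h) x ⋆ wordG (W.take k)) W[k]) := by
  have hp : 0 < W.length := List.length_pos_iff.2 hW
  have hhJ : h ∈ J := by
    rw [mk_rt, eq_comm, mk_eq] at hcl; rw [hh]; exact hcl
  have hyJ : ∀ i, mkCos g J (yz x W i) = mkCos g J x ⋆ wordG (W.take (i % (W.length : ℤ)).toNat) := by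
    intro i
    have e : i = i % (W.length : ℤ) + (i / (W.length : ℤ)) * W.length := by
      rw [mul_comm, Int.emod_add_mul_ediv]
    have e2 : yz x W i = h ^ (i / (W.length : ℤ)) * yz x W (i % (W.length : ℤ)) := by
      conv_lhs => rw [e]
      rw [yz_shift x W hW, ← hh]
    have e3 : i % (W.length : ℤ) = ((i % (W.length : ℤ)).toNat : ℕ) := by
      have := Int.emod_nonneg i (b := (W.length : ℤ)) (by omega); omega
    have e4 : yz x W (i % (W.length : ℤ)) = x * wordG (W.take (i % (W.length : ℤ)).toNat) := by
      conv_lhs => rw [e3]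
      exact yz_nat x W _ (md_lt hW i)
    rw [mk_rt, ← e4, eq_comm, mk_eq, e2]
    simpa using J.zpow_mem hhJ _
  obtain ⟨hA, hB⟩ := geo (y := yz x W) (ℓ := lz W hW) (yz_step x W hW) hK (by
    intro i m hm
    rw [yz_step x W hW, ← mk_rt, hyJ]
    refine H1 _ (md_lt hW i) m ?_
    have e : lz W hW (i + 1) = W[((i % (W.length : ℤ)).toNat + 1) % W.length]'(Nat.mod_lt _ hp) := by
      unfold lz
      have : ((i + 1) % (W.length : ℤ)).toNat = ((i % (W.length : ℤ)).toNat + 1) % W.length := by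
        have e3 : i % (W.length : ℤ) = ((i % (W.length : ℤ)).toNat : ℕ) := by
          have := Int.emod_nonneg i (b := (W.length : ℤ)) (by omega); omega
        have : (i + 1) % (W.length : ℤ) = ((((i % (W.length : ℤ)).toNat + 1) % W.length : ℕ) : ℤ) := by
          push_cast; rw [← e3]; simp
        rw [this, Int.toNat_natCast]
      simp only [this]
    rw [← e]; exact hm) (by
    intro i
    obtain ⟨a, h1, h2, h3⟩ := H2 _ (md_lt hW i)
    rw [← hyJ] at h2 h3
    exact ⟨a, h1, h2, h3⟩)
  have hnm : nm (ch (mkCos g (Subgroup.zpowers h) x) W) = W.length := by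
    apply nm_nocancel
    rintro a1 l a2 b1 m b2 e1 e2 ⟨h1, h2⟩
    rw [mk_rt, mk_rt, mk_rt, mk_eq] at h1
    obtain ⟨k, hk⟩ := Subgroup.mem_zpowers_iff.1 h1
    have w1 : wpow W 1 = W := by simp [wpow]
    obtain ⟨f1, f2⟩ := wpow_split x W hW 1 a1 l a2 (by rw [w1]; exact e1)
    obtain ⟨f3, f4⟩ := wpow_split x W hW 1 b1 m b2 (by rw [w1]; exact e2)
    refine hA a1.length (b1.length + k * W.length) ⟨?_, ?_⟩
    · rw [yz_shift x W hW, ← hh, f4, f2, f1, hk]; group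
    · rw [lz_shift, f3, f1, h2]
  refine ⟨hnm, ?_⟩
  obtain ⟨c, hc, y, hy⟩ := conjLen_spec (wordG W)
  obtain ⟨q, rfl⟩ := exists_word y
  obtain ⟨xh, hxh⟩ : ∃ xh, xh = mkCos g (Subgroup.zpowers h) x := ⟨_, rfl⟩
  have hclX : xh ⋆ wordG W = xh := by
    rw [hxh, mk_rt, eq_comm, mk_eq, ← hh]; exact Subgroup.mem_zpowers h
  -- lower bound
  have hlow : ∀ m, (c.length : ℤ) ≤ nm (ch xh W - bd g m) := by
    intro m
    by_cases h1 : wordG W = 1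
    · have : conjLen (wordG W) ≤ 0 := conjLen_le [] 1 (by simp [h1])
      have := nm_nonneg (ch xh W - bd g m)
      omega
    · have hSh : Sh c := by
        refine ⟨fun h2 => h1 (by rw [← hy, h2]; simp), fun w' y' h' => ?_⟩
        rw [hc]
        refine conjLen_le w' (wordG q * y') ?_
        rw [← hy, ← h']; group
      obtain ⟨m', hm'⟩ := conj_bd hclX hy
      have := alpha hSh (x := x * wordG q) (h := h) (by rw [hh, ← hy]; group) (m - m')
      rw [← mk_rt, ← hxh, map_sub, ← hm'] at this
      convert this using 2
      abel
  obtain ⟨N, hN⟩ : ∃ N : ℕ, N = 2 * q.length + 1 := ⟨_, rfl⟩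
  obtain ⟨n, hn1, hn2⟩ := hB (ch x (wpow W N)) (by
    intro v l hv
    obtain ⟨a1, a2, e, rfl⟩ := val_ch_pos hv
    obtain ⟨f1, f2⟩ := wpow_split x W hW N a1 l a2 e
    exact ⟨a1.length, by rw [f2]; rfl, f1.symm⟩)
  have hup : nm (ch x (wpow W N) - bd g n) ≤ 2 * q.length + N * c.length := by
    obtain ⟨m, hm⟩ := exists_bd x (w := wpow W N) (w' := q ++ wpow c N ++ winv q) (by
      rw [wordG_append, wordG_append, wordG_wpow, wordG_wpow, wordG_winv, ← hy, conj_pow])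
    refine (hn1 m).trans ?_
    rw [← hm, sub_sub_cancel]
    refine (nm_ch _ _).trans ?_
    simp only [List.length_append, wpow_length, winv_length]
    push_cast; linarith
  have hpush := nm_push (mkCos g (Subgroup.zpowers h)) (ch x (wpow W N) - bd g n)
  rw [push_sub, push_ch (Eqv_mk _), push_bd (Eqv_mk _), ← hxh, ch_wpow hclX] at hpush
  obtain ⟨n', hn'⟩ : ∃ n', n' = Finsupp.mapDomain (mkCos g (Subgroup.zpowers h)) n := ⟨_, rfl⟩
  rw [← hn', ← hermite N (by omega)] at hpush
  obtain ⟨i, hi⟩ : ∃ i : Fin N, nm (ch xh W - bd g (hq n' N i)) ≤ c.length := by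
    by_contra hcon
    push Not at hcon
    have := Finset.sum_le_sum (s := (Finset.univ : Finset (Fin N))) (f := fun _ => (c.length : ℤ) + 1)
      (g := fun i => nm (ch xh W - bd g (hq n' N i))) (fun i _ => hcon i)
    simp only [Finset.sum_const, Finset.card_univ, Fintype.card_fin, nsmul_eq_mul] at this
    have e : (N : ℤ) * (c.length + 1) = N * c.length + N := by ring
    rw [e] at this
    have : (N : ℤ) = 2 * q.length + 1 := by rw [hN]; push_cast; ring
    linarith
  rw [← hxh]
  refine ⟨hq n' N i, ?_, ?_, ?_⟩
  · rw [← hc]; exact le_antisymm hi (hlow _)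
  · intro m
    rw [sub_sub, ← map_add]
    exact hi.trans (hlow _)
  · intro k hk
    have hnn : 0 ≤ n' (R (xh ⋆ wordG (W.take k)) W[k]) := by
      classical
      rw [hn', Finsupp.mapDomain, Finsupp.sum_apply]
      apply Finset.sum_nonneg
      intro t ht
      simp only [Finsupp.single_apply]
      split_ifs with h1
      · rw [hxh, mk_rt, ← R_comp (Eqv_mk _), mk_eq] at h1
        obtain ⟨j, hj⟩ := Subgroup.mem_zpowers_iff.1 h1
        have h2 := hn2 (k + (-j) * W.length)
        rw [lz_shift, yz_shift x W hW, R_left, lz_nat W hW k hk, yz_nat x W k hk, ← hh, zpow_neg, hj] at h2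
        rwa [mul_inv_rev, inv_inv, mul_assoc, inv_mul_cancel, mul_one] at h2
      · exact le_rfl
    rw [hq, Finsupp.mapRange_apply]
    positivity
end



section
variable {g : ℕ} {J : Subgroup (Gamma g)}

abbrev DD (g : ℕ) (J : Subgroup (Gamma g)) := (Cos g J × Fin (2 * g)) × Bool

def cLet (d : DD g J) : Letter g := (cover g J).dLet d
def cTail (d : DD g J) : Cos g J := (cover g J).dTail d
def cHead (d : DD g J) : Cos g J := (cover g J).dHead d
def cRev (d : DD g J) : DD g J := (d.1, !d.2)
def cWord (l : List (DD g J)) : List (Letter g) := l.map cLet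
def cRevW (l : List (DD g J)) : List (DD g J) := (l.map cRev).reverse
def cBd (f : Cos g J) : List (DD g J) := relWalk g J f (relatorWord g)
def Wk (u v : Cos g J) (l : List (DD g J)) : Prop := (cover g J).WalkFrom u v l
def GC (l : List (DD g J)) : Prop := (cover g J).GoodCycle l
def IsCyc (l : List (DD g J)) : Prop := (cover g J).IsCycle l
def FLp (l : List (DD g J)) : Prop := (cover g J).faceLoop Set.univ l
def EM (l l' : List (DD g J)) : Prop := (cover g J).elemMove Set.univ Set.univ l l'
def Htp (u v : Cos g J) (l l' : List (DD g J)) : Prop :=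
  (cover g J).Homotopic Set.univ Set.univ u v l l'


def dt (v : Cos g J) (l : Letter g) : DD g J :=
  if l.2 then ((v, l.1), true) else ((v ⋆ letterG l, l.1), false)

@[simp] lemma dLet_dt (v : Cos g J) (l : Letter g) : cLet (dt v l) = l := by
  rcases l with ⟨i, b⟩; cases b <;> rfl

@[simp] lemma dTail_dt (v : Cos g J) (l : Letter g) : cTail (dt v l) = v := by
  rcases l with ⟨i, b⟩; cases b
  · change v ⋆ letterG (i, false) ⋆ PresentedGroup.of i = v
    simp [letterG]
  · rfl

@[simp] lemma dHead_dt (v : Cos g J) (l : Letter g) : cHead (dt v l) = v ⋆ letterG l := by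
  rcases l with ⟨i, b⟩; cases b <;> rfl

lemma dt_eta (d : DD g J) : dt (cTail d) (cLet d) = d := by
  rcases d with ⟨⟨v, i⟩, b⟩; cases b
  · change (((v ⋆ PresentedGroup.of i ⋆ letterG (i, false), i), false) : DD g J) = _
    simp [letterG]
  · rfl

lemma dRev_dt (v : Cos g J) (l : Letter g) :
    cRev (dt v l) = dt (v ⋆ letterG l) (inv l) := by
  rcases l with ⟨i, b⟩; cases b
  · rfl
  · have := rt_letter_inv v (i, true)
    simp only [inv, Bool.not_true] at this
    simp [dt, inv, cRev, this]

lemma relWalk_cons (v : Cos g J) (l : Letter g) (w : List (Letter g)) :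
    relWalk g J v (l :: w) = dt v l :: relWalk g J (v ⋆ letterG l) w := by
  rcases l with ⟨i, b⟩; cases b <;> rfl

lemma relWalk_append (v : Cos g J) (w w' : List (Letter g)) :
    relWalk g J v (w ++ w') = relWalk g J v w ++ relWalk g J (v ⋆ wordG w) w' := by
  induction w generalizing v with
  | nil => simp [relWalk]
  | cons l w ih => rw [List.cons_append, relWalk_cons, ih, relWalk_cons, wordG_cons, ← rt_mul]; rfl

lemma wordOf_relWalk (v : Cos g J) (w : List (Letter g)) :
    cWord (relWalk g J v w) = w := by
  induction w generalizing v with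
  | nil => rfl
  | cons l w ih =>
    rw [relWalk_cons]
    exact congrArg₂ List.cons (dLet_dt v l) (ih _)

lemma relWalk_length (v : Cos g J) (w : List (Letter g)) : (relWalk g J v w).length = w.length := by
  conv_rhs => rw [← wordOf_relWalk v w]
  simp [cWord]

lemma walk_nil_inv {Y : Complex g} {u v : Y.V} (h : Y.WalkFrom u v []) : v = u := by
  cases h; rfl

lemma walk_cons_inv {Y : Complex g} {u v : Y.V} {d : Y.D} {l : List Y.D}
    (h : Y.WalkFrom u v (d :: l)) : u = Y.dTail d ∧ Y.WalkFrom (Y.dHead d) v l := by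
  cases h with
  | cons _ h => exact ⟨rfl, h⟩

lemma Wk_nil {u v : Cos g J} : Wk u v [] ↔ v = u := by
  constructor
  · exact fun h => walk_nil_inv h
  · rintro rfl; exact Complex.WalkFrom.nil (Y := cover g J) _

lemma Wk_cons {u v : Cos g J} {d : DD g J} {l : List (DD g J)} :
    Wk u v (d :: l) ↔ u = cTail d ∧ Wk (cHead d) v l := by
  constructor
  · exact fun h => walk_cons_inv h
  · rintro ⟨rfl, h⟩
    exact Complex.WalkFrom.cons (Y := cover g J) d h

lemma cHead_eq (d : DD g J) : cHead d = cTail d ⋆ letterG (cLet d) := by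
  conv_lhs => rw [← dt_eta d, dHead_dt]

lemma walk_iff {u v : Cos g J} {l : List (DD g J)} : Wk u v l ↔
    l = relWalk g J u (cWord l) ∧ v = u ⋆ wordG (cWord l) := by
  induction l generalizing u with
  | nil =>
    rw [Wk_nil]
    have : u ⋆ wordG (cWord ([] : List (DD g J))) = u := rt_one u
    rw [this]
    exact ⟨fun h => ⟨rfl, h⟩, fun h => h.2⟩
  | cons d l ih =>
    have e : cWord (d :: l) = cLet d :: cWord l := rfl
    rw [Wk_cons, ih, e, relWalk_cons, wordG_cons, ← rt_mul, cHead_eq]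
    constructor
    · rintro ⟨rfl, h1, h2⟩
      rw [dt_eta]
      exact ⟨congrArg (List.cons d) h1, h2⟩
    · rintro ⟨h1, h2⟩
      obtain ⟨h3, h4⟩ := List.cons.inj h1
      have hu : u = cTail d := by rw [h3, dTail_dt]
      rw [← hu]
      exact ⟨rfl, h4, h2⟩

lemma walk_rel (u : Cos g J) (w : List (Letter g)) :
    Wk u (u ⋆ wordG w) (relWalk g J u w) := by
  rw [walk_iff, wordOf_relWalk]; exact ⟨rfl, rfl⟩

lemma mem_relWalk {u : Cos g J} {w : List (Letter g)} {d : DD g J} :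
    d ∈ relWalk g J u w ↔ ∃ a l b, w = a ++ l :: b ∧ d = dt (u ⋆ wordG a) l := by
  induction w generalizing u with
  | nil => simp [relWalk]
  | cons m w ih =>
    rw [relWalk_cons, List.mem_cons, ih]
    constructor
    · rintro (h | ⟨a, l, b, h1, h2⟩)
      · exact ⟨[], m, w, rfl, by rw [wordG_nil, rt_one]; exact h⟩
      · exact ⟨m :: a, l, b, by rw [h1]; rfl, by rw [wordG_cons, ← rt_mul]; exact h2⟩
    · rintro ⟨a, l, b, h1, h2⟩
      rcases a with _ | ⟨c, a⟩
      · obtain ⟨h3, h4⟩ := List.cons.inj h1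
        left; rw [h2, h3, wordG_nil, rt_one]
      · obtain ⟨h3, h4⟩ := List.cons.inj h1
        right; exact ⟨a, l, b, h4, by rw [h2, h3, wordG_cons, ← rt_mul]⟩

lemma wordOf_revW (l : List (DD g J)) :
    cWord (cRevW l) = winv (cWord l) := by
  simp only [cWord, cRevW, winv, List.map_reverse, List.map_map]
  rfl

lemma wordOf_append (l l' : List (DD g J)) :
    cWord (l ++ l') = cWord l ++ cWord l' :=
  List.map_append

lemma winv_cons (l : Letter g) (w : List (Letter g)) : winv (l :: w) = winv w ++ [inv l] := by
  simp [winv]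

lemma revW_relWalk (u : Cos g J) (w : List (Letter g)) :
    cRevW (relWalk g J u w) = relWalk g J (u ⋆ wordG w) (winv w) := by
  induction w generalizing u with
  | nil => rfl
  | cons m w ih =>
    rw [relWalk_cons, winv_cons, relWalk_append, wordG_cons, ← rt_mul, ← ih, wordG_winv, rt_cancel]
    have : relWalk g J (u ⋆ letterG m) [inv m] = [cRev (dt u m)] := by
      rw [relWalk_cons, dRev_dt]; rfl
    rw [this]
    simp [cRevW]

lemma faceLoop_one {b : List (DD g J)} (h : FLp b) :
    wordG (cWord b) = 1 := by
  obtain ⟨f, n, h⟩ : ∃ (f : Cos g J) (n : ℕ), b = (cBd f).rotate n ∨ b = cRevW ((cBd f).rotate n) := by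
    obtain ⟨f, _, n, h⟩ := h
    exact ⟨f, n, h⟩
  have key : wordG (cWord ((cBd f).rotate n)) = 1 := by
    have e : cWord ((cBd f).rotate n) = (relatorWord g).rotate n := by
      have := wordOf_relWalk (J := J) f (relatorWord g)
      conv_rhs => rw [← this]
      unfold cWord
      rw [List.map_rotate]; rfl
    rw [e, List.rotate_eq_drop_append_take_mod, wordG_append]
    have h2 := wordG_relator g
    rw [← List.take_append_drop (n % (relatorWord g).length) (relatorWord g), wordG_append] at h2
    exact mul_eq_one_comm.1 h2
  rcases h with rfl | rfl
  · exact key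
  · rw [wordOf_revW, wordG_winv, key, inv_one]

lemma elemMove_word {l l' : List (DD g J)} (h : EM l l') :
    wordG (cWord l) = wordG (cWord l') := by
  have h' : (∃ (l₁ l₂ : List (DD g J)) (d : DD g J), True ∧ l = l₁ ++ l₂ ∧
      l' = l₁ ++ d :: cRev d :: l₂) ∨
      (∃ l₁ l₂ b, FLp b ∧ l = l₁ ++ l₂ ∧ l' = l₁ ++ b ++ l₂) := h
  rcases h' with ⟨l1, l2, d, _, rfl, rfl⟩ | ⟨l1, l2, b, hb, rfl, rfl⟩
  · have e : cWord (d :: cRev d :: l2) =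
      cLet d :: inv (cLet d) :: cWord l2 := rfl
    rw [wordOf_append, wordOf_append, e]; simp [letterG_inv]
  · rw [wordOf_append, wordOf_append, wordOf_append]; simp [faceLoop_one hb]

lemma homotopic_word {u v : Cos g J} {l l' : List (DD g J)}
    (h : Htp u v l l') :
    wordG (cWord l) = wordG (cWord l') := by
  induction h with
  | rel a b h =>
    rcases h.2.2.2.2 with h | h
    · exact elemMove_word h
    · exact (elemMove_word h).symm
  | refl => rfl
  | symm _ _ _ ih => exact ih.symm
  | trans _ _ _ _ _ h1 h2 => exact h1.trans h2

lemma word_homotopic (u : Cos g J) {w w' : List (Letter g)} (h : wordG w = wordG w') :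
    Htp u (u ⋆ wordG w) (relWalk g J u w) (relWalk g J u w') := by
  have key : ∀ w w' : List (Letter g), wordG w = wordG w' →
      EM (relWalk g J u w') (relWalk g J u w) →
      {l | Htp u (u ⋆ wordG w) (relWalk g J u w) l} =
      {l | Htp u (u ⋆ wordG w') (relWalk g J u w') l} := by
    intro w w' h hm
    have hh : Htp u (u ⋆ wordG w) (relWalk g J u w)
        (relWalk g J u w') := by
      refine .rel _ _ ⟨walk_rel u w, by rw [h]; exact walk_rel u w', fun _ _ => trivial,
        fun _ _ => trivial, Or.inr hm⟩
    rw [← h]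
    ext l
    exact ⟨fun h1 => .trans _ _ _ (.symm _ _ hh) h1, fun h1 => .trans _ _ _ hh h1⟩
  have := word_invariant (fun w => {l | Htp u (u ⋆ wordG w)
      (relWalk g J u w) l}) (by
      intro a b l
      apply key
      · simp [letterG_inv]
      · left
        refine ⟨relWalk g J u a, relWalk g J (u ⋆ wordG a) b, dt (u ⋆ wordG a) l, trivial, ?_, ?_⟩
        · rw [relWalk_append]; rfl
        · rw [relWalk_append, relWalk_cons, relWalk_cons, rt_letter_inv, ← dRev_dt]; rfl) (by
      intro a b
      apply key
      · simp [wordG_relator]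
      · right
        refine ⟨relWalk g J u a, relWalk g J (u ⋆ wordG a) b, relWalk g J (u ⋆ wordG a) (relatorWord g),
          ⟨(u ⋆ wordG a : Cos g J), trivial, 0, Or.inl ?_⟩, ?_, ?_⟩
        · exact (List.rotate_zero _).symm
        · rw [relWalk_append]; rfl
        · rw [relWalk_append, relWalk_append, wordG_append, wordG_relator, mul_one]; rfl) h
  have h2 : relWalk g J u w' ∈ {l | Htp u (u ⋆ wordG w)
      (relWalk g J u w) l} := by
    rw [this]; exact .refl _
  exact h2

lemma good_iff (u : Cos g J) (w : List (Letter g)) (hc : u ⋆ wordG w = u) :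
    GC (relWalk g J u w) ↔ Sh w := by
  have hw : Wk u u (relWalk g J u w) := by
    have := walk_rel u w; rwa [hc] at this
  constructor
  · rintro ⟨_, ⟨_, _, h1⟩, h2⟩
    constructor
    · intro h3
      apply h1
      refine ⟨u, hw, ?_⟩
      have := word_homotopic u (w := w) (w' := []) h3
      rwa [hc] at this
    · intro w' y hy
      obtain ⟨q, rfl⟩ := exists_word y
      have hcl : u ⋆ wordG q ⋆ wordG w' = u ⋆ wordG q := by
        have : wordG w' = (wordG q)⁻¹ * wordG w * wordG q := by rw [← hy]; group
        rw [this, ← rt_mul, ← rt_mul, rt_cancel, hc]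
      have := h2 (relWalk g J (u ⋆ wordG q) w') ⟨u, (u ⋆ wordG q : Cos g J), relWalk g J u q, hw, by
        have := walk_rel (u ⋆ wordG q) w'; rw [hcl] at this; exact this, walk_rel u q, fun _ _ => trivial,
        fun _ _ => trivial, fun _ _ => trivial, by
          have := word_homotopic u (w := w) (w' := q ++ w' ++ winv q) (by
            rw [← hy]; simp [wordG_winv, mul_assoc])
          rw [relWalk_append, relWalk_append, wordG_append, ← rt_mul, hcl, hc, ← revW_relWalk] at this
          exact this⟩
      have h5 := relWalk_length u w
      have h6 := relWalk_length (u ⋆ wordG q) w'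
      exact h5.symm.le.trans (this.trans h6.le)
  · intro h
    have hcyc : IsCyc (relWalk g J u w) := by
      refine ⟨?_, u, hw⟩
      intro h0
      apply Sh_ne h
      have := relWalk_length u w
      rw [h0] at this
      exact List.length_eq_zero_iff.1 this.symm
    refine ⟨hcyc, ⟨hcyc, fun _ _ => trivial, ?_⟩, ?_⟩
    · rintro ⟨v, _, h2⟩
      have := homotopic_word h2
      rw [wordOf_relWalk] at this
      exact h.1 this
    · have key : ∀ (u' : Cos g J) (c' q : List (DD g J)),
          Htp u' u' (relWalk g J u w) (q ++ c' ++ cRevW q) → (relWalk g J u w).length ≤ c'.length := by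
        intro u' c' q h2
        have := homotopic_word h2
        rw [wordOf_relWalk, wordOf_append, wordOf_append, wordOf_revW, wordG_append, wordG_append,
          wordG_winv] at this
        have := h.2 _ _ this.symm
        rw [relWalk_length]
        simpa [cWord] using this
      rintro c' ⟨u', v, q, _, _, _, _, _, _, h2⟩
      exact key u' c' q h2

lemma dt_edge {v v' : Cos g J} {l l' : Letter g} (h : (dt v l).1 = (dt v' l').1) :
    (v = v' ∧ l = l') ∨ (v' = v ⋆ letterG l ∧ l' = inv l) := by
  have h2 : dt v l = dt v' l' ∨ dt v' l' = cRev (dt v l) := by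
    generalize dt v l = D1 at h ⊢
    generalize dt v' l' = D2 at h ⊢
    obtain ⟨e, b⟩ := D1
    obtain ⟨e', b'⟩ := D2
    change e = e' at h
    subst h
    cases b <;> cases b' <;> simp [cRev]
  rcases h2 with h | h
  · left; exact ⟨by rw [← dTail_dt v l, h, dTail_dt], by rw [← dLet_dt v l, h, dLet_dt]⟩
  · right; rw [dRev_dt] at h
    exact ⟨by rw [← dTail_dt v' l', h, dTail_dt], by rw [← dLet_dt v' l', h, dLet_dt]⟩

lemma coreE1_iff (v : Cos g J) (l : Letter g) : (dt v l).1 ∈ (coreE1 g J : Set (Cos g J × Fin (2 * g))) ↔ E1 v l := by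
  constructor
  · rintro ⟨c, hc, b, hb⟩
    obtain ⟨u, hu⟩ : ∃ u : Cos g J, Wk u u c := hc.1.2
    obtain ⟨h1, h2⟩ := walk_iff.1 hu
    obtain ⟨w, hw⟩ : ∃ w, w = cWord c := ⟨_, rfl⟩
    rw [← hw] at h1 h2
    subst h1
    have hs := (good_iff u w h2.symm).1 hc
    obtain ⟨a, m, b', h3, h4⟩ := mem_relWalk.1 hb
    have h5 : E1 (u ⋆ wordG a) m := by
      subst h3; exact E1_mem hs h2.symm
    have : (dt v l).1 = (dt (u ⋆ wordG a) m).1 := by rw [← h4]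
    rcases dt_edge this with ⟨h6, h7⟩ | ⟨h6, h7⟩
    · rw [h6, h7]; exact h5
    · have := E1_rev h5
      rw [h6, h7] at this; simpa using this
  · rintro ⟨w, hs, hc⟩
    refine ⟨relWalk g J v (l :: w), (good_iff v _ hc).2 hs, (dt v l).2, ?_⟩
    rw [relWalk_cons]; exact List.mem_cons_self
end



section
variable {g : ℕ} {C J : Subgroup (Gamma g)}

lemma rel_take (l : Letter g) : relatorWord g =
    (relatorWord g).take (idx l) ++ l :: (relatorWord g).drop (idx l + 1) := by
  have h : idx l < (relatorWord g).length := by rw [rel_length]; exact idx_lt l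
  have := take_split (relatorWord g) (idx l) h
  rwa [rel_get, rl_idx] at this

lemma rel_pref {a b : List (Letter g)} {l : Letter g} (h : relatorWord g = a ++ l :: b) :
    wordG a = P g (idx l) := by
  have hl : a.length < (relatorWord g).length := by rw [h]; simp
  have h1 := rel_get a.length hl
  have h2 : (relatorWord g)[a.length] = l := by simp [h]
  have h3 : idx l = a.length := by rw [← h2, h1, idx_rl]
  rw [P, h3, h]; simp

lemma mem_bd {f v : Cos g J} {l : Letter g} : dt v l ∈ cBd f ↔ L v l = f := by
  rw [cBd, mem_relWalk]
  constructor
  · rintro ⟨a, m, b, h1, h2⟩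
    have e1 : v = f ⋆ wordG a := by rw [← dTail_dt v l, h2, dTail_dt]
    have e2 : l = m := by rw [← dLet_dt v l, h2, dLet_dt]
    rw [e1, e2, L, ← rel_pref h1, rt_mul, mul_inv_cancel, rt_one]
  · rintro rfl
    refine ⟨_, l, _, rel_take l, ?_⟩
    have : L v l ⋆ wordG ((relatorWord g).take (idx l)) = v := by
      rw [← P, L, rt_mul, inv_mul_cancel, rt_one]
    rw [this]

lemma mem_bd' {f : Cos g J} {d : DD g J} : d ∈ cBd f ↔ L (cTail d) (cLet d) = f := by
  rw [← mem_bd, dt_eta]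

variable (φ : Cos g C → Cos g J) (n : Cos g C →₀ ℤ) (t : ℤ)

def QV (v : Cos g J) : Prop := ∃ x, φ x = v ∧ ∀ l : Letter g, n (L x l) = t
def QD (v : Cos g J) (l : Letter g) : Prop := ∃ x, φ x = v ∧ n (L x l) = t ∧ n (R x l) = t
def QE (e : Cos g J × Fin (2 * g)) : Prop := QD φ n t e.1 (e.2, true)
def QF (f : Cos g J) : Prop := ∃ x, φ x = f ∧ n x = t
def QC (c : Cos g J ⊕ (Cos g J × Fin (2 * g)) ⊕ Cos g J) : Prop :=
  Sum.elim (QV φ n t) (Sum.elim (QE φ n t) (QF φ n t)) c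

variable {φ n t}

lemma QD_rev (hφ : Eqv g φ) {v : Cos g J} {l : Letter g} (h : QD φ n t v l) :
    QD φ n t (v ⋆ letterG l) (inv l) := by
  obtain ⟨x, h1, h2, h3⟩ := h
  refine ⟨x ⋆ letterG l, by rw [hφ, h1], h3, ?_⟩
  rw [R_inv]; exact h2

lemma QD_rev' (hφ : Eqv g φ) {v : Cos g J} {l : Letter g}
    (h : QD φ n t (v ⋆ letterG l) (inv l)) : QD φ n t v l := by
  have := QD_rev hφ h
  rwa [rt_letter_inv, inv_inv'] at this

lemma QE_dt (hφ : Eqv g φ) (v : Cos g J) (l : Letter g) : QE φ n t (dt v l).1 ↔ QD φ n t v l := by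
  rcases l with ⟨i, b⟩; cases b
  · exact ⟨QD_rev' hφ, QD_rev hφ⟩
  · exact Iff.rfl

lemma LR_const (hg : 0 < g) {x : Cos g C} (h : ∀ l : Letter g, n (L x l) = n (R x l)) (l m : Letter g) :
    n (L x l) = n (L x m) := by
  have : ∀ p, n (L x (lam hg p)) = n (L x (lam hg 0)) := by
    intro p
    induction p with
    | zero => rfl
    | succ p ih => rw [← ih, h (lam hg p), R_lam]
  rw [← lam_posLv hg l, ← lam_posLv hg m, this (posLv l), this (posLv m)]

lemma inc_ve (v : Cos g J) (e : Cos g J × Fin (2 * g))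
    (h : e.1 = v ∨ e.1 ⋆ letterG (e.2, true) = v) : ∃ l, e = (dt v l).1 := by
  rcases h with rfl | rfl
  · exact ⟨(e.2, true), rfl⟩
  · exact ⟨(e.2, false), Prod.ext (rt_letter_inv e.1 (e.2, true)).symm rfl⟩

lemma inc_vf (v f : Cos g J) (h : ∃ d ∈ cBd f, cTail d = v) : ∃ l : Letter g, L v l = f := by
  obtain ⟨d, h1, rfl⟩ := h
  exact ⟨cLet d, mem_bd'.1 h1⟩

lemma inc_ef (e : Cos g J × Fin (2 * g)) (f : Cos g J) (h : ∃ b, (e, b) ∈ cBd f) :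
    ∃ (v : Cos g J) (l : Letter g), L v l = f ∧ e = (dt v l).1 := by
  obtain ⟨b, h1⟩ := h
  exact ⟨_, _, mem_bd'.1 h1, by rw [dt_eta]⟩

lemma coreV1_of {v : Cos g J} {l : Letter g} (h : E1 v l) : v ∈ (coreV1 g J : Set (Cos g J)) := by
  refine ⟨(dt v l).1, (coreE1_iff v l).2 h, ?_⟩
  rcases l with ⟨i, b⟩; cases b
  · right; exact dTail_dt v (i, false)
  · left; rfl

lemma QC_step (hg : 0 < g) (hφ : Eqv g φ)
    (hn : ∀ x l, val (bd g n) x l ≠ 0 → E1 (φ x) l)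
    {a b : (cover g J).Cell} (hab : (cover g J).incid a b)
    (hb : ¬ (cover g J).inSub (coreS1 g J) b) (h : QC φ n t a) : QC φ n t b := by
  have hLR : ∀ x (l : Letter g), ¬ E1 (φ x) l → n (L x l) = n (R x l) := by
    intro x l h1
    by_contra h2
    apply h1; apply hn; rw [val_bd]; omega
  have vert : ∀ v : Cos g J, v ∉ (coreV1 g J : Set (Cos g J)) →
      ∀ x (l : Letter g), φ x = v → n (L x l) = t → QV φ n t v := by
    intro v hv x l h1 h2
    refine ⟨x, h1, fun m => ?_⟩
    rw [← h2]
    exact LR_const hg (fun l => hLR x l (fun h3 => hv (coreV1_of (h1 ▸ h3)))) m l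
  have edge : ∀ v l, (dt v l).1 ∉ (coreE1 g J : Set (Cos g J × Fin (2 * g))) →
      ∀ x, φ x = v → n (L x l) = t → QD φ n t v l := by
    intro v l he x h1 h2
    refine ⟨x, h1, h2, ?_⟩
    rw [← h2, hLR x l]
    rw [h1, ← coreE1_iff]; exact he
  have face : ∀ (v : Cos g J) (l : Letter g) x, φ x = v → n (L x l) = t → QF φ n t (L v l) := by
    intro v l x h1 h2
    exact ⟨L x l, by rw [L_comp hφ, h1], h2⟩
  have facev : ∀ (v f : Cos g J) (l : Letter g), L v l = f → QF φ n t f → ∃ x, φ x = v ∧ n (L x l) = t := by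
    rintro v f l h1 ⟨x, h2, h3⟩
    have e : ∀ {X : Type} [RAct g X] (y : X), L (y ⋆ P g (idx l)) l = y := by
      intro X _ y; rw [L, rt_mul, mul_inv_cancel, rt_one]
    refine ⟨x ⋆ P g (idx l), ?_, by rw [e, h3]⟩
    rw [hφ, h2, ← h1, L, rt_mul, inv_mul_cancel, rt_one]
  have key : ∀ (a b : (cover g J).Cell), ((cover g J).inc0 a b →
      (¬ (cover g J).inSub (coreS1 g J) b → QC φ n t a → QC φ n t b) ∧
      (¬ (cover g J).inSub (coreS1 g J) a → QC φ n t b → QC φ n t a)) := by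
    clear hab hb h
    intro a b hab
    match a, b, hab with
    | Sum.inl v, Sum.inr (Sum.inl e), hab =>
      obtain ⟨l, hl⟩ := inc_ve v e hab
      subst hl
      constructor
      · intro hb h
        obtain ⟨x, h1, h2⟩ : QV φ n t v := h
        exact (QE_dt hφ v l).2 (edge v l hb x h1 (h2 l))
      · intro hb h
        obtain ⟨x, h1, h2, _⟩ := (QE_dt hφ v l).1 h
        exact vert v hb x l h1 h2
    | Sum.inl v, Sum.inr (Sum.inr f), hab =>
      obtain ⟨l, hl⟩ := inc_vf v f hab
      constructor
      · intro hb h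
        obtain ⟨x, h1, h2⟩ : QV φ n t v := h
        exact hl ▸ face v l x h1 (h2 l)
      · intro hb h
        obtain ⟨x, h1, h2⟩ := facev v f l hl h
        exact vert v hb x l h1 h2
    | Sum.inr (Sum.inl e), Sum.inr (Sum.inr f), hab =>
      obtain ⟨v, l, hl, rfl⟩ := inc_ef e f hab
      constructor
      · intro hb h
        obtain ⟨x, h1, h2, _⟩ := (QE_dt hφ v l).1 h
        exact hl ▸ face v l x h1 h2
      · intro hb h
        obtain ⟨x, h1, h2⟩ := facev v f l hl h
        exact (QE_dt hφ v l).2 (edge v l hb x h1 h2)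
  rcases hab with hab | hab
  · exact (key a b hab).1 hb h
  · exact (key b a hab).2 hb h

def InfF (f : Cos g J) : Prop := ¬ coreFin g J ((cover g J).fCell f)

/-- the Z lemma -/
lemma zlemma (hg : 0 < g) (hφ : Eqv g φ)
    (hn : ∀ x l, val (bd g n) x l ≠ 0 → E1 (φ x) l) {f : Cos g C} (hf : InfF (φ f)) : n f = 0 := by
  by_contra hne
  apply hf
  refine ⟨fun h => h, ?_⟩
  refine Set.Finite.subset ((n.support.finite_toSet).image φ) ?_
  intro f' hf'
  have key : ∀ c, (cover g J).reachS (coreS1 g J) ((cover g J).fCell (φ f)) c → QC φ n (n f) c := by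
    intro c hc
    induction hc with
    | refl => exact (⟨f, rfl, rfl⟩ : QF φ n (n f) (φ f))
    | tail _ h ih => exact QC_step hg hφ hn h.1 h.2.2 ih
  obtain ⟨x, h1, h2⟩ : QF φ n (n f) f' := key _ hf'
  exact ⟨x, by simp [h2, hne], h1⟩

end


section
variable {g : ℕ} {J : Subgroup (Gamma g)}

lemma coreFin_ef {v : Cos g J} {l : Letter g} (h : ¬ E1 v l) {f₀ : Cos g J} (h₀ : L v l = f₀) :
    coreFin g J ((cover g J).eCell (dt v l).1) ↔ coreFin g J ((cover g J).fCell f₀) := by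
  have he : ¬ (cover g J).inSub (coreS1 g J) ((cover g J).eCell (dt v l).1) :=
    fun h1 => h ((coreE1_iff v l).1 h1)
  have hf : ¬ (cover g J).inSub (coreS1 g J) ((cover g J).fCell f₀) := fun h1 => h1
  have hi : (cover g J).inc0 ((cover g J).eCell (dt v l).1) ((cover g J).fCell f₀) :=
    ⟨(dt v l).2, (mem_bd.2 h₀ : dt v l ∈ cBd f₀)⟩
  constructor
  · rintro ⟨_, h2⟩
    refine ⟨hf, h2.subset fun f h3 => ?_⟩
    exact Relation.ReflTransGen.head ⟨Or.inl hi, he, hf⟩ h3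
  · rintro ⟨_, h2⟩
    refine ⟨he, h2.subset fun f h3 => ?_⟩
    exact Relation.ReflTransGen.head ⟨Or.inr hi, hf, he⟩ h3

def cE (g : ℕ) (J : Subgroup (Gamma g)) : Set (Cos g J × Fin (2 * g)) := (coreSub g J).sE
def cF (g : ℕ) (J : Subgroup (Gamma g)) : Set (Cos g J) := (coreSub g J).sF

lemma cE_iff (hJ : J ≠ ⊥) (v : Cos g J) (l : Letter g) :
    (dt v l).1 ∈ cE g J ↔ E1 v l ∨ ¬ InfF (L v l) := by
  have h1 : (dt v l).1 ∈ cE g J ↔ (dt v l).1 ∈ (coreE1 g J : Set (Cos g J × Fin (2 * g))) ∨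
      coreFin g J ((cover g J).eCell (dt v l).1) := by
    have : cE g J = coreE1 g J ∪ {e | coreFin g J ((cover g J).eCell e)} := by
      unfold cE coreSub; rw [if_neg hJ]
    rw [this]; exact Iff.rfl
  rw [h1, coreE1_iff, InfF, not_not]
  constructor
  · rintro (h | h)
    · exact Or.inl h
    · by_cases h2 : E1 v l
      · exact Or.inl h2
      · exact Or.inr ((coreFin_ef h2 rfl).1 h)
  · rintro (h | h)
    · exact Or.inl h
    · by_cases h2 : E1 v l
      · exact Or.inl h2
      · exact Or.inr ((coreFin_ef h2 rfl).2 h)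

lemma cF_iff (hJ : J ≠ ⊥) (f : Cos g J) : f ∈ cF g J ↔ ¬ InfF f := by
  have : cF g J = {f | coreFin g J ((cover g J).fCell f)} := by
    unfold cF coreSub; rw [if_neg hJ]
  rw [this, InfF, not_not]; exact Iff.rfl

lemma rel2_get (k : ℕ) (h : k < (relatorWord g ++ relatorWord g).length) (h0 : 0 < g) :
    (relatorWord g ++ relatorWord g)[k] = rl (k % (4 * g)) (Nat.mod_lt _ (by omega)) := by
  have hl := rel_length g
  have h' := h
  simp only [List.length_append, hl] at h'
  rw [List.getElem_append]
  split
  · rename_i h1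
    rw [rel_get]; congr 1; rw [Nat.mod_eq_of_lt (by omega)]
  · rename_i h1
    rw [rel_get]; congr 1; rw [hl] at h1 ⊢
    rw [Nat.mod_eq_sub_mod (by omega), Nat.mod_eq_of_lt (by omega)]

lemma corner (v : Cos g J) (l : Letter g) :
    [dt v l, dt (v ⋆ letterG l) (suc l)] <:+: cBd (L v l) ++ cBd (L v l) := by
  have hg : 0 < g := by have := idx_lt l; omega
  have hl := rel_length g
  have hi := idx_lt l
  have hk : idx l + 1 < (relatorWord g ++ relatorWord g).length := by simp [hl]; omega
  have e : relatorWord g ++ relatorWord g = (relatorWord g ++ relatorWord g).take (idx l) ++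
      l :: suc l :: (relatorWord g ++ relatorWord g).drop (idx l + 1 + 1) := by
    have h1 := take_split (relatorWord g ++ relatorWord g) (idx l) (by omega)
    rw [List.drop_eq_getElem_cons hk, rel2_get _ _ hg, rel2_get _ _ hg] at h1
    have h2 : rl (idx l % (4 * g)) (Nat.mod_lt _ (by omega)) = l := by
      conv_rhs => rw [← rl_idx l]
      congr 1; exact Nat.mod_eq_of_lt hi
    rw [h2] at h1
    exact h1
  have e2 : (relatorWord g ++ relatorWord g).take (idx l) = (relatorWord g).take (idx l) := by
    rw [List.take_append_of_le_length (by omega)]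
  have e3 : cBd (L v l) ++ cBd (L v l) = relWalk g J (L v l) (relatorWord g ++ relatorWord g) := by
    rw [relWalk_append, wordG_relator, rt_one]; rfl
  have e4 : L v l ⋆ wordG ((relatorWord g).take (idx l)) = v := by
    rw [← P, L, rt_mul, inv_mul_cancel, rt_one]
  rw [e3, e, e2, relWalk_append, e4, relWalk_cons, relWalk_cons]
  exact ⟨_, _, by rw [List.append_assoc]; rfl⟩

def bSt (d d' : DD g J) : Prop := (cover g J).bStep (coreSub g J).sE (coreSub g J).sF d d'

lemma bSt_out (hJ : J ≠ ⊥) {v v' : Cos g J} {l l' : Letter g} (h : bSt (dt v l) (dt v' l')) :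
    E1 v l ∧ InfF (L v l) ∧ v' = v ⋆ letterG l ∧
      ∀ m, gapN l m < gapN l l' → ¬ E1 (v ⋆ letterG l) m := by
  have h' : (dt v l).1 ∈ cE g J ∧ ((dt v' l').1 ∈ cE g J ∧ cHead (dt v l) = cTail (dt v' l') ∧
      ∀ d'' : DD g J, d''.1 ∈ cE g J → cHead (dt v l) = cTail d'' →
        gapN (cLet (dt v l)) (cLet (dt v' l')) ≤ gapN (cLet (dt v l)) (cLet d'')) ∧
      ¬ ∃ f ∈ cF g J, [dt v l, dt v' l'] <:+: cBd f ++ cBd f := h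
  obtain ⟨h1, ⟨h2, h3, h4⟩, h5⟩ := h'
  rw [dHead_dt, dTail_dt] at h3
  rw [dHead_dt, dLet_dt, dLet_dt] at h4
  have h6 : ∀ m, (dt (v ⋆ letterG l) m).1 ∈ cE g J → gapN l l' ≤ gapN l m := by
    intro m hm
    have := h4 (dt (v ⋆ letterG l) m) hm (dTail_dt _ _).symm
    rwa [dLet_dt] at this
  have hinf : InfF (L v l) := by
    by_contra hf
    have h7 := h6 (suc l) ((cE_iff hJ _ _).2 (Or.inr (by rwa [L_suc])))
    rw [gap_suc] at h7
    have h8 := eq_suc_of_gap (Nat.le_zero.1 h7)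
    apply h5
    refine ⟨L v l, (cF_iff hJ _).2 hf, ?_⟩
    rw [h8, ← h3]; exact corner v l
  refine ⟨?_, hinf, h3.symm, ?_⟩
  · rcases (cE_iff hJ _ _).1 h1 with h | h
    · exact h
    · exact absurd hinf h
  · intro m hm hE
    have := h6 m ((cE_iff hJ _ _).2 (Or.inl hE))
    omega

end


section
variable {g : ℕ} {J : Subgroup (Gamma g)}

lemma bSt_tail {d d' : DD g J} (h : bSt d d') : cTail d' = cTail d ⋆ letterG (cLet d) := by
  have h' : cHead d = cTail d' := h.2.1.2.1
  rw [← h', cHead_eq]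

/-- a step-compatible list is a relWalk -/
lemma path_data (l : List (DD g J)) (hs : ∀ (k : ℕ) (hk : k + 1 < l.length), cTail l[k+1] = cTail l[k] ⋆ letterG (cLet l[k]))
    (h0 : 0 < l.length) (k : ℕ) (hk : k < l.length) :
    cTail l[k] = cTail l[0] ⋆ wordG ((cWord l).take k) := by
  induction k with
  | zero => simp
  | succ k ih =>
    rw [hs k hk, ih (by omega), take_succ_wordG _ _ (by simp [cWord]; omega), ← rt_mul]
    simp [cWord]

lemma cyc_data {δ : List (DD g J)}
    (h : (cover g J).BCycle (coreSub g J).sE (coreSub g J).sF δ) :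
    ∃ (v : Cos g J) (W : List (Letter g)), W = cWord δ ∧ W ≠ [] ∧ δ = relWalk g J v W ∧ v ⋆ wordG W = v ∧
      ∀ (k : ℕ) (hk : k < W.length),
        bSt (dt (v ⋆ wordG (W.take k)) W[k])
          (dt (v ⋆ wordG (W.take ((k + 1) % W.length)))
            (W[(k + 1) % W.length]'(Nat.mod_lt _ (by omega)))) := by
  obtain ⟨⟨hne, _, hc⟩, d₁, d₂, h1, h2, h3⟩ := h
  obtain ⟨d, hd⟩ : ∃ d : DD g J, d = d₁ := ⟨d₁, rfl⟩
  obtain ⟨d', hd'⟩ : ∃ d : DD g J, d = d₂ := ⟨d₂, rfl⟩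
  subst hd hd'
  have hne' : δ ≠ [] := hne
  have h0 : 0 < δ.length := List.length_pos_of_ne_nil hne'
  have hc' : ∀ (i : ℕ) (_hi : i + 1 < δ.length), bSt δ[i] δ[i + 1] :=
    List.isChain_iff_getElem.1 hc
  have h1' : δ.getLast? = some (d : DD g J) := h1
  have h2' : δ.head? = some (d' : DD g J) := h2
  rw [List.getLast?_eq_getLast_of_ne_nil hne', Option.some.injEq, List.getLast_eq_getElem] at h1'
  rw [List.head?_eq_getElem?, List.getElem?_eq_getElem h0, Option.some.injEq] at h2'
  have h3' : bSt δ[δ.length - 1] δ[0] := by rw [h1', h2']; exact h3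
  have hlen : (cWord δ).length = δ.length := by simp [cWord]
  have hp := path_data δ (fun k hk => bSt_tail (hc' k hk)) h0
  have hdt : ∀ (k : ℕ) (hk : k < δ.length),
      dt (cTail δ[0] ⋆ wordG ((cWord δ).take k)) ((cWord δ)[k]'(by omega)) = δ[k] := by
    intro k hk
    rw [← hp k hk]
    have : (cWord δ)[k]'(by omega) = cLet δ[k] := by simp [cWord]
    rw [this, dt_eta]
  have hcl : cTail δ[0] ⋆ wordG (cWord δ) = cTail δ[0] := by
    have e := bSt_tail h3'
    rw [hp (δ.length - 1) (by omega)] at e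
    have e2 := take_succ_wordG (cWord δ) (δ.length - 1) (by omega)
    rw [List.take_of_length_le (by omega)] at e2
    rw [e2, ← rt_mul]
    refine Eq.trans ?_ e.symm
    simp [cWord]
  have hW : ∀ (v : Cos g J) (l : List (DD g J)), (∀ (k : ℕ) (hk : k < l.length),
      dt (v ⋆ wordG ((cWord l).take k)) ((cWord l)[k]'(by simp [cWord]; omega)) = l[k]) →
      l = relWalk g J v (cWord l) := by
    intro v l
    induction l generalizing v with
    | nil => intro _; rfl
    | cons d l ih =>
      intro hh
      have e : cWord (d :: l) = cLet d :: cWord l := rfl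
      have h0 := hh 0 (by simp)
      rw [e, relWalk_cons]
      congr 1
      · simpa [cWord] using h0.symm
      · refine ih _ fun k hk => ?_
        have := hh (k + 1) (by simpa using hk)
        simp only [e, List.take_succ_cons, wordG_cons, ← rt_mul, List.getElem_cons_succ] at this
        exact this
  refine ⟨cTail δ[0], cWord δ, rfl, ?_, hW _ _ hdt, hcl, ?_⟩
  · rw [← List.length_pos_iff]; omega
  · intro k hk
    rw [hdt k (by omega)]
    rcases Nat.lt_or_ge (k + 1) δ.length with h | h
    · have e : (k + 1) % (cWord δ).length = k + 1 := Nat.mod_eq_of_lt (by omega)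
      simp only [e]
      rw [hdt (k + 1) h]
      exact hc' k h
    · have e : (k + 1) % (cWord δ).length = 0 := by
        have : k + 1 = (cWord δ).length := by omega
        rw [this, Nat.mod_self]
      simp only [e]
      rw [hdt 0 h0]
      have : k = δ.length - 1 := by omega
      subst this
      exact h3'

end


section
variable {g : ℕ} {C J : Subgroup (Gamma g)}

lemma val_ch_E1 {φ : Cos g C → Cos g J} (hφ : Eqv g φ) {x : Cos g C} {W : List (Letter g)}
    (hE : ∀ k (hk : k < W.length), E1 (φ x ⋆ wordG (W.take k)) W[k]) {y : Cos g C} {l : Letter g}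
    (h : val (ch x W) y l ≠ 0) : E1 (φ y) l := by
  obtain ⟨a1, m, a2, hw, h⟩ := val_ch_ne h
  have h1 := hE a1.length (by rw [hw]; simp)
  have e1 : W[a1.length]'(by rw [hw]; simp) = m := by simp [hw]
  have e2 : W.take a1.length = a1 := by rw [hw]; simp
  rw [e1, e2, ← hφ] at h1
  rcases h with ⟨h2, h3⟩ | ⟨h2, h3⟩
  · rw [h2, h3]; exact h1
  · have := E1_rev h1
    rw [← h2, ← h3, ← hφ, rt_letter_inv, inv_inv'] at this
    exact this

lemma geo_zero (hg : 0 < g) {φ : Cos g C → Cos g J} (hφ : Eqv g φ) {x : Cos g C} {W : List (Letter g)}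
    (hcl : x ⋆ wordG W = x)
    (hE : ∀ k (hk : k < W.length), E1 (φ x ⋆ wordG (W.take k)) W[k]) {n : Cos g C →₀ ℤ}
    (hm : Mini (ch x W - bd g n)) {f : Cos g C} (hf : InfF (φ f)) : n f = 0 := by
  refine zlemma hg hφ ?_ hf
  intro y l h
  by_cases h1 : val (ch x W) y l = 0
  · refine E1_push hφ (mini_E1' (z := ch x W - bd g n) ?_ hm ?_)
    · intro v; rw [Finsupp.coe_sub, dv_sub, dv_ch, dv_bd, hcl]; simp
    · rw [Finsupp.coe_sub, val_sub, h1]; omega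
  · exact val_ch_E1 hφ hE h1

lemma nm_mono {X : Type} [RAct g X] {z w : Ch1 g X} (h : ∀ e, |z e| ≤ |w e|) : nm z ≤ nm w := by
  classical
  rw [nm_eq (S := z.support ∪ w.support) Finset.subset_union_left,
    nm_eq (S := z.support ∪ w.support) Finset.subset_union_right]
  exact Finset.sum_le_sum fun e _ => h e

lemma geo_cyc (hg : 0 < g) {W : List (Letter g)} (hW : W ≠ []) {x : Gamma g}
    (hcl : mkCos g J x ⋆ wordG W = mkCos g J x)
    (hE : ∀ k (hk : k < W.length), E1 (mkCos g J x ⋆ wordG (W.take k)) W[k])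
    (hI : ∀ k (hk : k < W.length), InfF (L (mkCos g J x ⋆ wordG (W.take k)) W[k]))
    (H1 : ∀ k (hk : k < W.length) m,
      gapN W[k] m < gapN W[k] (W[(k + 1) % W.length]'(Nat.mod_lt _ (by omega))) →
      ¬ E1 (mkCos g J x ⋆ wordG (W.take k) ⋆ letterG W[k]) m) :
    conjLen (wordG W) = W.length := by
  obtain ⟨h, hh⟩ : ∃ h, h = x * wordG W * x⁻¹ := ⟨_, rfl⟩
  have hhJ : h ∈ J := by
    have := hcl
    rw [mk_rt, eq_comm, mk_eq] at this; rw [hh]; exact this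
  obtain ⟨hn1, n, hn2, hn3, hn4⟩ := geoList hW hcl (K := E1)
    (fun v l hK => by have := E1_rev hK; rwa [rt_letter_inv, inv_inv'] at this) H1
    (by
      intro k hk
      obtain ⟨a, ha, hc⟩ := hE k hk
      refine ⟨a, ha, hc, fun a1 l a2 h => ?_⟩
      rw [h] at ha hc
      exact E1_mem ha hc) hh
  have hC : Subgroup.zpowers h ≤ J := by rwa [Subgroup.zpowers_le]
  have hφ := Eqv_cover hC
  have hx : coverMapV hC (mkCos g _ x) = mkCos g J x := cover_mk hC x
  have hclC : mkCos g (Subgroup.zpowers h) x ⋆ wordG W = mkCos g (Subgroup.zpowers h) x := by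
    rw [mk_rt, eq_comm, mk_eq, ← hh]; exact Subgroup.mem_zpowers h
  generalize mkCos g (Subgroup.zpowers h) x = xh at *
  have h0 : ∀ f, InfF (coverMapV hC f) → n f = 0 := fun f hf =>
    geo_zero hg hφ hclC (by rw [hx]; exact hE) hn3 hf
  have hge : ∀ k (hk : k < W.length), 1 ≤ val (ch xh W) (xh ⋆ wordG (W.take k)) W[k] ∧
      val (ch xh W) (xh ⋆ wordG (W.take k)) W[k] ≤
      val (ch xh W - bd g n : Ch1 g (Cos g (Subgroup.zpowers h))) (xh ⋆ wordG (W.take k)) W[k] := by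
    intro k hk
    constructor
    · have e := take_split W k hk
      have := nocancel (x := xh) (a := W.take k) (ℓ := W[k]) (b := W.drop (k + 1)) (by rw [← e]; exact hn1)
      rwa [← e] at this
    · rw [Finsupp.coe_sub, val_sub, val_bd]
      have h1 := hn4 k hk
      have h2 := h0 (L (xh ⋆ wordG (W.take k)) W[k]) (by
        rw [L_comp hφ, hφ, hx]; exact hI k hk)
      omega
  have hle : nm (ch xh W) ≤ nm (ch xh W - bd g n) := by
    apply nm_mono
    rintro ⟨y, i⟩
    by_cases hz : ch xh W (y, i) = 0
    · rw [hz]; simp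
    · have e : ∀ z : Ch1 g (Cos g (Subgroup.zpowers h)), z (y, i) = val z y (i, true) := fun z => rfl
      rw [e] at hz
      obtain ⟨a1, m, a2, hw, hd⟩ := val_ch_ne hz
      have h1 := hge a1.length (by rw [hw]; simp)
      have e1 : W[a1.length]'(by rw [hw]; simp) = m := by simp [hw]
      have e2 : W.take a1.length = a1 := by rw [hw]; simp
      rw [e1, e2] at h1
      rw [e, e]
      rcases hd with ⟨h2, h3⟩ | ⟨h2, h3⟩
      · rw [h2, h3, abs_of_nonneg (by omega), abs_of_nonneg (by omega)]; exact h1.2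
      · rw [← h2, ← h3, val_inv, val_inv] at h1
        rw [abs_of_neg (by omega), abs_of_neg (by omega)]; exact h1.2
  have h5 : conjLen (wordG W) ≤ W.length := conjLen_le W 1 (by simp)
  rw [hn1, hn2] at hle
  omega

theorem main12 (hg : 0 < g) (hJ : J ≠ ⊥) (δ : List (DD g J))
    (h : (cover g J).BCycle (coreSub g J).sE (coreSub g J).sF δ) :
    (cover g J).Essential Set.univ Set.univ δ ∧ conjLen (wordG (cWord δ)) = δ.length := by
  obtain ⟨v, W, hWd, hW, hδ, hcl, hb⟩ := cyc_data h
  have hlen : W.length = δ.length := by rw [hδ, relWalk_length]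
  have hcj : conjLen (wordG W) = W.length := by
    obtain ⟨x, rfl⟩ : ∃ x, v = mkCos g J x := by
      induction v using Quotient.inductionOn with | _ x => exact ⟨x, rfl⟩
    have ho := fun k hk => bSt_out hJ (hb k hk)
    exact geo_cyc hg hW hcl (fun k hk => (ho k hk).1) (fun k hk => (ho k hk).2.1)
      (fun k hk => (ho k hk).2.2.2)
  refine ⟨⟨⟨h.1.1, v, ?_⟩, fun _ _ => trivial, ?_⟩, by rw [← hWd, hcj, hlen]⟩
  · have : Wk v v δ := walk_iff.2 ⟨by rw [← hWd]; exact hδ, by rw [← hWd]; exact hcl.symm⟩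
    exact this
  · rintro ⟨u, _, h2⟩
    have h3 : wordG (cWord δ) = wordG (cWord ([] : List (DD g J))) := homotopic_word h2
    rw [← hWd] at h3
    have h4 : conjLen (wordG W) ≤ 0 := conjLen_le [] 1 (by rw [h3]; simp [cWord])
    rw [hcj] at h4
    exact hW (List.length_eq_zero_iff.1 (by omega))

end


section
variable {g : ℕ} {X : Type} [RAct g X]

def run (l : Letter g) (n : ℕ) : List (Letter g) := (List.range n).map (fun k => suc^[k] l)

lemma run_length (l : Letter g) (n : ℕ) : (run l n).length = n := by simp [run]

lemma run_zero (l : Letter g) : run l 0 = [] := by simp [run]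

lemma run_succ (l : Letter g) (n : ℕ) : run l (n + 1) = run l n ++ [suc^[n] l] := by
  simp [run, List.range_succ]

lemma run_one (l : Letter g) : run l 1 = [l] := by rw [run_succ, run_zero]; rfl

lemma run_add (l : Letter g) (m n : ℕ) : run l (m + n) = run l m ++ run (suc^[m] l) n := by
  induction n with
  | zero => simp [run_zero]
  | succ n ih =>
    rw [← add_assoc, run_succ, ih, run_succ, List.append_assoc, ← Function.iterate_add_apply,
      Nat.add_comm n m]

lemma run_get (l : Letter g) (n k : ℕ) (h : k < (run l n).length) : (run l n)[k] = suc^[k] l := by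
  simp [run]

lemma run_take (l : Letter g) {n k : ℕ} (h : k ≤ n) : (run l n).take k = run l k := by
  obtain ⟨m, rfl⟩ := Nat.exists_eq_add_of_le h
  rw [run_add, List.take_left' (run_length _ _)]

lemma idx_iter (l : Letter g) (k : ℕ) : idx (suc^[k] l) = (idx l + k) % (4 * g) := by
  induction k with
  | zero => exact (Nat.mod_eq_of_lt (idx_lt l)).symm
  | succ k ih => rw [Function.iterate_succ_apply', idx_suc, ih, Nat.mod_add_mod]; rfl

lemma run_full (l : Letter g) :
    run l (4 * g) = (relatorWord g).drop (idx l) ++ (relatorWord g).take (idx l) := by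
  have hl := idx_lt l
  have hr := rel_length g
  rw [← List.rotate_eq_drop_append_take (by omega)]
  apply List.ext_getElem
  · rw [run_length, List.length_rotate, hr]
  · intro k h1 h2
    rw [run_get, List.getElem_rotate, rel_get]
    apply idx_inj
    rw [idx_iter, idx_rl, hr, Nat.add_comm]

lemma ch_full (x : X) (l : Letter g) : ch x (run l (4 * g)) = bd g (Finsupp.single (L x l) 1) := by
  rw [bd_single, one_smul, run_full]
  have e : (relatorWord g) = (relatorWord g).take (idx l) ++ (relatorWord g).drop (idx l) := by simp
  have e1 : L x l ⋆ wordG ((relatorWord g).take (idx l)) = x := by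
    rw [L]; exact rt_cancel' _ _
  have e2 : wordG ((relatorWord g).take (idx l)) * wordG ((relatorWord g).drop (idx l)) = 1 := by
    rw [← wordG_append, ← e, wordG_relator]
  have e3 : x ⋆ wordG ((relatorWord g).drop (idx l)) = L x l := by
    conv_lhs => rw [← e1, rt_mul, e2]
    simp
  conv_rhs => rw [e]
  rw [ch_append, ch_append, e1, e3, add_comm]

lemma wordG_full (l : Letter g) : wordG (run l (4 * g)) = 1 := by
  have e2 : wordG ((relatorWord g).take (idx l)) * wordG ((relatorWord g).drop (idx l)) = 1 := by
    rw [← wordG_append, List.take_append_drop, wordG_relator]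
  rw [run_full, wordG_append]
  exact mul_eq_one_comm.1 e2

/-- one block of a half chain -/
lemma block_step (hg : 0 < g) (q : Letter g) : ∃ D : List (Letter g), D.length = 2 * g - 1 ∧
    wordG (run (suc (inv q)) (2 * g - 1)) * letterG (suc^[2 * g - 1] (suc (inv q))) =
      letterG q * wordG D ∧
    ∀ x : X, ch x (run (suc (inv q)) (2 * g - 1)) +
      dch (x ⋆ wordG (run (suc (inv q)) (2 * g - 1))) (suc^[2 * g - 1] (suc (inv q)))
      - dch x q - ch (x ⋆ letterG q) D = bd g (Finsupp.single (L x (suc (inv q))) 1) := by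
  obtain ⟨l, hl⟩ : ∃ l, l = suc (inv q) := ⟨_, rfl⟩
  rw [← hl]
  obtain ⟨s, hs⟩ : ∃ s, s = suc^[2 * g - 1] l := ⟨_, rfl⟩
  obtain ⟨T, hT⟩ : ∃ T, T = run (suc s) (2 * g - 1) := ⟨_, rfl⟩
  have hlast : suc^[4 * g - 1] l = inv q := by
    apply idx_inj
    rw [idx_iter, hl, idx_suc, Nat.mod_add_mod]
    have : idx (inv q) + 1 + (4 * g - 1) = idx (inv q) + 4 * g := by omega
    rw [this, Nat.add_mod_right, Nat.mod_eq_of_lt (idx_lt _)]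
  have hsplit : run l (4 * g) = run l (2 * g - 1) ++ [s] ++ T ++ [inv q] := by
    have e : 4 * g = (2 * g - 1 + 1 + (2 * g - 1)) + 1 := by omega
    have e' : 4 * g - 1 = (2 * g - 1 + 1 + (2 * g - 1)) := by omega
    rw [e, run_succ, run_add, run_succ, ← e', hlast, Function.iterate_succ_apply', ← hs, ← hT]
  have hw := wordG_full l
  rw [hsplit] at hw
  simp only [wordG_append, wordG_cons, wordG_nil, mul_one, letterG_inv] at hw
  refine ⟨winv T, by rw [winv_length, hT, run_length], ?_, fun x => ?_⟩
  · rw [← hs, wordG_winv]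
    rw [mul_inv_eq_one] at hw
    exact eq_mul_inv_of_mul_eq hw
  · rw [← ch_full, hsplit, ← hs]
    rw [ch_append, ch_append, ch_append]
    simp only [ch_cons, ch_nil, add_zero, wordG_append, wordG_cons, wordG_nil, mul_one]
    have e1 : x ⋆ (wordG (run l (2 * g - 1)) * letterG s * wordG T) = x ⋆ letterG q := by
      congr 1; rwa [mul_inv_eq_one] at hw
    have e2 : ch (x ⋆ letterG q) (winv T) = - ch (x ⋆ (wordG (run l (2 * g - 1)) * letterG s)) T := by
      rw [← ch_winv, rt_mul, e1]
    rw [e1, dch_inv, e2]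
    abel

def HC (q' : Letter g) : Letter g → List (List (Letter g)) → Prop
  | q, [] => q = q'
  | q, b :: bs => b = run (suc (inv q)) (2 * g - 1) ∧ HC q' (suc^[2 * g - 1] (suc (inv q))) bs

lemma HC_fill (hg : 0 < g) (q' : Letter g) (bs : List (List (Letter g))) : ∀ (x : X) (q : Letter g),
    HC q' q bs → ∃ (D : List (Letter g)) (n : X →₀ ℤ), D.length = bs.flatten.length ∧
      wordG bs.flatten * letterG q' = letterG q * wordG D ∧
      ch x bs.flatten + dch (x ⋆ wordG bs.flatten) q' - dch x q - ch (x ⋆ letterG q) D = bd g n ∧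
      (∀ f, 0 ≤ n f) ∧ (bs ≠ [] → 1 ≤ n (L x (suc (inv q)))) := by
  induction bs with
  | nil =>
    intro x q h
    have h' : q = q' := h
    subst h'
    exact ⟨[], 0, by simp, by simp, by simp, by simp, by simp⟩
  | cons b bs ih =>
    intro x q h
    obtain ⟨hb, h⟩ : b = run (suc (inv q)) (2 * g - 1) ∧ HC q' (suc^[2 * g - 1] (suc (inv q))) bs := h
    obtain ⟨D1, l1, w1, c1⟩ := block_step (X := X) hg q
    rw [← hb] at w1 c1
    generalize suc^[2 * g - 1] (suc (inv q)) = s at *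
    obtain ⟨D2, n2, l2, w2, c2, p2, _⟩ := ih (x ⋆ wordG b) s h
    refine ⟨D1 ++ D2, Finsupp.single (L x (suc (inv q))) 1 + n2, ?_, ?_, ?_, ?_, ?_⟩
    · rw [List.length_append, List.flatten_cons, List.length_append, l1, l2, hb, run_length]
    · rw [List.flatten_cons, wordG_append, wordG_append, mul_assoc, w2, ← mul_assoc, w1, mul_assoc]
    · rw [map_add, ← c1, ← c2, List.flatten_cons, ch_append, ch_append, wordG_append, ← rt_mul,
        rt_mul x (letterG q), ← w1, ← rt_mul x]
      abel
    · intro f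
      classical
      rw [Finsupp.add_apply, Finsupp.single_apply]
      have := p2 f
      split_ifs <;> omega
    · intro _
      rw [Finsupp.add_apply, Finsupp.single_eq_same]
      have := p2 (L x (suc (inv q)))
      omega

end

section
variable {g : ℕ} {J : Subgroup (Gamma g)}

lemma Eqv_id : Eqv g (fun x : Cos g J => x) := fun _ _ => rfl

lemma Sh_supp {x : Cos g J} {W : List (Letter g)} (hs : Sh W) (hcl : x ⋆ wordG W = x)
    {y : Cos g J} {l : Letter g} (h : val (ch x W) y l ≠ 0) : E1 y l := by
  refine val_ch_E1 Eqv_id (x := x) (W := W) ?_ h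
  intro k hk
  have e := take_split W k hk
  exact E1_mem (b := W.drop (k + 1)) (by rw [← e]; exact hs) (by rw [← e]; exact hcl)

lemma Sh_of_conjLen {W : List (Letter g)} (hW : W ≠ []) (h : conjLen (wordG W) = W.length) : Sh W := by
  constructor
  · intro h1
    have h4 : conjLen (wordG W) ≤ 0 := conjLen_le [] 1 (by rw [h1]; simp)
    rw [h] at h4
    exact hW (List.length_eq_zero_iff.1 (by omega))
  · intro w' y hy
    rw [← h]; exact conjLen_le w' y hy

lemma halfchain_core (hg : 0 < g) {x : Cos g J} {bs : List (List (Letter g))} (hne : bs ≠ [])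
    (q : Letter g) (hc : HC q q bs) (hs : Sh bs.flatten) (hcl : x ⋆ wordG bs.flatten = x)
    (hI : InfF (L x (suc (inv q)))) : False := by
  obtain ⟨D, n, hl, hw, hch, _, h1⟩ := HC_fill hg q bs x q hc
  rw [hcl] at hch
  have hch' : ch x bs.flatten - ch (x ⋆ letterG q) D = bd g n := by rw [← hch]; abel
  have hconj : letterG q * wordG D * (letterG q)⁻¹ = wordG bs.flatten := by
    rw [← hw]; group
  have hD : Sh D := Sh_conj hs (letterG q) hconj (by omega)
  have hclD : x ⋆ letterG q ⋆ wordG D = x ⋆ letterG q := by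
    rw [rt_mul, ← hw, ← rt_mul, hcl]
  have h0 := zlemma hg Eqv_id (n := n) (f := L x (suc (inv q))) ?_ hI
  · have := h1 hne; omega
  · intro y l h
    rw [← hch', Finsupp.coe_sub, val_sub] at h
    by_cases h2 : val (ch x bs.flatten) y l = 0
    · exact Sh_supp hD hclD (y := y) (l := l) (by omega)
    · exact Sh_supp hs hcl h2

/-- chain with gap zero -/
lemma gap_chain_run (l : Letter g) (b : List (Letter g))
    (h : List.IsChain (fun s t => gapN s t = 0) (l :: b)) : l :: b = run l (b.length + 1) := by
  apply List.ext_getElem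
  · rw [run_length]; rfl
  · intro k h1 h2
    rw [run_get]
    induction k with
    | zero => rfl
    | succ k ih =>
      have := List.isChain_iff_getElem.1 h k h1
      rw [Function.iterate_succ_apply', ← ih (by omega) (by rw [run_length]; simp at h1; omega)]
      exact eq_suc_of_gap this

lemma block_run {b : List (DD g J)} (h : (cover g J).IsBlock b) :
    ∃ l : Letter g, (cWord b).head? = some l ∧ cWord b = run l b.length := by
  obtain ⟨h1, _, h3⟩ := h
  cases b with
  | nil => exact absurd rfl h1
  | cons d b =>
    refine ⟨cLet d, rfl, ?_⟩
    have h4 : List.IsChain (fun d d' : DD g J => gapN (cLet d) (cLet d') = 0) (d :: b) :=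
      List.IsChain.imp (fun _ _ h => h.2) h3
    have h5 : List.IsChain (fun s t => gapN s t = 0) (cLet d :: cWord b) := by
      have := (List.isChain_map (R := fun s t : Letter g => gapN s t = 0) (cLet (g := g) (J := J))
        (l := d :: b)).2 h4
      exact this
    have := gap_chain_run _ _ h5
    have e : (cWord b).length = b.length := by simp [cWord]
    rw [e] at this
    exact this

lemma gap_one (hg : 0 < g) {e l : Letter g} (h : gapN e l = 1) : suc (inv (suc e)) = l := by
  rw [suc_lam hg e, suc_inv_lam, lam_gap hg e l, h]

lemma HC_of (hg : 0 < g) (bs : List (List (DD g J))) : ∀ (b : List (DD g J)),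
    (∀ c ∈ b :: bs, (cover g J).IsBlock c ∧ c.length = 2 * g - 1) →
    List.IsChain (cover g J).chainStep (b :: bs) →
    ∀ q l : Letter g, (cWord b).head? = some l → suc (inv q) = l →
    ∀ e, (cWord ((b :: bs).getLast (by simp))).getLast? = some e →
    HC (suc e) q ((b :: bs).map cWord) := by
  induction bs with
  | nil =>
    intro b hb _ q l hl hq e he
    obtain ⟨hb1, hb2⟩ := hb b (by simp)
    obtain ⟨l', h1, h2⟩ := block_run hb1
    rw [hl] at h1
    obtain rfl : l = l' := by simpa using h1
    rw [hb2] at h2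
    have he' : (cWord b).getLast? = some e := he
    rw [h2] at he'
    refine ⟨by rw [h2, hq], ?_⟩
    change suc^[2 * g - 1] (suc (inv q)) = suc e
    have e1 : 2 * g - 1 = (2 * g - 2) + 1 := by omega
    rw [e1, run_succ, List.getLast?_append] at he'
    simp at he'
    rw [e1, Function.iterate_succ_apply', hq, he']
  | cons c bs ih =>
    intro b hb hch q l hl hq e he
    obtain ⟨hb1, hb2⟩ := hb b (by simp)
    obtain ⟨l', h1, h2⟩ := block_run hb1
    rw [hl] at h1
    obtain rfl : l = l' := by simpa using h1
    rw [hb2] at h2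
    obtain ⟨⟨d, d', hd, hd', _, hgap⟩, hch⟩ := List.isChain_cons_cons.1 hch
    have hgap' : gapN (cLet d) (cLet d') = 1 := hgap
    have g1 : (cWord b).getLast? = some (cLet d) := by
      have : b.getLast? = some (d : DD g J) := hd
      rw [cWord, List.getLast?_map, this]; rfl
    have g2 : (cWord c).head? = some (cLet d') := by
      have : c.head? = some (d' : DD g J) := hd'
      rw [cWord, List.head?_map, this]; rfl
    refine ⟨by rw [h2, hq], ?_⟩
    have e1 : 2 * g - 1 = (2 * g - 2) + 1 := by omega
    have e2 : suc^[2 * g - 1] (suc (inv q)) = suc (cLet d) := by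
      rw [h2, e1, run_succ, List.getLast?_append] at g1
      simp at g1
      rw [e1, Function.iterate_succ_apply', hq, g1]
    rw [e2]
    refine ih c (fun c' hc' => hb c' (List.mem_cons_of_mem _ hc')) hch _ _ g2 (gap_one hg hgap') e ?_
    rw [List.getLast_cons (by simp)] at he
    exact he

theorem no_halfchain (hg : 0 < g) (hJ : J ≠ ⊥) (bs : List (List (DD g J)))
    (h : (cover g J).IsHalfChain bs)
    (hb : (cover g J).BCycle (coreSub g J).sE (coreSub g J).sF bs.flatten) : False := by
  obtain ⟨v, W, hWd, hW, hδ, hcl, hst⟩ := cyc_data hb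
  have hcj := (main12 hg hJ _ hb).2
  rw [← hWd] at hcj
  have hS : Sh W := Sh_of_conjLen hW (by rw [hcj, hδ, relWalk_length])
  obtain ⟨⟨⟨hne, hbl, hch⟩, b₁, b₂, hb1, hb2, hb3⟩, hlen⟩ := h
  obtain ⟨b, hbb⟩ : ∃ b : List (DD g J), b = b₁ := ⟨b₁, rfl⟩
  obtain ⟨b', hbb'⟩ : ∃ b : List (DD g J), b = b₂ := ⟨b₂, rfl⟩
  subst hbb hbb'
  cases bs with
  | nil => exact hne rfl
  | cons c bs =>
    have hb2' : some c = some b' := hb2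
    obtain rfl : c = b' := by simpa using hb2'
    obtain ⟨d, d', hd, hd', _, hgap⟩ := hb3
    have hb1' : (c :: bs).getLast? = some b := hb1
    rw [List.getLast?_eq_getLast_of_ne_nil (by simp), Option.some.injEq] at hb1'
    have hgap' : gapN (cLet d) (cLet d') = 1 := hgap
    have g1 : (cWord b).getLast? = some (cLet d) := by
      have : b.getLast? = some (d : DD g J) := hd
      rw [cWord, List.getLast?_map, this]; rfl
    have g2 : (cWord c).head? = some (cLet d') := by
      have : c.head? = some (d' : DD g J) := hd'
      rw [cWord, List.head?_map, this]; rfl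
    have hHC := HC_of hg bs c (fun c' hc' => ⟨hbl c' hc', hlen c' hc'⟩) hch (suc (cLet d)) _ g2
      (gap_one hg hgap') (cLet d) (by rw [hb1']; exact g1)
    have hfl : ((c :: bs).map cWord).flatten = W := by
      rw [hWd]; exact (List.map_flatten (f := cLet) (L := c :: bs)).symm
    refine halfchain_core hg (x := v) (by simp) (suc (cLet d)) hHC (by rw [hfl]; exact hS)
      (by rw [hfl]; exact hcl) ?_
    rw [gap_one hg hgap']
    have h0 : 0 < W.length := List.length_pos_iff.2 hW
    have hI := (bSt_out hJ (hst 0 h0)).2.1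
    have hW0 : W[0] = cLet d' := by
      have : W.head? = some (cLet d') := by
        rw [← hfl, List.map_cons, List.flatten_cons, List.head?_append, g2]; rfl
      rw [List.head?_eq_getElem?, List.getElem?_eq_getElem h0, Option.some.injEq] at this
      exact this
    rw [hW0] at hI
    simpa using hI

end


section
variable {g : ℕ} {X : Type} [RAct g X]

/-- the dart `(y,m)` lies on the closed walk `w` from `x` -/
def On (x : X) (w : List (Letter g)) (y : X) (m : Letter g) : Prop :=
  ∃ a1 a2, w = a1 ++ m :: a2 ∧ y = x ⋆ wordG a1

lemma On_finite (x : X) (w : List (Letter g)) : {p : X × Letter g | On x w p.1 p.2}.Finite := by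
  refine (Set.finite_range (fun i : Fin w.length => (x ⋆ wordG (w.take i), w[i]))).subset ?_
  rintro ⟨y, m⟩ ⟨a1, a2, hw, hy⟩
  have hl : a1.length < w.length := by rw [hw]; simp
  refine ⟨⟨a1.length, hl⟩, ?_⟩
  have e1 : w[a1.length] = m := by simp [hw]
  have e2 : w.take a1.length = a1 := by rw [hw]; simp
  simp only [Fin.getElem_fin, e1, e2]
  rw [← (show y = x ⋆ wordG a1 from hy)]

lemma winv_append (a b : List (Letter g)) : winv (a ++ b) = winv b ++ winv a := by simp [winv]

lemma On_rev {x : X} {w : List (Letter g)} (hcl : x ⋆ wordG w = x) {y : X} {m : Letter g}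
    (h : On x w y m) : On x (winv w) (y ⋆ letterG m) (inv m) := by
  obtain ⟨a1, a2, hw, hy⟩ := h
  refine ⟨winv a2, winv a1, ?_, ?_⟩
  · rw [hw, winv_append, winv_cons]; simp
  · rw [hy, wordG_winv, ← rt_eq_iff, rt_mul, rt_mul]
    rw [hw] at hcl
    simpa [mul_assoc] using hcl

lemma On_rot {x : X} {w : List (Letter g)} (hs : Sh w) (hcl : x ⋆ wordG w = x) {y : X} {m : Letter g}
    (h : On x w y m) : ∃ a, Sh (m :: a) ∧ y ⋆ wordG (m :: a) = y ∧
      ∀ b1 l b2, m :: a = b1 ++ l :: b2 → On x w (y ⋆ wordG b1) l := by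
  obtain ⟨a1, a2, hw, hy⟩ := h
  subst hw
  subst hy
  have e : wordG (m :: (a2 ++ a1)) = (wordG a1)⁻¹ * wordG (a1 ++ m :: a2) * wordG a1 := by
    simp [mul_assoc]
  refine ⟨a2 ++ a1, Sh_rot hs, ?_, ?_⟩
  · rw [e, ← rt_mul, ← rt_mul, rt_cancel, hcl]
  · intro b1 l b2 h
    rw [← List.cons_append] at h
    rcases List.append_eq_append_iff.1 h with ⟨c, h1, h2⟩ | ⟨c, h1, h2⟩
    · refine ⟨c, b2 ++ m :: a2, ?_, ?_⟩
      · rw [h2]; simp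
      · rw [h1, wordG_append, ← rt_mul]
        congr 1
        rw [rt_mul, ← wordG_append]; exact hcl
    · cases c with
      | nil =>
        simp at h1 h2
        refine ⟨[], b2 ++ m :: a2, by rw [← h2]; simp, ?_⟩
        rw [← h1, rt_mul, ← wordG_append, hcl]; simp
      | cons c0 c =>
        simp at h2
        obtain ⟨rfl, rfl⟩ := h2
        exact ⟨a1 ++ b1, c, by rw [h1]; simp, by rw [wordG_append, rt_mul]⟩

lemma nm_run {z : Ch1 g X} {x : X} {l : Letter g} (j : ℕ) (hj : j ≤ 4 * g)
    (h : ∀ k < j, 1 ≤ val z (x ⋆ wordG (run l k)) (suc^[k] l)) :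
    nm (z - ch x (run l j)) = nm z - j := by
  have key : ∀ i, i ≤ 4 * g → ∀ k, k < 4 * g → i ≤ k → ∀ y : X, val (ch x (run l i)) y (suc^[k] l) ≤ 0 := by
    intro i
    induction i with
    | zero => intro _ k _ _ y; simp [run_zero]
    | succ i ih =>
      intro hi k hk hik y
      have h1 := ih (by omega) k hk (by omega) y
      classical
      rw [run_succ, ch_append, Finsupp.coe_add, val_add, ch_cons, ch_nil, add_zero, val_dch]
      have hne : suc^[k] l ≠ suc^[i] l := by
        intro e
        have e' := congrArg idx e
        rw [idx_iter, idx_iter] at e'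
        have hl := idx_lt l
        have := (Nat.ModEq.add_left_cancel' (idx l) e' : k ≡ i [MOD 4 * g])
        rw [Nat.ModEq, Nat.mod_eq_of_lt hk, Nat.mod_eq_of_lt (by omega)] at this
        omega
      rw [if_neg (fun h => hne h.2)]
      split_ifs <;> omega
  induction j with
  | zero => simp [run_zero]
  | succ j ih =>
    have h1 := ih (by omega) (fun k hk => h k (by omega))
    rw [run_succ, ch_append, ← sub_sub, ch_cons, ch_nil, add_zero, nm_sub_dch_pos, h1]
    · push_cast; ring
    · rw [Finsupp.coe_sub, val_sub]
      have h2 := h j (by omega)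
      have h3 := key j (by omega) j (by omega) le_rfl (x ⋆ wordG (run l j))
      omega

/-- next dart inside a finite symmetric family: existence of a periodic orbit -/
lemma exists_orbit (hg : 0 < g) {S : Set (X × Letter g)} (hf : S.Finite)
    (hrev : ∀ y m, (y, m) ∈ S → (y ⋆ letterG m, inv m) ∈ S) (x : X) (l : Letter g) (h0 : (x, l) ∈ S) :
    ∃ (p : ℕ → X) (m : ℕ → Letter g) (N : ℕ), 0 < N ∧ p 0 = x ∧ m 0 = l ∧
      (∀ k, (p k, m k) ∈ S) ∧ (∀ k, p (k + 1) = p k ⋆ letterG (m k)) ∧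
      (∀ k t, (p k ⋆ letterG (m k), t) ∈ S → gapN (m k) (m (k + 1)) ≤ gapN (m k) t) ∧
      ∀ k, p (k + N) = p k ∧ m (k + N) = m k := by
  have ex : ∀ s : S, ∃ t : S, t.1.1 = s.1.1 ⋆ letterG s.1.2 ∧
      ∀ m, (s.1.1 ⋆ letterG s.1.2, m) ∈ S → gapN s.1.2 t.1.2 ≤ gapN s.1.2 m := by
    rintro ⟨⟨y, a⟩, hs⟩
    have hex : ∃ k, ∃ m, (y ⋆ letterG a, m) ∈ S ∧ gapN a m = k := ⟨_, inv a, hrev y a hs, rfl⟩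
    classical
    obtain ⟨m, hm, hk⟩ := Nat.find_spec hex
    refine ⟨⟨(y ⋆ letterG a, m), hm⟩, rfl, fun m' hm' => ?_⟩
    change gapN a m ≤ gapN a m'
    rw [hk]
    exact Nat.find_min' hex ⟨m', hm', rfl⟩
  choose nx hn1 hn2 using ex
  have hinj : Function.Injective nx := by
    have aux : ∀ s t : S, nx s = nx t → gapN s.1.2 (nx s).1.2 ≤ gapN t.1.2 (nx t).1.2 → s = t := by
      intro s t h hle
      have hv : s.1.1 ⋆ letterG s.1.2 = t.1.1 ⋆ letterG t.1.2 := by rw [← hn1, ← hn1, h]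
      have e1 := posLv_of_gap s.1.2 (nx s).1.2
      have e2 := posLv_of_gap t.1.2 (nx t).1.2
      rw [h] at e1 hle
      have b1 : posArr s.1.2 < 4 * g := by rw [posArr_eq]; exact posLv_lt _
      have b2 : posArr t.1.2 < 4 * g := by rw [posArr_eq]; exact posLv_lt _
      have b3 := gapN_lt s.1.2 (nx t).1.2
      have b4 := gapN_lt t.1.2 (nx t).1.2
      have hmod : posArr s.1.2 + 1 + gapN s.1.2 (nx t).1.2 ≡
          posArr t.1.2 + 1 + gapN t.1.2 (nx t).1.2 [MOD 4 * g] := by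
        rw [Nat.ModEq, ← e1, ← e2]
      obtain ⟨δ, hδ⟩ := Nat.exists_eq_add_of_le hle
      have hmod2 : posArr s.1.2 ≡ posArr t.1.2 + δ [MOD 4 * g] := by
        refine Nat.ModEq.add_right_cancel' (1 + gapN s.1.2 (nx t).1.2) ?_
        have e3 : posArr t.1.2 + δ + (1 + gapN s.1.2 (nx t).1.2) =
          posArr t.1.2 + 1 + gapN t.1.2 (nx t).1.2 := by omega
        rw [e3, ← add_assoc]; exact hmod
      have hlet : δ = 0 := by
        by_contra hd
        have hmem : (t.1.1 ⋆ letterG t.1.2, inv s.1.2) ∈ S := by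
          rw [← hv]; exact hrev _ _ s.2
        have h3 := hn2 t _ hmem
        have e4 : inv s.1.2 = lam hg (posArr t.1.2 + 1 + (δ - 1)) := by
          apply posLv_inj
          rw [posLv_lam, ← posArr_eq]
          have e5 : posArr t.1.2 + 1 + (δ - 1) = posArr t.1.2 + δ := by omega
          rw [e5, ← hmod2, Nat.mod_eq_of_lt b1]
        rw [e4, gap_lam hg _ _ (by omega)] at h3
        omega
      rw [hlet, add_zero, Nat.ModEq, Nat.mod_eq_of_lt b1, Nat.mod_eq_of_lt b2] at hmod2
      have hl : s.1.2 = t.1.2 := by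
        have := posLv_inj (by rw [← posArr_eq, ← posArr_eq, hmod2] : posLv (inv s.1.2) = posLv (inv t.1.2))
        rw [← inv_inv' s.1.2, this, inv_inv']
      have hp : s.1.1 = t.1.1 := by
        rw [hl] at hv
        have := congrArg (· ⋆ (letterG t.1.2)⁻¹) hv
        simpa using this
      exact Subtype.ext (Prod.ext hp hl)
    intro s t h
    rcases le_total (gapN s.1.2 (nx s).1.2) (gapN t.1.2 (nx t).1.2) with h1 | h1
    · exact aux s t h h1
    · exact (aux t s h.symm h1).symm
  haveI : Finite S := hf
  obtain ⟨N, hN, hper⟩ : ∃ N, 0 < N ∧ nx^[N] ⟨(x, l), h0⟩ = ⟨(x, l), h0⟩ := by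
    have := (Function.mem_periodicPts (f := nx) (x := ⟨(x, l), h0⟩)).1 (hinj.mem_periodicPts _)
    exact this
  refine ⟨fun k => (nx^[k] ⟨(x, l), h0⟩).1.1, fun k => (nx^[k] ⟨(x, l), h0⟩).1.2, N, hN, rfl, rfl,
    fun k => (nx^[k] ⟨(x, l), h0⟩).2, ?_, ?_, ?_⟩
  · intro k
    simp only [Function.iterate_succ_apply']
    exact hn1 _
  · intro k t ht
    simp only [Function.iterate_succ_apply']
    exact hn2 _ _ ht
  · intro k
    simp only [Function.iterate_add_apply, hper, and_self]

end


section
variable {g : ℕ} {J : Subgroup (Gamma g)}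

lemma halfblock_core (hg : 0 < g) {x : Gamma g} {l : Letter g} (hI : InfF (L (mkCos g J x) l))
    (hE : ∀ k < 2 * g, E1 (mkCos g J x ⋆ wordG (run l k)) (suc^[k] l)) : False := by
  have hE' : ∀ k : Fin (2 * g), ∃ a, Sh (suc^[k.1] l :: a) ∧
      mkCos g J x ⋆ wordG (run l k) ⋆ wordG (suc^[k.1] l :: a) = mkCos g J x ⋆ wordG (run l k) :=
    fun k => hE k k.2
  choose a ha1 ha2 using hE'
  obtain ⟨w, hw⟩ : ∃ w : Fin (2 * g) × Bool → List (Letter g),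
      w = fun i => if i.2 then suc^[i.1.1] l :: a i.1 else winv (suc^[i.1.1] l :: a i.1) := ⟨_, rfl⟩
  obtain ⟨b, hb⟩ : ∃ b : Fin (2 * g) × Bool → Cos g J,
      b = fun i => mkCos g J x ⋆ wordG (run l i.1) := ⟨_, rfl⟩
  have hSh : ∀ i, Sh (w i) := by
    rintro ⟨k, e⟩
    cases e
    · rw [hw]; exact Sh_winv (ha1 k)
    · rw [hw]; exact ha1 k
  have hcl : ∀ i, b i ⋆ wordG (w i) = b i := by
    rintro ⟨k, e⟩
    cases e
    · rw [hw, hb]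
      change mkCos g J x ⋆ wordG (run l k) ⋆ wordG (winv (suc^[k.1] l :: a k)) = _
      rw [wordG_winv, rt_eq_iff, inv_inv]; exact (ha2 k).symm
    · rw [hw, hb]; exact ha2 k
  have hflip : ∀ i, ∃ j, w j = winv (w i) ∧ b j = b i := by
    rintro ⟨k, e⟩
    refine ⟨(k, !e), ?_, by rw [hb]⟩
    cases e
    · rw [hw]; simp [winv, Function.comp_def]
    · rw [hw]; simp
  obtain ⟨S, hS⟩ : ∃ S : Set (Cos g J × Letter g), S = {p | ∃ i, On (b i) (w i) p.1 p.2} := ⟨_, rfl⟩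
  have hmem : ∀ y m, (y, m) ∈ S ↔ ∃ i, On (b i) (w i) y m := by
    intro y m; rw [hS]; rfl
  have hfin : S.Finite := by
    have : S = ⋃ i, {p | On (b i) (w i) p.1 p.2} := by rw [hS]; ext p; simp
    rw [this]
    exact Set.finite_iUnion fun i => On_finite _ _
  have hrev : ∀ y m, (y, m) ∈ S → (y ⋆ letterG m, inv m) ∈ S := by
    intro y m h
    rw [hmem] at h ⊢
    obtain ⟨i, hi⟩ := h
    obtain ⟨j, h1, h2⟩ := hflip i
    refine ⟨j, ?_⟩
    rw [h1, h2]
    exact On_rev (hcl i) hi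
  have hrot : ∀ y m, (y, m) ∈ S → ∃ a, Sh (m :: a) ∧ y ⋆ wordG (m :: a) = y ∧
      ∀ b1 l b2, m :: a = b1 ++ l :: b2 → (y ⋆ wordG b1, l) ∈ S := by
    intro y m h
    rw [hmem] at h
    obtain ⟨i, hi⟩ := h
    obtain ⟨a, h1, h2, h3⟩ := On_rot (hSh i) (hcl i) hi
    exact ⟨a, h1, h2, fun b1 l b2 h => (hmem _ _).2 ⟨i, h3 b1 l b2 h⟩⟩
  have hin : ∀ k < 2 * g, (mkCos g J x ⋆ wordG (run l k), suc^[k] l) ∈ S := by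
    intro k hk
    rw [hmem]
    refine ⟨(⟨k, hk⟩, true), [], a ⟨k, hk⟩, ?_, ?_⟩
    · rw [hw]; rfl
    · rw [hb]; simp
  have h0 : (mkCos g J x, l) ∈ S := by
    have := hin 0 (by omega)
    simpa [run_zero] using this
  obtain ⟨p, m, N, hN, hp0, hm0, hpS, hps, hmin, hper⟩ := exists_orbit hg hfin hrev _ _ h0
  have hper' : ∀ c k, p (k + c * N) = p k ∧ m (k + c * N) = m k := by
    intro c
    induction c with
    | zero => simp
    | succ c ih =>
      intro k
      have h1 := hper (k + c * N)
      have e : k + (c + 1) * N = k + c * N + N := by ring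
      rw [e, h1.1, h1.2]; exact ih k
  have hm : ∀ k < 2 * g, m k = suc^[k] l ∧ p k = mkCos g J x ⋆ wordG (run l k) := by
    intro k
    induction k with
    | zero => intro _; rw [hm0, hp0]; simp [run_zero]
    | succ k ih =>
      intro hk
      obtain ⟨h1, h2⟩ := ih (by omega)
      have h3 : p (k + 1) = mkCos g J x ⋆ wordG (run l (k + 1)) := by
        rw [hps, h1, h2, run_succ, wordG_append, rt_mul]; simp
      refine ⟨?_, h3⟩
      have h4 := hmin k (suc^[k + 1] l) (by rw [← hps, h3]; exact hin (k + 1) hk)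
      rw [h1, Function.iterate_succ_apply', gap_suc] at h4
      rw [Function.iterate_succ_apply']
      exact eq_suc_of_gap (by omega)
  obtain ⟨M, hM⟩ : ∃ M, M = 2 * g * N := ⟨_, rfl⟩
  have hM1 : 2 * g ≤ M := by rw [hM]; exact Nat.le_mul_of_pos_right _ hN
  obtain ⟨W, hW⟩ : ∃ W : List (Letter g), W = (List.range M).map m := ⟨_, rfl⟩
  have hlen : W.length = M := by rw [hW]; simp
  have hget : ∀ k (hk : k < W.length), W[k] = m k := by intro k hk; simp [hW]
  have hpos : ∀ k, k ≤ W.length → mkCos g J x ⋆ wordG (W.take k) = p k := by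
    intro k
    induction k with
    | zero => intro _; simp [hp0]
    | succ k ih =>
      intro hk
      rw [take_succ_wordG _ _ hk, ← rt_mul, ih (by omega), hget, hps]
  have hclW : mkCos g J x ⋆ wordG W = mkCos g J x := by
    have h1 := hpos W.length le_rfl
    rw [List.take_length] at h1
    have h2 := (hper' (2 * g) 0).1
    rw [h1, hlen, hM, ← hp0, ← h2, Nat.zero_add]
  have hmodget : ∀ k (hk : k < W.length), W[(k + 1) % W.length]'(Nat.mod_lt _ (by omega)) = m (k + 1) := by
    intro k hk
    rw [hget]
    rcases Nat.lt_or_ge (k + 1) W.length with h | h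
    · rw [Nat.mod_eq_of_lt h]
    · have e : k + 1 = W.length := by omega
      rw [e, Nat.mod_self]
      have h2 := (hper' (2 * g) 0).2
      rw [← h2, hlen, hM, Nat.zero_add]
  obtain ⟨h, hh⟩ : ∃ h, h = x * wordG W * x⁻¹ := ⟨_, rfl⟩
  have hhJ : h ∈ J := by
    have := hclW
    rw [mk_rt, eq_comm, mk_eq] at this; rw [hh]; exact this
  obtain ⟨hn1, n, hn2, hn3, hn4⟩ := geoList (W := W) (x := x) (J := J)
    (by rw [← List.length_pos_iff]; omega) hclW (K := fun v l => (v, l) ∈ S)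
    (fun v l hK => by have := hrev _ _ hK; rwa [rt_letter_inv, inv_inv'] at this)
    (by
      intro k hk t ht hc
      rw [hmodget k hk, hget] at ht
      rw [hpos k hk.le, hget] at hc
      have := hmin k t hc
      omega)
    (by
      intro k hk
      rw [hpos k hk.le, hget]
      exact hrot _ _ (hpS k)) hh
  have hC : Subgroup.zpowers h ≤ J := by rwa [Subgroup.zpowers_le]
  have hφ := Eqv_cover hC
  have hx : coverMapV hC (mkCos g _ x) = mkCos g J x := cover_mk hC x
  have hclC : mkCos g (Subgroup.zpowers h) x ⋆ wordG W = mkCos g (Subgroup.zpowers h) x := by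
    rw [mk_rt, eq_comm, mk_eq, ← hh]; exact Subgroup.mem_zpowers h
  generalize mkCos g (Subgroup.zpowers h) x = xh at *
  have hEW : ∀ k (hk : k < W.length), E1 (mkCos g J x ⋆ wordG (W.take k)) W[k] := by
    intro k hk
    rw [hpos k hk.le, hget]
    obtain ⟨a, h1, h2, _⟩ := hrot _ _ (hpS k)
    exact ⟨a, h1, h2⟩
  have hIh : InfF (coverMapV hC (L xh l)) := by rw [L_comp hφ, hx]; exact hI
  have hz0 : ∀ n' : Cos g (Subgroup.zpowers h) →₀ ℤ, Mini (ch xh W - bd g n') → n' (L xh l) = 0 :=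
    fun n' hn' => geo_zero hg hφ hclC (by rw [hx]; exact hEW) hn' hIh
  have hn0 := hz0 n hn3
  have hWrun : ∀ k, k ≤ 2 * g → W.take k = run l k := by
    intro k hk
    apply List.ext_getElem
    · rw [run_length, List.length_take]; omega
    · intro i h1 h2
      rw [run_length] at h2
      rw [run_get, List.getElem_take, hget]
      exact (hm i (by omega)).1
  have hLk : ∀ k, L (xh ⋆ wordG (run l k)) (suc^[k] l) = L xh l := by
    intro k
    induction k with
    | zero => simp [run_zero]
    | succ k ih =>
      rw [run_succ, wordG_append, ← rt_mul, Function.iterate_succ_apply']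
      simp only [wordG_cons, wordG_nil, mul_one]
      rw [L_suc, ih]
  have hval : ∀ k < 2 * g, 1 ≤ val (ch xh W - bd g n : Ch1 g (Cos g (Subgroup.zpowers h)))
      (xh ⋆ wordG (run l k)) (suc^[k] l) := by
    intro k hk
    have hk' : k < W.length := by omega
    have e := take_split W k hk'
    have h1 := nocancel (x := xh) (a := W.take k) (ℓ := W[k]) (b := W.drop (k + 1)) (by rw [← e]; exact hn1)
    rw [← e] at h1
    have h2 := hn4 k hk'
    rw [hget, hWrun k hk.le, (hm k hk).1] at h1 h2
    rw [Finsupp.coe_sub, val_sub, val_bd, hLk, hn0]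
    omega
  have hnm := nm_run (2 * g) (by omega) hval
  obtain ⟨z, hz⟩ : ∃ z : Ch1 g (Cos g (Subgroup.zpowers h)), z = ch xh W - bd g n := ⟨_, rfl⟩
  have hle : nm (z - bd g (Finsupp.single (L xh l) 1)) ≤ nm z := by
    have e4 : 4 * g = 2 * g + 2 * g := by omega
    rw [← ch_full, e4, run_add, ch_append, ← sub_sub]
    have h1 := nm_add (z - ch xh (run l (2 * g)))
      (- ch (xh ⋆ wordG (run l (2 * g))) (run (suc^[2 * g] l) (2 * g)))
    have h2 := nm_ch (xh ⋆ wordG (run l (2 * g))) (run (suc^[2 * g] l) (2 * g))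
    rw [nm_neg, ← sub_eq_add_neg] at h1
    rw [← hz] at hnm
    rw [run_length] at h2
    omega
  have e5 : ch xh W - bd g (n + Finsupp.single (L xh l) 1) = z - bd g (Finsupp.single (L xh l) 1) := by
    rw [map_add, hz]; abel
  have hmini : Mini (ch xh W - bd g (n + Finsupp.single (L xh l) 1)) := by
    intro n'
    rw [e5]
    refine hle.trans ?_
    rw [sub_sub, ← map_add, hz]
    exact hn3 _
  have := hz0 _ hmini
  rw [Finsupp.add_apply, hn0, Finsupp.single_eq_same] at this
  omega

theorem no_halfblock (hg : 0 < g) (hJ : J ≠ ⊥) (b : List (DD g J))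
    (h : (cover g J).BPath (coreSub g J).sE (coreSub g J).sF b)
    (hb : (cover g J).IsBlock b) (hlen : b.length = 2 * g) : False := by
  obtain ⟨hne, hin, hc⟩ := h
  obtain ⟨l, hl, hrun⟩ := block_run hb
  have hc' : ∀ (i : ℕ) (_hi : i + 1 < b.length), bSt b[i] b[i + 1] :=
    List.isChain_iff_getElem.1 hc
  have h0 : 0 < b.length := by omega
  have hp := path_data b (fun k hk => bSt_tail (hc' k hk)) h0
  rw [hlen] at hrun
  have hdt : ∀ (k : ℕ) (hk : k < b.length), dt (cTail b[0] ⋆ wordG (run l k)) (suc^[k] l) = b[k] := by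
    intro k hk
    have e1 : cLet b[k] = suc^[k] l := by
      have e2 : cLet b[k] = (cWord b)[k]'(by simp [cWord]; omega) := by simp [cWord]
      rw [e2]
      simp only [hrun]
      rw [run_get]
    have e3 := hp k hk
    rw [hrun, run_take _ (by omega)] at e3
    rw [← e1, ← e3, dt_eta]
  have hbs := hc' 0 (by omega)
  rw [← hdt 0 h0, ← hdt 1 (by omega)] at hbs
  have hI := (bSt_out hJ hbs).2.1
  generalize cTail b[0] = v at *
  obtain ⟨x, rfl⟩ : ∃ x, v = mkCos g J x := by
    induction v using Quotient.inductionOn with | _ x => exact ⟨x, rfl⟩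
  have hLk : ∀ k, L (mkCos g J x ⋆ wordG (run l k)) (suc^[k] l) = L (mkCos g J x) l := by
    intro k
    induction k with
    | zero => simp [run_zero]
    | succ k ih =>
      rw [run_succ, wordG_append, ← rt_mul, Function.iterate_succ_apply']
      simp only [wordG_cons, wordG_nil, mul_one]
      rw [L_suc, ih]
  rw [hLk] at hI
  refine halfblock_core hg hI fun k hk => ?_
  have h1 : b[k].1 ∈ cE g J := hin _ (List.getElem_mem _)
  rw [← hdt k (by omega), cE_iff hJ, hLk] at h1
  exact h1.resolve_right (not_not.2 hI)

theorem main_all (g : ℕ) (hg : 2 ≤ g) (J : Subgroup (Gamma g)) (hJ : J ≠ ⊥) :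
    (∀ δ : List ((cover g J).D),
      (cover g J).BCycle (coreSub g J).sE (coreSub g J).sF δ →
        (cover g J).Essential Set.univ Set.univ δ ∧
        conjLen (wordG ((cover g J).wordOf δ)) = δ.length) ∧
    (cover g J).StronglyBoundaryReduced (coreSub g J).sE (coreSub g J).sF :=
  ⟨fun δ h => main12 (by omega) hJ δ h,
    fun l h hb => no_halfblock (by omega) hJ l h hb.1 hb.2,
    fun bs h hb => no_halfchain (by omega) hJ bs h hb⟩

end

/-- For a nontrivial subgroup `J ≤ Γ_g` and `Υ = J\~Σ_g`:
(1) every boundary cycle `δ` of `Core(J)` is an essential closed curve of `Υ`;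
(2) the word read by every boundary cycle of `Core(J)` is cyclically shortest
(its length equals the minimal word-length in its `Γ_g`-conjugacy class); and
(3) `Core(J)` is strongly boundary reduced. -/
theorem statement_11 (g : ℕ) (hg : 2 ≤ g) (J : Subgroup (Gamma g)) (hJ : J ≠ ⊥) :
    (∀ δ : List ((cover g J).D),
      (cover g J).BCycle (coreSub g J).sE (coreSub g J).sF δ →
        (cover g J).Essential Set.univ Set.univ δ ∧
        conjLen (wordG ((cover g J).wordOf δ)) = δ.length) ∧
    (cover g J).StronglyBoundaryReduced (coreSub g J).sE (coreSub g J).sF := by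
  exact main_all g hg J hJ

end CS

end
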